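/- arXiv:2205.02145 — 3 statements merged into one kernel-verified Lean document; each statement's English description precedes it below -/
import Mathlib

section
/- Let K be a number field and let f(z) = ∑_{n≥0} a_n z^n ∈ K[[z]] be a D-finite power series that is not a rational function (i.e. there do not exist polynomials P, Q ∈ K[z] with Q ≠ 0 and Q·f = P). Then there is a constant C such that the set {n ∈ ℕ : h(a_n) > (1/[K:ℚ])·log n − C} has positive upper density. -/
/-!
Suppose that the conclusion fails. Then for every `c > 0` the set of `n` for which `a n` has a
denominator or a conjugate larger than `c n` has density zero (`eventually_ncard_not_smallAt`). It
follows that `f` is rational, as explained below.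

*Constant coefficients.* D-finiteness gives a recurrence `P(n) a(n+r) = ∑ Q_j(n) a(n+j)`
(`IsDFinite.exists_recRel`). Put `b(n) = F(n) a(n)`, where `F` is a fixed product of shifts of `P`
(`winPoly`), so that few denominators serve for a long window of terms of `b`. For a prime `h` of
size about `Z` and a point `n₀` of size about `Z ^ 4`, consider the matrix with rows
`s = 0, …, R - 1` and entries `b(n₀ + h s + i)`. The recurrence expresses its rows through
polynomials evaluated at `n₀ + h s`, and Taylor expansion at `n₀` shows that the maximal minors
are divisible by a power of `h` quadratic in `R` (`pow_dvd_det`). After clearing denominators they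
are algebraic integers whose conjugates are smaller than this power, hence they vanish
(`RecRel.minor_eq_zero`). So `b` satisfies near `n₀` a linear relation with constant coefficients
and step `h`. The relation is valid on a long interval, because all possible relations are
preserved by one recurrence of bounded degree whose leading coefficient has few zeros
(`propagate`). Relations with two coprime steps force the windows of `b` to span a space of
bounded dimension (`relation_of_two`), which gives a relation between `R ^ 2 + 1` consecutive
terms, and a second propagation carries it to infinity (`RecRel.exists_cfinite`).

*Roots of unity.* A sequence with constant coefficient recurrence whose terms have height
`O(log n)` on arbitrarily late windows has only characteristic roots of height zero, because a
combination of its shifts is a geometric progression with the given root as ratio. By Northcott's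
theorem these roots are `0` or roots of unity, and the root `0` does not affect the tail
(`TailKilled.of_height`). So `F(n) a(n)` is eventually polynomial along each residue class of some
modulus (`exists_poly_on_classes`).

*Conclusion.* On each class `a` is a quotient of two polynomials, and infinitely often its
denominator and its conjugates are `o(n)`. It cannot grow, so it tends to some `l ∈ K` in every
embedding, with difference `O(1 / n)`; if the difference were not zero, multiplying it by a
denominator of size `o(n)` would give a nonzero algebraic integer with all conjugates less than
`1`. Hence `a` is eventually periodic (`eventually_const`) and `f` is rational
(`rational_of_eventually_const`).
-/

open Filter Polynomial PowerSeries

/-- The upper density of a set of natural numbers. -/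
noncomputable def upperDensity (S : Set ℕ) : ℝ :=
  Filter.limsup (fun n => ((S ∩ Set.Icc 1 n).ncard : ℝ) / n) Filter.atTop

/-- `S ⊆ ℕ` has positive upper density. -/
def HasPosUpperDensity (S : Set ℕ) : Prop := 0 < upperDensity S

/-- `S ⊆ ℕ` has zero density. -/
def HasZeroDensity (S : Set ℕ) : Prop := upperDensity S = 0
open NumberField in
/-- The denominator ideal of `α ∈ K`: the ideal of `x ∈ 𝓞 K` with `x • α` integral. -/
noncomputable def denIdeal (K : Type*) [Field K] [NumberField K] (α : K) : Ideal (𝓞 K) :=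
  (1 : Submodule (𝓞 K) K).colon (Submodule.span (𝓞 K) {α})

open NumberField in
/-- The absolute logarithmic Weil height of `α ∈ K`:
`h(α) = (log N(𝔡_α) + ∑_{σ : K →+* ℂ} log⁺ |σ α|) / [K:ℚ]`, which agrees with
`∑_{w ∈ M_K} log max(|α|_w, 1)` for the standard normalized absolute values. -/
noncomputable def weilHeight (K : Type*) [Field K] [NumberField K] (α : K) : ℝ :=
  (Real.log (Ideal.absNorm (denIdeal K α)) +
    ∑ σ : K →+* ℂ, Real.log (max 1 ‖σ α‖)) / (Module.finrank ℚ K)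
/-- The formal derivative of a power series. -/
noncomputable def psDeriv {k : Type*} [Field k] : PowerSeries k → PowerSeries k :=
  PowerSeries.derivativeFun

/-- A power series is D-finite if it satisfies a nontrivial linear homogeneous
differential equation `A₀ f⁽ᵖ⁾ + A₁ f⁽ᵖ⁻¹⁾ + ⋯ + A_p f = 0` with polynomial
coefficients and `A₀ ≠ 0`. -/
def IsDFinite {k : Type*} [Field k] (f : PowerSeries k) : Prop :=
  ∃ (p : ℕ) (A : Fin (p + 1) → Polynomial k), A 0 ≠ 0 ∧
    ∑ i : Fin (p + 1), (A i : PowerSeries k) * (psDeriv^[p - i.val] f) = 0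

/-! ### Expanding a polynomial recurrence -/

section Recurrence

variable {R K : Type*} [CommRing R] [Field K] [Algebra R K]

/-- Repeated use of a recurrence with leading coefficient `P` expresses every later term through
the `r` initial ones, at the price of a product of consecutive values of `P`. -/
lemma rec_expand {a : ℕ → K} {r : ℕ} {P : R[X]} {Q : Fin r → R[X]}
    (hrec : ∀ n : ℕ, algebraMap R K (P.eval (n : R)) * a (n + r) =
      ∑ j, algebraMap R K ((Q j).eval (n : R)) * a (n + j)) (u : ℕ) :
    ∀ i < r + u, ∃ φ : Fin r → R[X], ∀ n : ℕ,
      algebraMap R K (∏ k ∈ Finset.range u, P.eval ((n + k : ℕ) : R)) * a (n + i) =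
        ∑ j, algebraMap R K ((φ j).eval (n : R)) * a (n + j) := by
  induction u with
  | zero =>
    intro i hi
    refine ⟨fun j => if (j : ℕ) = i then 1 else 0, fun n => ?_⟩
    rw [Finset.sum_eq_single ⟨i, by simpa using hi⟩]
    · simp
    · intro j _ hj
      have : (j : ℕ) ≠ i := fun h => hj (Fin.ext h)
      simp [this]
    · simp
  | succ u ih =>
    intro i hi
    by_cases hiu : i < r + u
    · obtain ⟨φ, hφ⟩ := ih i hiu
      refine ⟨fun j => P.comp (Polynomial.X + Polynomial.C (u : R)) * φ j, fun n => ?_⟩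
      rw [Finset.prod_range_succ, map_mul, mul_right_comm, hφ n, Finset.sum_mul]
      refine Finset.sum_congr rfl fun j _ => ?_
      simp only [Polynomial.eval_mul, Polynomial.eval_comp, Polynomial.eval_add,
        Polynomial.eval_X, Polynomial.eval_C, map_mul]
      push_cast
      ring
    · obtain rfl : i = r + u := by omega
      have h1 : ∀ j : Fin r, ∃ φ : Fin r → R[X], ∀ n : ℕ,
          algebraMap R K (∏ k ∈ Finset.range u, P.eval ((n + k : ℕ) : R)) * a (n + (u + j)) =
            ∑ j, algebraMap R K ((φ j).eval (n : R)) * a (n + j) :=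
        fun j => ih (u + j) (by omega)
      choose φ hφ using h1
      refine ⟨fun j => ∑ l, (Q l).comp (Polynomial.X + Polynomial.C (u : R)) * φ l j,
        fun n => ?_⟩
      have h2 := hrec (n + u)
      rw [Finset.prod_range_succ, map_mul, mul_assoc,
        show n + (r + u) = n + u + r by ring, h2, Finset.mul_sum]
      simp only [Polynomial.eval_finsetSum, map_sum, Finset.sum_mul]
      rw [Finset.sum_comm]
      refine Finset.sum_congr rfl fun l _ => ?_
      have h3 := hφ l n
      rw [mul_left_comm, show n + u + (l : ℕ) = n + (u + l) by ring, h3, Finset.mul_sum]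
      refine Finset.sum_congr rfl fun j _ => ?_
      simp only [Polynomial.eval_mul, Polynomial.eval_comp, Polynomial.eval_add,
        Polynomial.eval_X, Polynomial.eval_C, map_mul]
      push_cast
      ring

end Recurrence

/-! ### Common recurrences and propagation of relations -/

section CommonRecurrence

variable {K : Type*} [Field K]

/-- A single recurrence, with coefficients of degree at most `E`, that kills `R` given shifts
of a sequence whose terms are combinations (with coefficients `ψ k j`) of `r` basic sequences.
It exists because there are more unknown coefficients than linear conditions. -/
lemma exists_common_rec {r R E : ℕ} (ψ : ℕ → Fin r → K[X])
    (hE : ∀ k < 2 * r * R + 1, ∀ j, (ψ k j).natDegree ≤ E) (t : Fin R → ℕ) :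
    ∃ G : ℕ → K[X], (∃ k < 2 * r * R + 1, G k ≠ 0) ∧ (∀ k, (G k).natDegree ≤ E) ∧
      ∀ m j, ∑ k ∈ Finset.range (2 * r * R + 1),
        G k * (ψ k j).comp (Polynomial.X + Polynomial.C (t m : K)) = 0 := by
  classical
  set O := 2 * r * R + 1 with hO
  let f : (Fin O → Polynomial.degreeLT K (E + 1)) →ₗ[K] (Fin R × Fin r × Fin (2 * E + 1) → K) :=
    { toFun := fun g x => (∑ k : Fin O, (g k : K[X]) *
        (ψ k x.2.1).comp (Polynomial.X + Polynomial.C (t x.1 : K))).coeff x.2.2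
      map_add' := by
        intro g h
        funext x
        simp [add_mul, Finset.sum_add_distrib]
      map_smul' := by
        intro c g
        funext x
        simp [Finset.mul_sum] }
  have hdim : Module.finrank K (Fin R × Fin r × Fin (2 * E + 1) → K) < Module.finrank K (Fin O → Polynomial.degreeLT K (E + 1)) := by
    have h1 : Module.finrank K (Fin O → Polynomial.degreeLT K (E + 1)) = O * (E + 1) := by
      rw [Module.finrank_pi_fintype]
      simp [(Polynomial.degreeLTEquiv K (E + 1)).finrank_eq]
    rw [h1, Module.finrank_fintype_fun_eq_card]
    simp only [Fintype.card_prod, Fintype.card_fin, hO]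
    nlinarith [Nat.zero_le (r * R)]
  have hker := LinearMap.ker_ne_bot_of_finrank_lt (f := f) hdim
  obtain ⟨g, hg, hg0⟩ := Submodule.exists_mem_ne_zero_of_ne_bot hker
  have hdeg : ∀ k : Fin O, ((g k : K[X])).natDegree ≤ E := by
    intro k
    have := Polynomial.mem_degreeLT.1 (g k).2
    by_cases h0 : (g k : K[X]) = 0
    · simp [h0]
    · have := (Polynomial.natDegree_lt_iff_degree_lt h0).2 this
      omega
  refine ⟨fun k => if h : k < O then (g ⟨k, h⟩ : K[X]) else 0, ?_, ?_, ?_⟩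
  · by_contra hcon
    push Not at hcon
    apply hg0
    funext k
    have := hcon k k.2
    simp only [k.2, dite_true, Fin.eta] at this
    exact Subtype.ext this
  · intro k
    by_cases h : k < O
    · simpa [h] using hdeg ⟨k, h⟩
    · simp [h]
  · intro m j
    rw [Finset.sum_range]
    simp only [Fin.is_lt, dite_true, Fin.eta]
    ext l
    by_cases hl : l < 2 * E + 1
    · have := congrFun (LinearMap.mem_ker.1 hg) (m, j, ⟨l, hl⟩)
      simpa [f] using this
    · rw [Polynomial.coeff_zero]
      apply Polynomial.coeff_eq_zero_of_natDegree_lt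
      refine lt_of_le_of_lt (Polynomial.natDegree_sum_le_of_forall_le _ _ (n := 2 * E) ?_) (by omega)
      intro k _
      refine Polynomial.natDegree_mul_le.trans ?_
      have h1 := hdeg k
      have h2 : ((ψ k j).comp (Polynomial.X + Polynomial.C (t m : K))).natDegree ≤ E := by
        rw [Polynomial.natDegree_comp, Polynomial.natDegree_X_add_C, mul_one]
        exact hE k k.2 j
      omega

/-- If a combination of `R` shifts of `b` vanishes at sufficiently many consecutive places, it
keeps vanishing as long as a certain nonzero polynomial `g` (of degree bounded independently of
the shifts, and itself independent of the combination) has no zero. -/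
lemma propagate {r R E N₀ : ℕ} {b D : ℕ → K} {w : ℕ → Fin r → K} (ψ : ℕ → Fin r → K[X])
    (hE : ∀ k < 2 * r * R + 1, ∀ j, (ψ k j).natDegree ≤ E)
    (hψ : ∀ k < 2 * r * R + 1, ∀ n, D n * b (n + k) = ∑ j, (ψ k j).eval (n : K) * w n j)
    (hD : ∀ n, N₀ ≤ n → D n ≠ 0) (t : Fin R → ℕ) :
    ∃ g : K[X], g ≠ 0 ∧ g.natDegree ≤ E ∧ ∀ (d : Fin R → K) (lo hi : ℕ), N₀ ≤ lo →
      (∀ n : ℕ, lo ≤ n → n ≤ hi → g.eval (n : K) ≠ 0) →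
      (∀ i < 2 * r * R, ∑ m, d m * b (lo + i + t m) = 0) →
      ∀ n, lo ≤ n → n ≤ hi → ∑ m, d m * b (n + t m) = 0 := by
  classical
  obtain ⟨G, hG0, hGE, hG⟩ := exists_common_rec ψ hE t
  set O := 2 * r * R with hO
  -- the top nonvanishing coefficient of the common recurrence
  let T := (Finset.range (O + 1)).filter (fun k => G k ≠ 0)
  have hT : T.Nonempty := by
    obtain ⟨k, hk, hk0⟩ := hG0
    exact ⟨k, by simp [T, hk0]; omega⟩
  set q := T.max' hT with hq
  have hqT : q ∈ T := Finset.max'_mem _ _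
  have hqO : q ≤ O := by
    have := (Finset.mem_filter.1 hqT).1
    simpa [Nat.lt_succ_iff] using this
  have hq0 : G q ≠ 0 := (Finset.mem_filter.1 hqT).2
  have hbig : ∀ k < O + 1, q < k → G k = 0 := by
    intro k hk hqk
    by_contra h
    have : k ∈ T := by simp [T, h]; omega
    exact absurd (Finset.le_max' T k this) (by omega)
  have hrec : ∀ n, N₀ ≤ n → ∀ m, ∑ k ∈ Finset.range (q + 1), (G k).eval (n : K) * b (n + t m + k) = 0 := by
    intro n hn m
    have h1 : D (n + t m) * ∑ k ∈ Finset.range (O + 1), (G k).eval (n : K) * b (n + t m + k) = 0 := by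
      rw [Finset.mul_sum]
      have : ∀ k ∈ Finset.range (O + 1), D (n + t m) * ((G k).eval (n : K) * b (n + t m + k)) =
          ∑ j, ((G k * (ψ k j).comp (Polynomial.X + Polynomial.C (t m : K))).eval (n : K)) *
            w (n + t m) j := by
        intro k hk
        rw [mul_left_comm, hψ k (by simpa using hk), Finset.mul_sum]
        refine Finset.sum_congr rfl fun j _ => ?_
        simp only [Polynomial.eval_mul, Polynomial.eval_comp, Polynomial.eval_add,
          Polynomial.eval_X, Polynomial.eval_C]
        push_cast
        ring
      rw [Finset.sum_congr rfl this, Finset.sum_comm]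
      refine Finset.sum_eq_zero fun j _ => ?_
      rw [← Finset.sum_mul, ← Polynomial.eval_finsetSum, hG m j]
      simp
    have h2 := (mul_eq_zero.1 h1).resolve_left (hD _ (by omega))
    rw [← h2]
    apply Finset.sum_subset
    · intro k; simp; omega
    · intro k hk hk'
      rw [hbig k (by simpa using hk) (by simp at hk'; omega)]
      simp
  refine ⟨G q, hq0, hGE q, ?_⟩
  intro d lo hi hlo hz hinit
  have hsum : ∀ n, N₀ ≤ n →
      ∑ k ∈ Finset.range (q + 1), (G k).eval (n : K) * ∑ m, d m * b (n + k + t m) = 0 := by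
    intro n hn
    simp_rw [Finset.mul_sum]
    rw [Finset.sum_comm]
    refine Finset.sum_eq_zero fun m _ => ?_
    have := hrec n hn m
    rw [← mul_zero (d m), ← this, Finset.mul_sum]
    refine Finset.sum_congr rfl fun k _ => ?_
    rw [show n + k + t m = n + t m + k by ring]
    ring
  intro n
  induction n using Nat.strong_induction_on with
  | _ n ih =>
    intro hn hn'
    by_cases hsmall : n < lo + q
    · have := hinit (n - lo) (by omega)
      rwa [show lo + (n - lo) = n by omega] at this
    · have h1 := hsum (n - q) (by omega)
      rw [Finset.sum_range_succ, Finset.sum_eq_zero, zero_add,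
        show n - q + q = n by omega] at h1
      · exact (mul_eq_zero.1 h1).resolve_left (hz _ (by omega) (by omega))
      · intro k hk
        have hk := Finset.mem_range.1 hk
        rw [ih (n - q + k) (by omega) (by omega) (by omega), mul_zero]

end CommonRecurrence

/-! ### Determinants divisible by a high power -/

section Determinants

open Matrix

/-- If all maximal minors of a matrix vanish, its rows are linearly dependent. -/
lemma exists_row_relation {K : Type*} [Field K] {R O : ℕ} (M : Fin R → Fin O → K)
    (hM : ∀ i : Fin R → Fin O, Matrix.det (Matrix.of fun s t => M s (i t)) = 0) :
    ∃ d : Fin R → K, d ≠ 0 ∧ ∀ i, ∑ s, d s * M s i = 0 := by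
  classical
  by_cases hW : Submodule.span K (Set.range fun i s => M s i) = ⊤
  · exfalso
    obtain ⟨κ, c, -, hspan, hli⟩ := exists_linearIndependent' K (fun i s => M s i)
    have B : Module.Basis κ K (Fin R → K) := Module.Basis.mk hli (by rw [hspan, hW])
    have : Fintype κ := FiniteDimensional.fintypeBasisIndex B
    have hcard : Fintype.card κ = Fintype.card (Fin R) := by
      rw [← Module.finrank_eq_card_basis B]; simp
    obtain ⟨e⟩ := Fintype.card_eq.1 hcard
    have h1 := hM (c ∘ e.symm)
    have hli2 : LinearIndependent K (fun t s => M s ((c ∘ e.symm) t)) :=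
      hli.comp e.symm e.symm.injective
    have h2 : IsUnit (Matrix.of fun t s => M s ((c ∘ e.symm) t)) :=
      Matrix.linearIndependent_rows_iff_isUnit.1 hli2
    have h3 := (Matrix.isUnit_iff_isUnit_det _).1 h2
    rw [← Matrix.det_transpose] at h3
    apply h3.ne_zero
    rw [← h1]
    rfl
  · obtain ⟨f, hf, hfW⟩ := Submodule.exists_le_ker_of_lt_top _ (lt_top_iff_ne_top.2 hW)
    have hf' : ∀ v : Fin R → K, f v = ∑ s, f (Pi.single s 1) * v s := by
      intro v
      conv_lhs => rw [← Finset.univ_sum_single v]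
      rw [map_sum]
      refine Finset.sum_congr rfl fun s _ => ?_
      rw [show Pi.single s (v s) = v s • (Pi.single s 1 : Fin R → K) by
        ext x; simp [Pi.single_apply], map_smul, smul_eq_mul, mul_comm]
    refine ⟨fun s => f (Pi.single s 1), ?_, ?_⟩
    · intro h
      apply hf
      ext v
      have := congrFun h v
      simpa using this
    · intro i
      rw [← hf']
      exact hfW (Submodule.subset_span ⟨i, rfl⟩)

/-- Rows at the points `n₀ + h s`, each a combination of `r` polynomial rows: by Taylor expansion
at `n₀` and multilinearity, the determinant is divisible by a power of `h` that is quadratic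
in `K₀`, because each polynomial order contributes only `r` different rows. -/
lemma pow_dvd_det {A : Type*} [CommRing A] {r K₀ R : ℕ} (hR : R = 2 * (r * K₀)) (n₀ h : A)
    (φ : Fin R → Fin r → A[X]) (c : Fin R → Fin r → A) (σ : Fin R → A) :
    h ^ (r * K₀ * K₀) ∣ Matrix.det (Matrix.of fun s t =>
      ∑ j, (φ t j).eval (n₀ + h * σ s) * c s j) := by
  classical
  obtain ⟨L, hL⟩ : ∃ L, ∀ t j, (φ t j).natDegree < L := by
    refine ⟨(Finset.univ.sup fun t => Finset.univ.sup fun j => (φ t j).natDegree) + 1,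
      fun t j => Nat.lt_succ_of_le ?_⟩
    refine le_trans ?_ (Finset.le_sup (f := fun t => Finset.univ.sup fun j => (φ t j).natDegree)
      (Finset.mem_univ t))
    exact Finset.le_sup (f := fun j => (φ t j).natDegree) (Finset.mem_univ j)
  let g : Fin R → Fin r × Fin L → A := fun s x => h ^ (x.2 : ℕ) * (σ s ^ (x.2 : ℕ) * c s x.1)
  let v : Fin r × Fin L → Fin R → A := fun x t => (taylor n₀ (φ t x.1)).coeff x.2
  have hrow : (fun s t => ∑ j, (φ t j).eval (n₀ + h * σ s) * c s j) =
      fun s => ∑ x, g s x • v x := by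
    funext s t
    rw [Finset.sum_apply, Fintype.sum_prod_type]
    refine Finset.sum_congr rfl fun j _ => ?_
    have : (φ t j).eval (n₀ + h * σ s) = (taylor n₀ (φ t j)).eval (h * σ s) := by
      rw [taylor_eval, add_comm]
    rw [this, Polynomial.eval_eq_sum_range' (n := L) (by rw [natDegree_taylor]; exact hL t j),
      Finset.sum_range, Finset.sum_mul]
    refine Finset.sum_congr rfl fun k _ => ?_
    simp only [g, v, Pi.smul_apply, smul_eq_mul]
    ring
  have hdet : Matrix.det (Matrix.of fun s t =>
      ∑ j, (φ t j).eval (n₀ + h * σ s) * c s j) =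
      (Matrix.detRowAlternating (R := A) (n := Fin R)).toMultilinearMap
        (fun s => ∑ x, g s x • v x) := by
    rw [← hrow]; rfl
  rw [hdet, MultilinearMap.map_sum]
  refine Finset.dvd_sum fun κ _ => ?_
  rw [MultilinearMap.map_smul_univ]
  by_cases hκ : Function.Injective κ
  · rw [smul_eq_mul]
    refine Dvd.dvd.mul_right ?_ _
    simp only [g]
    rw [Finset.prod_mul_distrib, Finset.prod_pow_eq_pow_sum]
    refine Dvd.dvd.mul_right (pow_dvd_pow _ ?_) _
    -- at most `r K₀` of the distinct pairs have order less than `K₀`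
    have h1 : (Finset.univ.filter fun s => ((κ s).2 : ℕ) < K₀).card ≤ r * K₀ := by
      have := Finset.card_le_card_of_injOn (s := Finset.univ.filter fun s => ((κ s).2 : ℕ) < K₀)
        (t := (Finset.univ : Finset (Fin r)) ×ˢ Finset.range K₀)
        (fun s => ((κ s).1, ((κ s).2 : ℕ))) (by intro s hs; simpa using hs) (by
          intro s _ s' _ hss
          apply hκ
          simp only [Prod.mk.injEq] at hss
          exact Prod.ext hss.1 (Fin.ext hss.2))
      simpa using this
    have h2 := Finset.card_filter_add_card_filter_not (s := (Finset.univ : Finset (Fin R)))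
      (fun s => ((κ s).2 : ℕ) < K₀)
    have h3 : r * K₀ ≤ (Finset.univ.filter fun s => ¬ ((κ s).2 : ℕ) < K₀).card := by
      simp only [Finset.card_univ, Fintype.card_fin] at h2
      omega
    calc r * K₀ * K₀ ≤ (Finset.univ.filter fun s => ¬ ((κ s).2 : ℕ) < K₀).card * K₀ :=
          Nat.mul_le_mul_right _ h3
      _ ≤ ∑ s ∈ Finset.univ.filter (fun s => ¬ ((κ s).2 : ℕ) < K₀), ((κ s).2 : ℕ) := by
          rw [← smul_eq_mul]
          refine Finset.card_nsmul_le_sum _ _ _ fun s hs => ?_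
          simpa using hs
      _ ≤ _ := Finset.sum_le_sum_of_subset (Finset.filter_subset _ _)
  · have : (Matrix.detRowAlternating (R := A) (n := Fin R)).toMultilinearMap
        (fun s => v (κ s)) = 0 := by
      simp only [Function.Injective] at hκ
      push Not at hκ
      obtain ⟨s, s', hss, hne⟩ := hκ
      exact (Matrix.detRowAlternating (R := A) (n := Fin R)).map_eq_zero_of_eq _
        (by simp [hss]) hne
    rw [this, smul_zero]
    exact dvd_zero _

end Determinants

section Norms

open NumberField

variable {K : Type*} [Field K] [NumberField K]

/-- A nonzero algebraic integer has a conjugate of absolute value at least `1`. -/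
lemma exists_one_le_norm (x : 𝓞 K) (hx : x ≠ 0) : ∃ σ : K →+* ℂ, 1 ≤ ‖σ x‖ := by
  by_contra! hcon
  have h1 : (1 : ℝ) ≤ ∏ σ : K →ₐ[ℚ] ℂ, ‖σ (x : K)‖ := by
    rw [← norm_prod, ← Algebra.norm_eq_prod_embeddings ℚ ℂ (x : K)]
    rw [← Algebra.coe_norm_int]
    have : Algebra.norm ℤ x ≠ 0 := Algebra.norm_ne_zero_iff.2 hx
    have h2 : (1 : ℤ) ≤ |Algebra.norm ℤ x| := Int.one_le_abs this
    simp only [eq_ratCast, Rat.cast_intCast, Complex.norm_intCast]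
    exact_mod_cast h2
  have h2 : ∏ σ : K →ₐ[ℚ] ℂ, ‖σ (x : K)‖ < 1 := by
    obtain ⟨σ₁⟩ : Nonempty (K →+* ℂ) := inferInstance
    let σ₀ : K →ₐ[ℚ] ℂ := σ₁.toRatAlgHom
    have : ∏ σ : K →ₐ[ℚ] ℂ, ‖σ (x : K)‖ < ∏ σ : K →ₐ[ℚ] ℂ, (1 : ℝ) := by
      apply Finset.prod_lt_prod_of_nonempty
      · intro σ _
        rw [norm_pos_iff]
        simpa using hx
      · intro σ _
        exact hcon (σ : K →+* ℂ)
      · exact ⟨σ₀, Finset.mem_univ _⟩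
    simpa using this
  linarith

/-- A determinant with algebraic integer entries, divisible by a high power of `h` and with small
conjugates, vanishes. -/
lemma det_eq_zero_of_dvd {R N : ℕ} {h : ℕ} {B : ℝ} (M : Matrix (Fin R) (Fin R) (𝓞 K))
    (hB : ∀ σ : K →+* ℂ, ∀ i j, ‖σ (M i j)‖ ≤ B) (hdvd : ((h : 𝓞 K)) ^ N ∣ M.det)
    (hlt : R.factorial * B ^ R < (h : ℝ) ^ N) : M.det = 0 := by
  by_contra hne
  obtain ⟨y, hy⟩ := hdvd
  have hy0 : y ≠ 0 := by rintro rfl; simp [hy] at hne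
  obtain ⟨σ, hσ⟩ := exists_one_le_norm y hy0
  let τ : 𝓞 K →+* ℂ := σ.comp (algebraMap (𝓞 K) K)
  have h1 : ‖τ M.det‖ ≤ R.factorial * B ^ R := by
    rw [RingHom.map_det]
    have := Matrix.det_le (A := τ.mapMatrix M) (abv := NormedField.toAbsoluteValue ℂ) (x := B)
      (fun i j => hB σ i j)
    simpa [NormedField.toAbsoluteValue] using this
  have h2 : (h : ℝ) ^ N ≤ ‖τ M.det‖ := by
    rw [hy, map_mul, norm_mul, map_pow, map_natCast, norm_pow, Complex.norm_natCast]
    exact le_mul_of_one_le_right (by positivity) hσ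
  linarith

end Norms

/-! ### Denominators in a window -/

section Window

open NumberField

variable {K : Type*} [Field K] [NumberField K]

/-- `x ∈ K` has a positive integral denominator of size at most `B`, and all its conjugates have
absolute value at most `B`. -/
def SmallAt (x : K) (B : ℝ) : Prop :=
  ∃ y : ℕ, 0 < y ∧ (y : ℝ) ≤ B ∧ IsIntegral ℤ ((y : K) * x) ∧ ∀ σ : K →+* ℂ, ‖σ x‖ ≤ B

lemma SmallAt.mono {x : K} {B B' : ℝ} (h : SmallAt x B) (hB : B ≤ B') : SmallAt x B' := by
  obtain ⟨y, h0, h1, h2, h3⟩ := h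
  exact ⟨y, h0, h1.trans hB, h2, fun σ => (h3 σ).trans hB⟩

lemma isIntegral_mul_of_dvd {y Y : ℕ} {x : K} (h : IsIntegral ℤ ((y : K) * x)) (hd : y ∣ Y) :
    IsIntegral ℤ ((Y : K) * x) := by
  obtain ⟨z, rfl⟩ := hd
  have : ((y * z : ℕ) : K) * x = (z : K) * ((y : K) * x) := by push_cast; ring
  rw [this]
  refine IsIntegral.mul ?_ h
  simpa using isIntegral_algebraMap (R := ℤ) (A := K) (x := (z : ℤ))

/-- The product of the values of `P` at the `u` consecutive integers starting at `n`. -/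
noncomputable def blockProd (P : ℤ[X]) (u n : ℕ) : ℤ :=
  ∏ k ∈ Finset.range u, P.eval ((n + k : ℕ) : ℤ)

/-- The polynomial `∏_{-R' ≤ k < R'} P(x + k)`; its value at `n` is a common multiple of all
products of `R'` consecutive values of `P` starting at a distance less than `R'` below `n`. -/
noncomputable def winPoly (P : ℤ[X]) (R' : ℕ) : ℤ[X] :=
  ∏ k ∈ Finset.range (2 * R'), P.comp (Polynomial.X + Polynomial.C ((k : ℤ) - R'))

lemma blockProd_dvd_winPoly (P : ℤ[X]) (R' : ℕ) {m n : ℕ} (h1 : m ≤ n) (h2 : n < m + R') :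
    blockProd P R' m ∣ (winPoly P R').eval (n : ℤ) := by
  have h3 : blockProd P R' m = ∏ k ∈ Finset.Ico (R' - (n - m)) (2 * R' - (n - m)),
      P.eval ((n : ℤ) + ((k : ℤ) - R')) := by
    rw [Finset.prod_Ico_eq_prod_range, show 2 * R' - (n - m) - (R' - (n - m)) = R' by omega]
    refine Finset.prod_congr rfl fun k _ => ?_
    congr 1
    push_cast [Nat.cast_sub (show n - m ≤ R' by omega), Nat.cast_sub h1]
    ring
  rw [h3, winPoly, Polynomial.eval_prod]
  simp only [Polynomial.eval_comp, Polynomial.eval_add, Polynomial.eval_X, Polynomial.eval_C]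
  apply Finset.prod_dvd_prod_of_subset
  intro k hk
  simp only [Finset.mem_Ico, Finset.mem_range] at hk ⊢
  omega

lemma winPoly_ne_zero {P : ℤ[X]} (hP : P ≠ 0) (R' : ℕ) : winPoly P R' ≠ 0 := by
  refine Finset.prod_ne_zero_iff.2 fun k _ h => hP ?_
  have := (Polynomial.comp_eq_zero_iff).1 h
  rcases this with h | ⟨-, h⟩
  · exact h
  · have := congrArg (Polynomial.coeff · 1) h
    simp [Polynomial.coeff_X] at this

/-- The recurrence `P(n) a(n+r) = ∑ Q_j(n) a(n+j)` over the ring of integers. -/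
def RecRel (a : ℕ → K) {r : ℕ} (P : ℤ[X]) (Q : Fin r → (𝓞 K)[X]) : Prop :=
  ∀ n : ℕ, ((P.eval (n : ℤ) : ℤ) : K) * a (n + r) =
    ∑ j, algebraMap (𝓞 K) K ((Q j).eval (n : 𝓞 K)) * a (n + j)

lemma RecRel.expand {a : ℕ → K} {r : ℕ} {P : ℤ[X]} {Q : Fin r → (𝓞 K)[X]}
    (hrec : RecRel a P Q) (u i : ℕ) (hi : i < r + u) : ∃ φ : Fin r → (𝓞 K)[X], ∀ n : ℕ,
      (blockProd P u n : K) * a (n + i) =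
        ∑ j, algebraMap (𝓞 K) K ((φ j).eval (n : 𝓞 K)) * a (n + j) := by
  have hcast : ∀ n : ℕ, (P.map (Int.castRingHom (𝓞 K))).eval (n : 𝓞 K) =
      ((P.eval (n : ℤ) : ℤ) : 𝓞 K) := by
    intro n
    simp
  have h := rec_expand (R := 𝓞 K) (K := K) (a := a) (P := P.map (Int.castRingHom (𝓞 K))) (Q := Q)
    (fun n => by rw [hcast, map_intCast]; exact hrec n) u i hi
  obtain ⟨φ, hφ⟩ := h
  refine ⟨φ, fun n => ?_⟩
  rw [← hφ n]
  congr 1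
  simp only [hcast, map_prod, map_intCast, blockProd, Int.cast_prod]

/-- Denominators in a window: one denominator for each of `B` blocks of `r` consecutive terms is
enough for all `R' B` terms of the window, after multiplication by `winPoly P R'`. -/
lemma RecRel.exists_window_denom {a : ℕ → K} {r : ℕ} {P : ℤ[X]} {Q : Fin r → (𝓞 K)[X]}
    (hrec : RecRel a P Q) {R' B n : ℕ} (hR' : 0 < R') (hB : 0 < B) {X : ℝ}
    (hsm : ∀ l < R' * B + r, SmallAt (a (n + l)) X) :
    ∃ Y : ℕ, 0 < Y ∧ (Y : ℝ) ≤ X ^ (r * B) ∧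
      (∀ i < R' * B, IsIntegral ℤ
        ((Y : K) * ((((winPoly P R').eval ((n + i : ℕ) : ℤ) : ℤ) : K) * a (n + i)))) ∧
      ∀ j < r, IsIntegral ℤ ((Y : K) * a (n + j)) := by
  choose! y hy0 hyX hyi _ using hsm
  have hidx : ∀ β < B, ∀ j < r, R' * β + j < R' * B + r := by
    intro β hβ j hj
    have : R' * β ≤ R' * B := Nat.mul_le_mul_left _ hβ.le
    omega
  set Y : ℕ := ∏ x ∈ Finset.range B ×ˢ (Finset.range r), y (R' * x.1 + x.2) with hY
  have hdvd : ∀ β < B, ∀ j < r, y (R' * β + j) ∣ Y := by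
    intro β hβ j hj
    exact Finset.dvd_prod_of_mem (fun x : ℕ × ℕ => y (R' * x.1 + x.2))
      (a := (β, j)) (by simp [hβ, hj])
  have hYint : ∀ β < B, ∀ j < r, IsIntegral ℤ ((Y : K) * a (n + (R' * β + j))) :=
    fun β hβ j hj => isIntegral_mul_of_dvd (hyi _ (hidx β hβ j hj)) (hdvd β hβ j hj)
  refine ⟨Y, ?_, ?_, ?_, ?_⟩
  · refine Finset.prod_pos fun x hx => ?_
    simp only [Finset.mem_product, Finset.mem_range] at hx
    exact hy0 _ (hidx _ hx.1 _ hx.2)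
  · rw [hY]
    push_cast
    calc _ ≤ ∏ x ∈ Finset.range B ×ˢ (Finset.range r), X := by
          refine Finset.prod_le_prod (fun _ _ => by positivity) fun x hx => ?_
          simp only [Finset.mem_product, Finset.mem_range] at hx
          exact hyX _ (hidx _ hx.1 _ hx.2)
      _ = X ^ (r * B) := by simp [mul_comm]
  · intro i hi
    set β := i / R' with hβ
    set i' := i % R' with hi'
    have hi'R : i' < R' := Nat.mod_lt _ hR'
    have hii : i = R' * β + i' := (Nat.div_add_mod i R').symm
    have hβB : β < B := by
      rw [hβ, Nat.div_lt_iff_lt_mul hR', mul_comm]; exact hi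
    obtain ⟨φ, hφ⟩ := hrec.expand R' i' (by omega)
    obtain ⟨z, hz⟩ := blockProd_dvd_winPoly P R' (m := n + R' * β) (n := n + i)
      (by omega) (by omega)
    rw [hz]
    have : (Y : K) * (((blockProd P R' (n + R' * β) * z : ℤ) : K) * a (n + i)) =
        (z : K) * ∑ j : Fin r, algebraMap (𝓞 K) K ((φ j).eval ((n + R' * β : ℕ) : 𝓞 K)) *
          ((Y : K) * a (n + (R' * β + j))) := by
      have h2 : ∑ j : Fin r, algebraMap (𝓞 K) K ((φ j).eval ((n + R' * β : ℕ) : 𝓞 K)) *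
          ((Y : K) * a (n + (R' * β + j))) = (Y : K) *
          ((blockProd P R' (n + R' * β) : K) * a (n + i)) := by
        rw [show n + i = n + R' * β + i' by omega, hφ, Finset.mul_sum]
        refine Finset.sum_congr rfl fun j _ => ?_
        rw [add_assoc]; ring
      rw [h2]; push_cast; ring
    rw [this]
    refine IsIntegral.mul ?_ (IsIntegral.sum _ fun j _ => IsIntegral.mul ?_ ?_)
    · simpa using isIntegral_algebraMap (R := ℤ) (A := K) (x := z)
    · exact RingOfIntegers.isIntegral_coe _
    · exact hYint β hβB j j.2
  · intro j hj
    simpa using hYint 0 hB j hj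

end Window

/-! ### Vanishing minors -/

section Minor

open NumberField

variable {K : Type*} [Field K] [NumberField K]

/-- The minors of the matrix `b(n₀ + h s + i)` vanish, where `b = winPoly P R' · a`: after clearing
denominators they are algebraic integers divisible by a power of `h` quadratic in `R`, whereas
their conjugates are too small for that. -/
lemma RecRel.minor_eq_zero {a : ℕ → K} {r : ℕ} {P : ℤ[X]} {Q : Fin r → (𝓞 K)[X]}
    (hrec : RecRel a P Q) {R' B n₀ h K₀ R O e eF Z : ℕ} (hR' : 0 < R') (hB : 0 < B)
    (hR : R = 2 * (r * K₀)) (hOB : O ≤ R' * B)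
    (he : e = 5 * (r * B) + eF + 5) (hN : R * e + 1 ≤ r * K₀ * K₀)
    (hZ : R.factorial < Z) (hp : h.Prime) (hZh : Z ≤ h)
    (hsm : ∀ s < R, ∀ l < R' * B + r, SmallAt (a (n₀ + h * s + l)) ((Z : ℝ) ^ 5))
    (hF : ∀ s < R, ∀ l < R' * B, |(winPoly P R').eval ((n₀ + h * s + l : ℕ) : ℤ)| ≤ (Z : ℤ) ^ eF)
    (hndvd : ¬ (h : ℤ) ∣ blockProd P O n₀) (i : Fin R → Fin O) :
    Matrix.det (Matrix.of fun s t : Fin R =>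
      (((winPoly P R').eval ((n₀ + h * s + i t : ℕ) : ℤ) : ℤ) : K) *
        a (n₀ + h * s + i t)) = 0 := by
  classical
  have hZ0 : (1 : ℝ) ≤ Z := by
    have : 1 ≤ Z := by omega
    exact_mod_cast this
  choose Y hY0 hYZ hYb hYa using fun s : Fin R =>
    hrec.exists_window_denom hR' hB (n := n₀ + h * s) (hsm s s.2)
  choose φ hφ using fun t : Fin R => hrec.expand O (i t) (by have := (i t).2; omega)
  set F := winPoly P R' with hFdef
  -- integral versions of the two families of numbers
  let M : Matrix (Fin R) (Fin R) (𝓞 K) := Matrix.of fun s t =>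
    ⟨(Y s : K) * (((F.eval ((n₀ + h * s + i t : ℕ) : ℤ) : ℤ) : K) * a (n₀ + h * s + i t)),
      hYb s (i t) (lt_of_lt_of_le (i t).2 hOB)⟩
  let c : Fin R → Fin r → 𝓞 K := fun s j => ⟨(Y s : K) * a (n₀ + h * s + j), hYa s j j.2⟩
  have hMK : ∀ s t, algebraMap (𝓞 K) K (M s t) =
      (Y s : K) * (((F.eval ((n₀ + h * s + i t : ℕ) : ℤ) : ℤ) : K) * a (n₀ + h * s + i t)) :=
    fun s t => rfl
  have hcK : ∀ s j, algebraMap (𝓞 K) K (c s j) = (Y s : K) * a (n₀ + h * s + j) :=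
    fun s t => rfl
  let Fp : (𝓞 K)[X] := F.map (Int.castRingHom (𝓞 K))
  have hFp : ∀ (s t : Fin R), (Fp.comp (Polynomial.X + Polynomial.C ((i t : ℕ) : 𝓞 K))).eval
      ((n₀ : 𝓞 K) + h * (s : ℕ)) = ((F.eval ((n₀ + h * s + i t : ℕ) : ℤ) : ℤ) : 𝓞 K) := by
    intro s t
    have := Polynomial.eval_map_apply (Int.castRingHom (𝓞 K)) ((n₀ + h * s + i t : ℕ) : ℤ) (p := F)
    simp [Fp] at this ⊢
    exact this
  have hrow : ∀ s t : Fin R, ((blockProd P O (n₀ + h * s) : ℤ) : 𝓞 K) * M s t =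
      ∑ j, (Fp.comp (Polynomial.X + Polynomial.C ((i t : ℕ) : 𝓞 K)) * φ t j).eval
        ((n₀ : 𝓞 K) + h * (s : ℕ)) * c s j := by
    intro s t
    apply RingOfIntegers.coe_injective
    rw [map_mul, map_intCast, hMK, map_sum]
    have h1 := hφ t (n₀ + h * s)
    calc _ = (Y s : K) * ((F.eval ((n₀ + h * s + i t : ℕ) : ℤ) : ℤ) : K) *
          ((blockProd P O (n₀ + h * s) : ℤ) * a (n₀ + h * s + i t)) := by ring
      _ = _ := by
        rw [h1, Finset.mul_sum]
        refine Finset.sum_congr rfl fun j _ => ?_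
        rw [Polynomial.eval_mul, hFp, map_mul, map_mul, map_intCast, hcK]
        push_cast
        ring
  have hdvd1 : (h : 𝓞 K) ^ (r * K₀ * K₀) ∣ Matrix.det (Matrix.of fun s t : Fin R =>
      ((blockProd P O (n₀ + h * s) : ℤ) : 𝓞 K) * M s t) := by
    simp_rw [hrow]
    exact pow_dvd_det hR (n₀ : 𝓞 K) (h : 𝓞 K) _ c (fun s => ((s : ℕ) : 𝓞 K))
  rw [Matrix.det_mul_column] at hdvd1
  have hcop : IsCoprime ((h : 𝓞 K) ^ (r * K₀ * K₀))
      (∏ s : Fin R, ((blockProd P O (n₀ + h * s) : ℤ) : 𝓞 K)) := by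
    apply IsCoprime.pow_left
    refine IsCoprime.prod_right fun s _ => ?_
    have hpi : Prime (h : ℤ) := Nat.prime_iff_prime_int.1 hp
    have : IsCoprime (h : ℤ) (blockProd P O (n₀ + h * s)) := by
      rw [hpi.coprime_iff_not_dvd]
      intro hd
      apply hndvd
      obtain ⟨k, hk, hkd⟩ := (hpi.dvd_finsetProd_iff _).1 hd
      refine dvd_trans ?_ (Finset.dvd_prod_of_mem _ hk)
      have h2 := Polynomial.sub_dvd_eval_sub ((n₀ + h * s + k : ℕ) : ℤ) ((n₀ + k : ℕ) : ℤ) P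
      have h3 : (h : ℤ) ∣ ((n₀ + h * s + k : ℕ) : ℤ) - ((n₀ + k : ℕ) : ℤ) :=
        ⟨s, by push_cast; ring⟩
      exact (dvd_sub_right hkd).1 (h3.trans h2)
    simpa using this.map (Int.castRingHom (𝓞 K))
  have hdvd2 : (h : 𝓞 K) ^ (r * K₀ * K₀) ∣ M.det := hcop.dvd_of_dvd_mul_left hdvd1
  have hM0 : M.det = 0 := by
    refine det_eq_zero_of_dvd (B := (Z : ℝ) ^ e) M ?_ hdvd2 ?_
    · intro σ s t
      change ‖σ (algebraMap (𝓞 K) K (M s t))‖ ≤ _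
      rw [hMK, map_mul, map_mul, map_natCast, map_intCast, norm_mul, norm_mul,
        Complex.norm_natCast, Complex.norm_intCast]
      have h1 := hYZ s
      have h2 : |((F.eval ((n₀ + h * s + i t : ℕ) : ℤ) : ℤ) : ℝ)| ≤ (Z : ℝ) ^ eF := by
        have := hF s s.2 (i t) (lt_of_lt_of_le (i t).2 hOB)
        exact_mod_cast this
      have h3 : ‖σ (a (n₀ + h * s + i t))‖ ≤ (Z : ℝ) ^ 5 := by
        obtain ⟨_, _, _, _, h⟩ := hsm s s.2 (i t) (by have := (i t).2; omega)
        exact h σ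
      rw [← pow_mul] at h1
      calc _ ≤ (Z : ℝ) ^ (5 * (r * B)) * ((Z : ℝ) ^ eF * (Z : ℝ) ^ 5) := by gcongr
        _ = (Z : ℝ) ^ e := by rw [he, pow_add, pow_add]; ring
    · have hlt : (R.factorial : ℝ) < Z := by exact_mod_cast hZ
      have hZh' : (Z : ℝ) ≤ h := by exact_mod_cast hZh
      calc (R.factorial : ℝ) * ((Z : ℝ) ^ e) ^ R < Z * ((Z : ℝ) ^ e) ^ R := by gcongr
        _ = (Z : ℝ) ^ (R * e + 1) := by rw [← pow_mul]; ring
        _ ≤ (Z : ℝ) ^ (r * K₀ * K₀) := pow_le_pow_right₀ hZ0 hN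
        _ ≤ _ := by gcongr
  -- pass back from the cleared determinant to the original one
  have hfin : (∏ s : Fin R, (Y s : K)) * Matrix.det (Matrix.of fun s t : Fin R =>
      ((F.eval ((n₀ + h * s + i t : ℕ) : ℤ) : ℤ) : K) * a (n₀ + h * s + i t)) = 0 := by
    rw [← Matrix.det_mul_column]
    have := congrArg (algebraMap (𝓞 K) K) hM0
    rw [RingHom.map_det, map_zero] at this
    exact this
  refine (mul_eq_zero.1 hfin).resolve_left ?_
  refine Finset.prod_ne_zero_iff.2 fun s _ => ?_
  exact_mod_cast (hY0 s).ne'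

end Minor

/-! ### Zeros, sparse sets, primes, and combining two relations -/

section Elementary

/-- At arguments up to `Z ^ 5` a polynomial is bounded by a fixed power of `Z`, without a
multiplicative constant. -/
lemma exists_eval_le_pow (F : ℤ[X]) : ∃ e Z₀ : ℕ, ∀ Z ≥ Z₀, ∀ n ≤ Z ^ 5,
    |F.eval (n : ℤ)| ≤ (Z : ℤ) ^ e := by
  have h1 : ∃ A e : ℕ, ∀ n : ℕ, |F.eval (n : ℤ)| ≤ A * ((n : ℤ) + 1) ^ e := by
    induction F using Polynomial.induction_on' with
    | add p q hp hq =>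
      obtain ⟨A, e, h⟩ := hp
      obtain ⟨A', e', h'⟩ := hq
      refine ⟨A + A', e + e', fun n => ?_⟩
      rw [Polynomial.eval_add]
      have h1 : (1 : ℤ) ≤ (n : ℤ) + 1 := by omega
      calc |p.eval (n : ℤ) + q.eval (n : ℤ)| ≤ A * ((n : ℤ) + 1) ^ e + A' * ((n : ℤ) + 1) ^ e' :=
            (abs_add_le _ _).trans (add_le_add (h n) (h' n))
        _ ≤ A * ((n : ℤ) + 1) ^ (e + e') + A' * ((n : ℤ) + 1) ^ (e + e') := by
            gcongr <;> first | exact h1 | omega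
        _ = _ := by push_cast; ring
    | monomial k c =>
      refine ⟨c.natAbs, k, fun n => ?_⟩
      rw [Polynomial.eval_monomial, abs_mul, abs_pow, Nat.abs_cast, Int.natCast_natAbs]
      gcongr
      omega
  obtain ⟨A, e, h⟩ := h1
  refine ⟨6 * e + 1, max A 2, fun Z hZ n hn => (h n).trans ?_⟩
  have hA : (A : ℤ) ≤ Z := by have := le_of_max_le_left hZ; exact_mod_cast this
  have h2 : 2 ≤ Z := le_of_max_le_right hZ
  have h3 : (n : ℤ) + 1 ≤ (Z : ℤ) ^ 6 := by
    have : n + 1 ≤ Z ^ 6 := by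
      have h4 : 1 ≤ Z ^ 5 := Nat.one_le_pow _ _ (by omega)
      calc n + 1 ≤ Z ^ 5 * 2 := by omega
        _ ≤ Z ^ 5 * Z := Nat.mul_le_mul_left _ h2
        _ = Z ^ 6 := by ring
    exact_mod_cast this
  calc (A : ℤ) * ((n : ℤ) + 1) ^ e ≤ Z * ((Z : ℤ) ^ 6) ^ e := by gcongr
    _ = _ := by ring

lemma eventually_eval_ne_zero {K : Type*} [CommRing K] [IsDomain K] [CharZero K] {g : K[X]} (hg : g ≠ 0) :
    ∃ N₀ : ℕ, ∀ n ≥ N₀, g.eval (n : K) ≠ 0 := by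
  have hfin : {n : ℕ | g.eval (n : K) = 0}.Finite := by
    refine Set.Finite.of_finite_image (f := fun n : ℕ => (n : K))
      ((g.rootSet_finite K).subset ?_) (fun _ _ _ _ h => Nat.cast_injective h)
    rintro _ ⟨n, hn, rfl⟩
    rw [Polynomial.mem_rootSet]
    exact ⟨hg, by simpa using hn⟩
  obtain ⟨N, hN⟩ := hfin.bddAbove
  refine ⟨N + 1, fun n hn h => ?_⟩
  have := hN h
  omega

/-- Among more than `deg g` disjoint intervals of length `L`, one contains no zero of `g`. -/
lemma exists_zero_free {K : Type*} [CommRing K] [IsDomain K] [CharZero K] {g : K[X]} (hg : g ≠ 0) {E : ℕ} (L : ℕ)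
    (hE : g.natDegree ≤ E) :
    ∃ v ≤ E, ∀ n : ℕ, (v + 1) * L ≤ n → n < (v + 2) * L → g.eval (n : K) ≠ 0 := by
  classical
  by_contra! hcon
  choose! n h1 h2 h3 using hcon
  have hcard : (Finset.range (E + 1)).card ≤ g.roots.toFinset.card := by
    refine Finset.card_le_card_of_injOn (fun v => (n v : K)) ?_ ?_
    · intro v hv
      have hv : v ≤ E := by simpa [Nat.lt_succ_iff] using hv
      simpa [hg] using h3 v hv
    · intro v hv w hw hvw
      have hv : v ≤ E := by simpa [Nat.lt_succ_iff] using hv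
      have hw : w ≤ E := by simpa [Nat.lt_succ_iff] using hw
      have hvw : n v = n w := Nat.cast_injective hvw
      have a1 := h1 v hv
      have a2 := h2 v hv
      have a3 := h1 w hw
      have a4 := h2 w hw
      rw [hvw] at a1 a2
      have b1 : (v + 1) * L < (w + 2) * L := lt_of_le_of_lt a1 a4
      have b2 : (w + 1) * L < (v + 2) * L := lt_of_le_of_lt a3 a2
      have c1 := Nat.lt_of_mul_lt_mul_right b1
      have c2 := Nat.lt_of_mul_lt_mul_right b2
      omega
  have h4 := (Multiset.toFinset_card_le g.roots).trans (Polynomial.card_roots' g)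
  simp at hcard
  omega

/-- A sparse set is avoided simultaneously by all translates of some point of an interval. -/
lemma exists_avoid {S : Set ℕ} {ι : Type*} [Fintype ι] (τ : ι → ℕ) {A L T : ℕ} (hA : 1 ≤ A)
    (hT : ∀ n x, n < A + L → n + τ x ≤ T)
    (hcard : Fintype.card ι * (S ∩ Set.Icc 1 T).ncard < L) :
    ∃ n, A ≤ n ∧ n < A + L ∧ ∀ x, n + τ x ∉ S := by
  classical
  by_contra! hcon
  have hfin : (S ∩ Set.Icc 1 T).Finite := (Set.finite_Icc 1 T).inter_of_right _
  have h1 : Finset.Ico A (A + L) ⊆ (Finset.univ : Finset ι).biUnion fun x =>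
      (Finset.Ico A (A + L)).filter fun n => n + τ x ∈ S := by
    intro n hn
    have hn' := Finset.mem_Ico.1 hn
    obtain ⟨x, hx⟩ := hcon n hn'.1 hn'.2
    simp only [Finset.mem_biUnion, Finset.mem_univ, true_and, Finset.mem_filter]
    exact ⟨x, hn, hx⟩
  have h2 := Finset.card_le_card h1
  have h3 : ∀ x : ι, ((Finset.Ico A (A + L)).filter fun n => n + τ x ∈ S).card ≤
      (S ∩ Set.Icc 1 T).ncard := by
    intro x
    rw [Set.ncard_eq_toFinset_card _ hfin]
    refine Finset.card_le_card_of_injOn (fun n => n + τ x) ?_ ?_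
    · intro n hn
      simp only [Finset.coe_filter, Finset.mem_Ico, Set.mem_ofPred_eq] at hn
      simp only [Set.Finite.coe_toFinset, Set.mem_inter_iff, Set.mem_Icc]
      exact ⟨hn.2, by omega, hT n x hn.1.2⟩
    · intro n _ m _ h
      simpa using h
  have h4 := Finset.card_biUnion_le (s := (Finset.univ : Finset ι))
    (t := fun x => (Finset.Ico A (A + L)).filter fun n => n + τ x ∈ S)
  have h5 := Finset.sum_le_card_nsmul (Finset.univ : Finset ι) _ _ (fun x _ => h3 x)
  simp only [Nat.card_Ico, smul_eq_mul, Finset.card_univ] at h2 h4 h5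
  omega

/-- A nonzero integer of size at most `Z ^ e` is prime to two of any `e + 2` distinct primes
not less than `Z`: otherwise `e + 1` of them would divide it. -/
lemma exists_two_coprime {e Z : ℕ} (hZ : 1 < Z) (p : ℕ → ℕ) (hp : ∀ k, (p k).Prime)
    (hinj : Function.Injective p) (hpZ : ∀ k, Z ≤ p k) {D : ℤ} (hD : D ≠ 0)
    (hDZ : |D| ≤ (Z : ℤ) ^ e) : ∃ k < e + 2, ∃ l < e + 2, k ≠ l ∧
      ¬ (p k : ℤ) ∣ D ∧ ¬ (p l : ℤ) ∣ D := by
  classical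
  by_contra! hcon
  set T := (Finset.range (e + 2)).filter fun k => (p k : ℤ) ∣ D with hT
  have h1 : e + 1 ≤ T.card := by
    have h2 := Finset.card_filter_add_card_filter_not (s := Finset.range (e + 2))
      (fun k => (p k : ℤ) ∣ D)
    have h3 : ((Finset.range (e + 2)).filter fun k => ¬ (p k : ℤ) ∣ D).card ≤ 1 := by
      rw [Finset.card_le_one]
      intro k hk l hl
      simp only [Finset.mem_filter, Finset.mem_range] at hk hl
      by_contra hkl
      exact hl.2 (hcon k hk.1 l hl.1 hkl hk.2)
    rw [Finset.card_range, ← hT] at h2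
    omega
  have h2 : (∏ k ∈ T, p k) ∣ D.natAbs := by
    refine Finset.prod_dvd_of_isRelPrime ?_ fun k hk => ?_
    · intro k _ l _ hkl
      exact Nat.coprime_iff_isRelPrime.1 ((Nat.coprime_primes (hp k) (hp l)).2 (hinj.ne hkl))
    · exact Int.natCast_dvd.1 (Finset.mem_filter.1 hk).2
  have h3 : Z ^ (e + 1) ≤ ∏ k ∈ T, p k :=
    calc Z ^ (e + 1) ≤ Z ^ T.card := Nat.pow_le_pow_right (by omega) h1
      _ = ∏ k ∈ T, Z := by simp
      _ ≤ _ := Finset.prod_le_prod' fun k _ => hpZ k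
  have h4 := Nat.le_of_dvd (Int.natAbs_pos.2 hD) h2
  have h5 : D.natAbs ≤ Z ^ e := by zify; exact hDZ
  have h6 : Z ^ e < Z ^ (e + 1) := Nat.pow_lt_pow_right hZ (by omega)
  omega

end Elementary

section TwoRelations

variable {K : Type*} [Field K]

/-- If a sequence satisfies on a long interval a linear relation with steps `p` and another one
with steps `q`, where `p` and `q` are coprime, then it satisfies on a part of the interval a
relation between `R ^ 2 + 1` consecutive terms: every window of length `B` which starts at a
distance at least `p q` from `n₀` lies in the span of the `R ^ 2` windows at distances
`p x + q y` with `x, y < R`. -/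
lemma relation_of_two {b : ℕ → K} {p q R n₀ H B : ℕ} (hpq : p.Coprime q)
    {d d' : Fin R → K} (hd : d ≠ 0) (hd' : d' ≠ 0)
    (h : ∀ n, n₀ ≤ n → n ≤ n₀ + H → ∑ m : Fin R, d m * b (n + p * m) = 0)
    (h' : ∀ n, n₀ ≤ n → n ≤ n₀ + H → ∑ m : Fin R, d' m * b (n + q * m) = 0)
    (hH : p * q + R ^ 2 + B ≤ H) :
    ∃ c : Fin (R ^ 2 + 1) → K, c ≠ 0 ∧ ∀ t < B,
      ∑ k, c k * b (n₀ + p * q + t + k) = 0 := by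
  classical
  let u : ℕ → Fin B → K := fun i t => b (n₀ + i + t)
  let W := Submodule.span K (Set.range fun x : Fin R × Fin R => u (p * x.1 + q * x.2))
  -- one reduction step, using the top nonzero coefficient of a relation
  have step : ∀ (p : ℕ) (d : Fin R → K), d ≠ 0 →
      (∀ n, n₀ ≤ n → n ≤ n₀ + H → ∑ m : Fin R, d m * b (n + p * m) = 0) →
      ∀ (m y : ℕ), R ≤ m → p * m + y + B ≤ H → (∀ m' < m, u (p * m' + y) ∈ W) →
      u (p * m + y) ∈ W := by
    intro p d hd h m y hm hmH hlow
    have hT : (Finset.univ.filter fun s => d s ≠ 0).Nonempty := by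
      obtain ⟨s, hs⟩ := Function.ne_iff.1 hd
      exact ⟨s, by simpa using hs⟩
    set s₀ := (Finset.univ.filter fun s => d s ≠ 0).max' hT
    have hs0 : d s₀ ≠ 0 := (Finset.mem_filter.1 (Finset.max'_mem _ hT)).2
    have hmax : ∀ s, s₀ < s → d s = 0 := by
      intro s hs
      by_contra hne
      exact absurd (Finset.le_max' (Finset.univ.filter fun s => d s ≠ 0) s (by simpa using hne))
        (not_le.2 hs)
    have hs0m : (s₀ : ℕ) ≤ m := by have := s₀.2; omega
    have hrel : ∑ s : Fin R, d s • u (p * (m - s₀ + s) + y) = 0 := by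
      funext t
      rw [Finset.sum_apply]
      have hle : p * (m - s₀) ≤ p * m := Nat.mul_le_mul_left _ (by omega)
      have := h (n₀ + (p * (m - s₀) + y) + t) (by omega) (by have := t.2; omega)
      rw [Pi.zero_apply, ← this]
      refine Finset.sum_congr rfl fun s _ => ?_
      simp only [Pi.smul_apply, smul_eq_mul, u]
      congr 2
      ring
    rw [← Finset.add_sum_erase _ _ (Finset.mem_univ s₀),
      Nat.sub_add_cancel hs0m] at hrel
    have h2 : d s₀ • u (p * m + y) ∈ W := by
      rw [eq_neg_of_add_eq_zero_left hrel]
      refine Submodule.neg_mem _ (Submodule.sum_mem _ fun s hs => ?_)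
      by_cases hss : s₀ < s
      · rw [hmax s hss, zero_smul]; exact Submodule.zero_mem _
      · refine Submodule.smul_mem _ _ (hlow _ ?_)
        have h3 : s ≠ s₀ := by simpa using hs
        have h4 : (s : ℕ) < s₀ := lt_of_le_of_ne (not_lt.1 hss) (fun h => h3 (Fin.ext h))
        omega
    have h3 := W.smul_mem (d s₀)⁻¹ h2
    rwa [smul_smul, inv_mul_cancel₀ hs0, one_smul] at h3
  have hmem : ∀ N m m', m + m' = N → p * m + q * m' + B ≤ H → u (p * m + q * m') ∈ W := by
    intro N
    induction N using Nat.strong_induction_on with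
    | _ N ih =>
      intro m m' hN hmH
      by_cases hm : R ≤ m
      · refine step p d hd h m (q * m') hm hmH fun m₁ hm₁ => ?_
        have : p * m₁ ≤ p * m := Nat.mul_le_mul_left _ hm₁.le
        exact ih (m₁ + m') (by omega) m₁ m' rfl (by omega)
      · by_cases hm' : R ≤ m'
        · rw [add_comm]
          refine step q d' hd' h' m' (p * m) hm' (by omega) fun m₁ hm₁ => ?_
          have : q * m₁ ≤ q * m' := Nat.mul_le_mul_left _ hm₁.le
          rw [add_comm]
          exact ih (m + m₁) (by omega) m m₁ rfl (by omega)
        · exact Submodule.subset_span ⟨(⟨m, by omega⟩, ⟨m', by omega⟩), rfl⟩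
  have hmem2 : ∀ i, p * q ≤ i → i + B ≤ H → u i ∈ W := by
    intro i hi hiH
    obtain ⟨m, m', hmm⟩ := Nat.exists_add_mul_eq_of_gcd_dvd_of_mul_pred_le p q i
      (by rw [hpq.gcd_eq_one]; exact one_dvd _) (le_trans (Nat.mul_le_mul (Nat.pred_le _) (Nat.pred_le _)) hi)
    have : p * m + q * m' = i := by rw [← hmm]; ring
    rw [← this]
    exact hmem _ m m' rfl (by omega)
  have hdim : Module.finrank K W ≤ R ^ 2 := by
    have := finrank_range_le_card (R := K) (b := fun x : Fin R × Fin R => u (p * x.1 + q * x.2))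
    simpa [Set.finrank, pow_two] using this
  let v : Fin (R ^ 2 + 1) → W := fun k => ⟨u (p * q + k), hmem2 _ (by omega) (by have := k.2; omega)⟩
  have hdep : ¬ LinearIndependent K v := by
    intro hli
    have := hli.fintype_card_le_finrank
    simp at this
    omega
  rw [Fintype.not_linearIndependent_iff] at hdep
  obtain ⟨c, hc, k, hk⟩ := hdep
  refine ⟨c, fun h0 => hk (by simp [h0]), fun t ht => ?_⟩
  have h1 := congrArg (fun w : W => (w : Fin B → K) ⟨t, ht⟩) hc
  simp only [Submodule.coe_sum, Submodule.coe_smul, Finset.sum_apply, Pi.smul_apply, smul_eq_mul,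
    ZeroMemClass.coe_zero, Pi.zero_apply, v, u] at h1
  rw [← h1]
  refine Finset.sum_congr rfl fun s _ => ?_
  congr 2
  ring

end TwoRelations

/-! ### A recurrence with constant coefficients -/

section CFinite

open NumberField

variable {K : Type*} [Field K] [NumberField K]

lemma blockProd_eq_eval (P : ℤ[X]) (u n : ℕ) : blockProd P u n =
    (∏ k ∈ Finset.range u, P.comp (Polynomial.X + Polynomial.C (k : ℤ))).eval (n : ℤ) := by
  rw [Polynomial.eval_prod]
  simp [blockProd, Polynomial.eval_comp]

lemma exists_blockProd_ne_zero {P : ℤ[X]} (hP : P ≠ 0) (u : ℕ) :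
    ∃ N₀ : ℕ, ∀ n ≥ N₀, blockProd P u n ≠ 0 := by
  obtain ⟨N₀, h⟩ := eventually_eval_ne_zero (g := P) hP
  exact ⟨N₀, fun n hn => Finset.prod_ne_zero_iff.2 fun k _ => h _ (by omega)⟩

/-- The propagation lemma for the sequence `F(n) a(n)`. -/
lemma RecRel.propagate {a : ℕ → K} {r : ℕ} {P : ℤ[X]} {Q : Fin r → (𝓞 K)[X]}
    (hrec : RecRel a P Q) (hP : P ≠ 0) (hr : 0 < r) (F : ℤ[X]) (R : ℕ) :
    ∃ E N₀ : ℕ, ∀ t : Fin R → ℕ, ∃ g : K[X], g ≠ 0 ∧ g.natDegree ≤ E ∧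
      ∀ (d : Fin R → K) (lo hi : ℕ), N₀ ≤ lo →
      (∀ n : ℕ, lo ≤ n → n ≤ hi → g.eval (n : K) ≠ 0) →
      (∀ i < 2 * r * R, ∑ m, d m * (((F.eval ((lo + i + t m : ℕ) : ℤ) : ℤ) : K) *
        a (lo + i + t m)) = 0) →
      ∀ n, lo ≤ n → n ≤ hi → ∑ m, d m * (((F.eval ((n + t m : ℕ) : ℤ) : ℤ) : K) *
        a (n + t m)) = 0 := by
  obtain ⟨N₀, hN₀⟩ := exists_blockProd_ne_zero hP (2 * r * R)
  choose! φ hφ using hrec.expand (2 * r * R)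
  let ψ : ℕ → Fin r → K[X] := fun k j =>
    (F.map (Int.castRingHom K)).comp (Polynomial.X + Polynomial.C (k : K)) *
      (φ k j).map (algebraMap (𝓞 K) K)
  refine ⟨(Finset.range (2 * r * R + 1)).sup fun k => Finset.univ.sup fun j => (ψ k j).natDegree,
    N₀, fun t => _root_.propagate (D := fun n => (blockProd P (2 * r * R) n : K))
      (b := fun n => ((F.eval (n : ℤ) : ℤ) : K) * a n)
      (w := fun n j => a (n + j)) ψ ?_ ?_ ?_ t⟩
  · intro k hk j
    exact (Finset.le_sup (f := fun j => (ψ k j).natDegree) (Finset.mem_univ j)).trans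
      (Finset.le_sup (f := fun k => Finset.univ.sup fun j => (ψ k j).natDegree)
        (Finset.mem_range.2 hk))
  · intro k hk n
    have h1 : (F.map (Int.castRingHom K)).eval ((n : K) + k) =
        ((F.eval ((n + k : ℕ) : ℤ) : ℤ) : K) := by
      have := Polynomial.eval_map_apply (Int.castRingHom K) ((n + k : ℕ) : ℤ) (p := F)
      simpa using this
    have h2 : ∀ j, ((φ k j).map (algebraMap (𝓞 K) K)).eval (n : K) =
        algebraMap (𝓞 K) K ((φ k j).eval (n : 𝓞 K)) := by
      intro j
      have := Polynomial.eval_map_apply (algebraMap (𝓞 K) K) (n : 𝓞 K) (p := φ k j)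
      rwa [map_natCast] at this
    have h3 := hφ k (by omega) n
    calc _ = ((F.eval ((n + k : ℕ) : ℤ) : ℤ) : K) *
          ((blockProd P (2 * r * R) n : K) * a (n + k)) := by ring
      _ = _ := by
        rw [h3, Finset.mul_sum]
        refine Finset.sum_congr rfl fun j _ => ?_
        simp only [ψ, Polynomial.eval_mul, Polynomial.eval_comp, Polynomial.eval_add,
          Polynomial.eval_X, Polynomial.eval_C, h1, h2]
        ring
  · intro n hn
    exact_mod_cast hN₀ n hn

set_option maxHeartbeats 800000 in
/-- The key step: if most terms of a sequence with a polynomial recurrence are small, then its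
product with a suitable polynomial satisfies a recurrence with constant coefficients. -/
theorem RecRel.exists_cfinite {a : ℕ → K} {r : ℕ} {P : ℤ[X]} {Q : Fin r → (𝓞 K)[X]}
    (hrec : RecRel a P Q) (hP : P ≠ 0) (hr : 0 < r)
    (hbad : ∀ ε : ℝ, 0 < ε → ∀ᶠ N : ℕ in atTop,
      (({n : ℕ | ¬ SmallAt (a n) n} ∩ Set.Icc 1 N).ncard : ℝ) ≤ ε * N) :
    ∃ F : ℤ[X], F ≠ 0 ∧ ∃ M N : ℕ, ∃ c : Fin M → K, c ≠ 0 ∧ ∀ n ≥ N,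
      ∑ k, c k * (((F.eval ((n + k : ℕ) : ℤ) : ℤ) : K) * a (n + k)) = 0 := by
  classical
  -- The factor `r K₀ ^ 2` is quadratic in `R = 2 r K₀`, while the exponent `R e` of the size of the
  -- minors is linear in `R B`; for `K₀` proportional to `B` these are comparable, and the constants
  -- make the former larger (`hN`). The number `O = 2 r R` of columns needed for propagation is
  -- `R' B` with `R'` depending on `r` only, so that `F`, and with it `eF`, is fixed before `B`.
  obtain ⟨R', hR'⟩ : ∃ R', R' = 80 * r ^ 3 := ⟨_, rfl⟩
  have hR'0 : 0 < R' := by rw [hR']; positivity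
  obtain ⟨F, hF⟩ : ∃ F, F = winPoly P R' := ⟨_, rfl⟩
  obtain ⟨eF, Z₁, hZ₁⟩ := exists_eval_le_pow F
  obtain ⟨B, hB⟩ : ∃ B, B = eF + 6 := ⟨_, rfl⟩
  obtain ⟨K₀, hK₀⟩ : ∃ K₀, K₀ = 20 * r * B := ⟨_, rfl⟩
  obtain ⟨R, hR⟩ : ∃ R, R = 2 * (r * K₀) := ⟨_, rfl⟩
  obtain ⟨e, he⟩ : ∃ e, e = 5 * (r * B) + eF + 5 := ⟨_, rfl⟩
  obtain ⟨O, hO⟩ : ∃ O, O = 2 * r * R := ⟨_, rfl⟩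
  have hOB : O = R' * B := by rw [hO, hR, hK₀, hR']; ring
  have hN : R * e + 1 ≤ r * K₀ * K₀ := by
    have h1 : R * e = 200 * r ^ 3 * B ^ 2 + 40 * r ^ 2 * (B * (eF + 5)) := by
      rw [hR, he, hK₀]; ring
    have h2 : r * K₀ * K₀ = 200 * r ^ 3 * B ^ 2 + 200 * r ^ 3 * (B * B) := by rw [hK₀]; ring
    have h3 : 40 * r ^ 2 * (B * (eF + 5)) + 1 ≤ 200 * r ^ 3 * (B * B) := by
      have h4 : B * (eF + 5) + 1 ≤ B * B := by rw [hB]; nlinarith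
      have h5 : r ^ 2 ≤ r ^ 3 := Nat.pow_le_pow_right hr (by omega)
      have h6 : 1 ≤ r ^ 2 := Nat.one_le_pow _ _ hr
      calc 40 * r ^ 2 * (B * (eF + 5)) + 1 ≤ 40 * r ^ 2 * (B * (eF + 5) + 1) := by
            nlinarith
        _ ≤ 200 * r ^ 3 * (B * B) := by
            apply Nat.mul_le_mul _ h4
            omega
    omega
  obtain ⟨E, N₁, hprop⟩ := hrec.propagate hP hr F R
  obtain ⟨eD, Z₂, hZ₂⟩ := exists_eval_le_pow
    (∏ k ∈ Finset.range O, P.comp (Polynomial.X + Polynomial.C (k : ℤ)))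
  simp_rw [← blockProd_eq_eval] at hZ₂
  obtain ⟨N₂, hN₂⟩ := exists_blockProd_ne_zero hP O
  obtain ⟨C, hC⟩ : ∃ C, C = eD + 2 := ⟨_, rfl⟩
  obtain ⟨E', hE'⟩ : ∃ E', E' = C * E := ⟨_, rfl⟩
  obtain ⟨E₂, N₃, hprop₂⟩ := hrec.propagate hP hr F (R ^ 2 + 1)
  obtain ⟨g₂, hg₂0, -, hg₂⟩ := hprop₂ (fun k => k)
  obtain ⟨N₄, hN₄⟩ := eventually_eval_ne_zero hg₂0
  obtain ⟨B₂, hB₂⟩ : ∃ B₂, B₂ = 2 * r * (R ^ 2 + 1) := ⟨_, rfl⟩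
  obtain ⟨w, hw⟩ : ∃ w, w = R' * B + r := ⟨_, rfl⟩
  obtain ⟨C₄, hC₄⟩ : ∃ C₄, C₄ = 4 ^ C := ⟨_, rfl⟩
  -- everything takes place below `T Z`, where the exceptional set is sparse
  let T : ℕ → ℕ := fun Z => (2 * E' + 5) * Z ^ 4
  obtain ⟨ν, hν⟩ : ∃ ν, ν = Fintype.card (Fin C × Fin R × Fin w) := ⟨_, rfl⟩
  have hTt : Tendsto T atTop atTop := by
    refine tendsto_atTop_mono (fun Z => ?_) tendsto_id
    have : Z ≤ Z ^ 4 := Nat.le_self_pow (by omega) Z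
    simp only [T, id]
    exact this.trans (Nat.le_mul_of_pos_left _ (by omega))
  obtain ⟨Z, hZbad, hZ⟩ := ((hTt.eventually (hbad (1 / (2 * (ν + 1) * (2 * E' + 5)))
    (by positivity))).and (eventually_ge_atTop (Z₁ + Z₂ + R.factorial + N₁ + N₂ + N₃ + N₄ +
      (2 * E' + 5) + (2 ^ C * R + w) + (C₄ + R ^ 2 + B₂) + 2))).exists
  obtain ⟨hZZ₁, hZZ₂, hZR, hZN₁, hZN₂, hZN₃, hZN₄, hZE', hZw, hZC₄, hZ2⟩ : Z₁ ≤ Z ∧ Z₂ ≤ Z ∧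
      R.factorial < Z ∧ N₁ ≤ Z ∧ N₂ ≤ Z ∧ N₃ ≤ Z ∧ N₄ ≤ Z ∧ 2 * E' + 5 ≤ Z ∧ 2 ^ C * R + w ≤ Z ∧
      C₄ + R ^ 2 + B₂ + 1 ≤ Z ∧ 2 ≤ Z := by omega
  clear hZ
  have hZZ4 : Z ≤ Z ^ 4 := Nat.le_self_pow (by omega) Z
  have hZ5 : T Z ≤ Z ^ 5 := by
    calc T Z ≤ Z * Z ^ 4 := Nat.mul_le_mul_right _ (by omega)
      _ = Z ^ 5 := by ring
  -- one prime in each interval `(2 ^ k Z, 2 ^ (k + 1) Z]`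
  have hprimes : ∀ k : ℕ, ∃ p, p.Prime ∧ 2 ^ k * Z < p ∧ p ≤ 2 * (2 ^ k * Z) := fun k =>
    Nat.exists_prime_lt_and_le_two_mul _ (by positivity)
  choose p hp hpl hpu using hprimes
  have hpmono : StrictMono p := by
    refine strictMono_nat_of_lt_succ fun k => ?_
    calc p k ≤ 2 * (2 ^ k * Z) := hpu k
      _ = 2 ^ (k + 1) * Z := by ring
      _ < _ := hpl (k + 1)
  have hpZ : ∀ k, Z ≤ p k := fun k => by
    calc Z ≤ 2 ^ k * Z := Nat.le_mul_of_pos_left _ (by positivity)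
      _ ≤ p k := (hpl k).le
  have hpC : ∀ k < C, p k ≤ 2 ^ C * Z := fun k hk => by
    calc p k ≤ 2 ^ (k + 1) * Z := (hpu k).trans (le_of_eq (by ring))
      _ ≤ _ := Nat.mul_le_mul_right _ (Nat.pow_le_pow_right (by omega) hk)
  choose g hg0 hgE hg using fun k : Fin C => hprop (fun m => p k * m)
  -- an interval free of zeros of all the leading polynomials
  obtain ⟨v, hv, hvfree⟩ := exists_zero_free (g := ∏ k, g k)
    (Finset.prod_ne_zero_iff.2 fun k _ => hg0 k) (E := E') (2 * Z ^ 4) (by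
      refine (Polynomial.natDegree_prod_le _ _).trans ?_
      refine (Finset.sum_le_card_nsmul _ _ E fun k _ => hgE k).trans ?_
      simp [hE'])
  -- a starting point whose windows contain small terms only
  have hbound : ∀ (n : ℕ) (x : Fin C × Fin R × Fin w), n < (v + 1) * (2 * Z ^ 4) + Z ^ 4 →
      n + (p x.1 * x.2.1 + x.2.2) ≤ T Z := by
    rintro n ⟨k, s, l⟩ hn
    have h1 : p k * s ≤ 2 ^ C * Z * R := Nat.mul_le_mul (hpC k k.2) s.2.le
    have h2 : (l : ℕ) ≤ w * Z := by
      calc (l : ℕ) ≤ w * 1 := by rw [mul_one]; exact l.2.le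
        _ ≤ w * Z := Nat.mul_le_mul_left _ (by omega)
    have h3 : (2 ^ C * R + w) * Z ≤ Z ^ 4 := by
      calc (2 ^ C * R + w) * Z ≤ Z * Z := Nat.mul_le_mul_right _ (by omega)
        _ = Z ^ 2 := by ring
        _ ≤ Z ^ 4 := Nat.pow_le_pow_right (by omega) (by omega)
    have h4 : (v + 1) * (2 * Z ^ 4) ≤ (E' + 1) * (2 * Z ^ 4) := Nat.mul_le_mul_right _ (by omega)
    simp only [T]
    linarith
  obtain ⟨n₀, hn1, hn2, hn3⟩ := exists_avoid (S := {n : ℕ | ¬ SmallAt (a n) n})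
    (fun x : Fin C × Fin R × Fin w => p x.1 * x.2.1 + x.2.2) (A := (v + 1) * (2 * Z ^ 4))
    (L := Z ^ 4) (T := T Z) (by have : 0 < (v + 1) * (2 * Z ^ 4) := by positivity
                                omega) hbound (by
      rw [← hν]
      have hZ4 : (0 : ℝ) < (Z : ℝ) ^ 4 := by positivity
      have h1 : (ν : ℝ) * ((({n : ℕ | ¬ SmallAt (a n) n} ∩ Set.Icc 1 (T Z)).ncard : ℝ)) <
          (Z : ℝ) ^ 4 := by
        calc _ ≤ (ν : ℝ) * (1 / (2 * (ν + 1) * (2 * E' + 5)) * (T Z : ℕ)) := by gcongr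
          _ = (ν / (ν + 1)) * ((Z : ℝ) ^ 4 / 2) := by
            simp only [T]; push_cast; field_simp
          _ ≤ 1 * ((Z : ℝ) ^ 4 / 2) := by
            gcongr
            rw [div_le_one (by positivity)]
            linarith
          _ < _ := by linarith
      exact_mod_cast h1)
  have hn₀Z : Z ≤ n₀ := by
    have : 1 * (2 * Z ^ 4) ≤ (v + 1) * (2 * Z ^ 4) := Nat.mul_le_mul_right _ (by omega)
    omega
  have hn₀T : ∀ k < C, ∀ s < R, ∀ l < w, n₀ + p k * s + l ≤ T Z := fun k hk s hs l hl => by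
    have := hbound n₀ (⟨k, hk⟩, ⟨s, hs⟩, ⟨l, hl⟩) hn2
    simpa [add_assoc] using this
  have hsm : ∀ k < C, ∀ s < R, ∀ l < w, SmallAt (a (n₀ + p k * s + l)) ((Z : ℝ) ^ 5) := by
    intro k hk s hs l hl
    have h1 := hn3 (⟨k, hk⟩, ⟨s, hs⟩, ⟨l, hl⟩)
    simp only [Set.mem_ofPred_eq, not_not, ← add_assoc] at h1
    exact h1.mono (by exact_mod_cast (hn₀T k hk s hs l hl).trans hZ5)
  -- a relation for each prime that is prime to the leading coefficients
  have hrel : ∀ k < C, ¬ (p k : ℤ) ∣ blockProd P O n₀ → ∃ d : Fin R → K, d ≠ 0 ∧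
      ∀ n, n₀ ≤ n → n ≤ n₀ + (Z ^ 4 - 1) →
        ∑ m : Fin R, d m * (((F.eval ((n + p k * m : ℕ) : ℤ) : ℤ) : K) * a (n + p k * m)) = 0 := by
    intro k hk hndvd
    have hRpos : 0 < R := by rw [hR, hK₀, hB]; positivity
    obtain ⟨d, hd0, hd⟩ := exists_row_relation
      (fun (s : Fin R) (i : Fin O) => ((F.eval ((n₀ + p k * s + i : ℕ) : ℤ) : ℤ) : K) *
        a (n₀ + p k * s + i)) (fun i => by
        subst hF
        exact hrec.minor_eq_zero hR'0 (by omega) hR hOB.le he hN (by omega) (hp k) (hpZ k)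
          (by rw [← hw]; exact hsm k hk)
          (fun s hs l hl => hZ₁ Z (by omega) _ ((hn₀T k hk s hs l (by omega)).trans hZ5))
          hndvd i)
    refine ⟨d, hd0, hg ⟨k, hk⟩ d n₀ (n₀ + (Z ^ 4 - 1)) (by omega) ?_ ?_⟩
    · intro n h1 h2 h0
      have h3 : (v + 2) * (2 * Z ^ 4) = (v + 1) * (2 * Z ^ 4) + Z ^ 4 + Z ^ 4 := by ring
      refine hvfree n (by omega) (by omega) ?_
      rw [Polynomial.eval_prod]
      exact Finset.prod_eq_zero (Finset.mem_univ ⟨k, hk⟩) h0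
    · intro i hi
      rw [← hd ⟨i, by omega⟩]
      refine Finset.sum_congr rfl fun m _ => ?_
      rw [show n₀ + i + p k * (m : ℕ) = n₀ + p k * m + i by ring]
  obtain ⟨k, hk, l, hl, hkl, hkd, hld⟩ := exists_two_coprime (e := eD) (by omega) p hp
    hpmono.injective hpZ (hN₂ n₀ (by omega)) (hZ₂ Z (by omega) n₀ (by
      refine le_trans ?_ hZ5
      have h4 : (v + 1) * (2 * Z ^ 4) ≤ (E' + 1) * (2 * Z ^ 4) :=
        Nat.mul_le_mul_right _ (by omega)
      simp only [T]
      linarith))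
  rw [← hC] at hk hl
  obtain ⟨d, hd0, hd⟩ := hrel k hk hkd
  obtain ⟨d', hd'0, hd'⟩ := hrel l hl hld
  obtain ⟨c, hc0, hc⟩ := relation_of_two (B := B₂)
    (b := fun n => ((F.eval (n : ℤ) : ℤ) : K) * a n)
    ((Nat.coprime_primes (hp k) (hp l)).2 (hpmono.injective.ne hkl)) hd0 hd'0 hd hd' (by
      have h1 : p k * p l ≤ (2 ^ C * Z) * (2 ^ C * Z) := Nat.mul_le_mul (hpC k hk) (hpC l hl)
      have h2 : (2 ^ C * Z) * (2 ^ C * Z) = C₄ * Z ^ 2 := by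
        rw [hC₄, show (4 : ℕ) = 2 * 2 by norm_num, mul_pow]; ring
      have h3 : 1 ≤ Z ^ 2 := Nat.one_le_pow _ _ (by omega)
      have h4 : (C₄ + R ^ 2 + B₂ + 1) * Z ^ 2 ≤ Z ^ 4 := by
        calc _ ≤ Z * Z ^ 2 := Nat.mul_le_mul_right _ (by omega)
          _ = Z ^ 3 := by ring
          _ ≤ Z ^ 4 := Nat.pow_le_pow_right (by omega) (by omega)
      have h5 : p k * p l + R ^ 2 + B₂ + 1 ≤ Z ^ 4 := by
        have h6 : (R ^ 2 + B₂ + 1) * 1 ≤ (R ^ 2 + B₂ + 1) * Z ^ 2 := Nat.mul_le_mul_left _ h3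
        linarith
      omega)
  refine ⟨F, hF ▸ winPoly_ne_zero hP R', R ^ 2 + 1, n₀ + p k * p l, c, hc0, fun n hn => ?_⟩
  exact hg₂ c (n₀ + p k * p l) n (by omega) (fun m hm _ => hN₄ m (by omega))
    (fun i hi => hc i (by omega)) n hn le_rfl

end CFinite

/-! ### Heights and density -/

section Height

open NumberField

variable {K : Type*} [Field K] [NumberField K]

lemma mem_denIdeal {x : 𝓞 K} {α : K} :
    x ∈ denIdeal K α ↔ IsIntegral ℤ ((x : K) * α) := by
  rw [denIdeal, Submodule.mem_colon]
  constructor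
  · intro h
    obtain ⟨y, hy⟩ := Submodule.mem_one.1 (h α (Submodule.mem_span_singleton_self α))
    have : (x : K) * α = y := by rw [← Algebra.smul_def] at *; exact hy.symm
    rw [this]
    exact RingOfIntegers.isIntegral_coe y
  · intro h p hp
    obtain ⟨t, rfl⟩ := Submodule.mem_span_singleton.1 hp
    obtain ⟨w, hw⟩ := (IsIntegralClosure.isIntegral_iff (A := 𝓞 K)).1 h
    refine Submodule.mem_one.2 ⟨t * w, ?_⟩
    rw [map_mul, hw, Algebra.smul_def, Algebra.smul_def]
    ring

lemma denIdeal_ne_bot (α : K) : denIdeal K α ≠ ⊥ := by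
  obtain ⟨y, hy, h⟩ := ((IsFractionRing.isAlgebraic_iff ℤ ℚ K).2
    (Algebra.IsAlgebraic.isAlgebraic α)).exists_integral_multiple
  intro hb
  have : (y : 𝓞 K) ∈ denIdeal K α := by
    rw [mem_denIdeal]
    simpa [Algebra.smul_def] using h
  rw [hb, Ideal.mem_bot] at this
  exact hy (by exact_mod_cast this)

/-- A height bound turns into a bound on the denominator and on every conjugate. -/
lemma smallAt_of_weilHeight_le {x : K} {n : ℕ} (hn : 1 ≤ n) {C : ℝ}
    (h : weilHeight K x ≤ (1 / (Module.finrank ℚ K : ℝ)) * Real.log n - C) :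
    SmallAt x (Real.exp (-(Module.finrank ℚ K * C)) * n) := by
  classical
  obtain ⟨d, hd⟩ : ∃ d : ℝ, d = (Module.finrank ℚ K : ℝ) := ⟨_, rfl⟩
  rw [← hd] at h ⊢
  have hd0 : 0 < d := by
    rw [hd]; exact_mod_cast Module.finrank_pos
  have hn0 : (0 : ℝ) < n := by exact_mod_cast hn
  set y := Ideal.absNorm (denIdeal K x) with hy
  have hy0 : 0 < y := Nat.pos_of_ne_zero (by
    rw [hy, Ne, Ideal.absNorm_eq_zero_iff]; exact denIdeal_ne_bot x)
  have hy1 : (1 : ℝ) ≤ y := by exact_mod_cast hy0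
  set p : ℝ := ∏ σ : K →+* ℂ, max 1 ‖σ x‖ with hp
  have hp1 : 1 ≤ p := Finset.one_le_prod fun σ _ => le_max_left _ _
  have hmain : (y : ℝ) * p ≤ Real.exp (-(d * C)) * n := by
    rw [weilHeight, ← hd, div_le_iff₀ hd0, ← Real.log_prod (fun σ _ => by positivity),
      ← Real.log_mul (by positivity) (by positivity)] at h
    have h2 : Real.log (y * p) ≤ Real.log (Real.exp (-(d * C)) * n) := by
      rw [Real.log_mul (Real.exp_pos _).ne' hn0.ne', Real.log_exp]
      refine h.trans (le_of_eq ?_)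
      field_simp
      ring
    exact (Real.log_le_log_iff (by positivity) (by positivity)).1 h2
  refine ⟨y, hy0, le_trans (le_mul_of_one_le_right (by positivity) hp1) hmain, ?_, fun σ => ?_⟩
  · have := Ideal.absNorm_mem (denIdeal K x)
    rw [mem_denIdeal] at this
    simpa using this
  · refine le_trans ?_ ((le_mul_of_one_le_left (by positivity) hy1).trans hmain)
    refine (le_max_right 1 _).trans ?_
    rw [hp, ← Finset.mul_prod_erase _ _ (Finset.mem_univ σ)]
    exact le_mul_of_one_le_right (by positivity) (Finset.one_le_prod fun σ _ => le_max_left _ _)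

lemma eventually_ncard_le {S : Set ℕ} (h : ¬ HasPosUpperDensity S) {ε : ℝ} (hε : 0 < ε) :
    ∀ᶠ N : ℕ in atTop, ((S ∩ Set.Icc 1 N).ncard : ℝ) ≤ ε * N := by
  have h1 : upperDensity S < ε := lt_of_le_of_lt (not_lt.1 h) hε
  have hb : IsBoundedUnder (· ≤ ·) atTop
      (fun n : ℕ => ((S ∩ Set.Icc 1 n).ncard : ℝ) / n) := by
    refine isBoundedUnder_of ⟨1, fun n => ?_⟩
    refine div_le_one_of_le₀ ?_ (by positivity)
    have : (S ∩ Set.Icc 1 n).ncard ≤ (Set.Icc 1 n).ncard :=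
      Set.ncard_le_ncard Set.inter_subset_right (Set.finite_Icc 1 n)
    rw [← Finset.coe_Icc, Set.ncard_coe_finset, Nat.card_Icc] at this
    exact_mod_cast this
  filter_upwards [Filter.eventually_lt_of_limsup_lt h1 hb, eventually_gt_atTop 0] with n hn hn0
  exact ((div_lt_iff₀ (by exact_mod_cast hn0)).1 hn).le

/-- If the height bound fails to hold with positive upper density for every constant, then for
every `c > 0` almost all `a n` are small at scale `c n`. -/
lemma eventually_ncard_not_smallAt {a : ℕ → K}
    (h : ∀ C : ℝ, ¬ HasPosUpperDensity
      {n : ℕ | (1 / (Module.finrank ℚ K : ℝ)) * Real.log n - C < weilHeight K (a n)})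
    {c : ℝ} (hc : 0 < c) {ε : ℝ} (hε : 0 < ε) :
    ∀ᶠ N : ℕ in atTop,
      (({n : ℕ | ¬ SmallAt (a n) (c * n)} ∩ Set.Icc 1 N).ncard : ℝ) ≤ ε * N := by
  have hd0 : (Module.finrank ℚ K : ℝ) ≠ 0 := by
    exact_mod_cast (Module.finrank_pos (R := ℚ) (M := K)).ne'
  filter_upwards [eventually_ncard_le (h (-(Real.log c) / Module.finrank ℚ K)) hε] with N hN
  refine le_trans ?_ hN
  rw [Nat.cast_le]
  refine Set.ncard_le_ncard ?_ ((Set.finite_Icc 1 N).inter_of_right _)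
  rintro n ⟨h1, h2⟩
  refine ⟨?_, h2⟩
  by_contra h3
  refine h1 ?_
  have := smallAt_of_weilHeight_le h2.1 (not_lt.1 h3)
  rwa [mul_div_cancel₀ _ hd0, neg_neg, Real.exp_log hc] at this

end Height

/-! ### From the differential equation to a recurrence -/

section Recurrence

open NumberField

variable {K : Type*} [Field K]

lemma coeff_psDeriv_iterate (f : PowerSeries K) (s k : ℕ) :
    PowerSeries.coeff k (psDeriv^[s] f) =
      ((k + 1).ascFactorial s : K) * PowerSeries.coeff (k + s) f :=
  PowerSeries.coeff_iterate_derivative f s k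

/-- A finite family of shifted terms with polynomial coefficients can be collected according to
the shift. -/
lemma exists_collect {ι : Type*} (T : Finset ι) (e : ι → ℕ) (c : ι → K[X]) (a : ℕ → K) (J : ℕ)
    (hJ : ∀ t ∈ T, e t ≤ J)
    (h : ∀ n : ℕ, ∑ t ∈ T, (c t).eval (n : K) * a (n + e t) = 0) (n : ℕ) :
    ∑ j ∈ Finset.range (J + 1), (∑ t ∈ T with e t = j, c t).eval (n : K) * a (n + j) = 0 := by
  rw [← h n, ← Finset.sum_fiberwise_of_maps_to (t := Finset.range (J + 1)) (g := e)
    (fun t ht => Finset.mem_range.2 (Nat.lt_succ_of_le (hJ t ht)))]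
  refine Finset.sum_congr rfl fun j _ => ?_
  rw [Polynomial.eval_finsetSum, Finset.sum_mul]
  refine Finset.sum_congr rfl fun t ht => ?_
  rw [(Finset.mem_filter.1 ht).2]

/-- The differential equation, read on the coefficient of `z ^ (n + D)`. -/
lemma ode_coeff {a : ℕ → K} {p D : ℕ} {A : Fin (p + 1) → K[X]}
    (hD : ∀ i, (A i).natDegree ≤ D)
    (h : ∑ i : Fin (p + 1), (A i : PowerSeries K) * (psDeriv^[p - i.val] (PowerSeries.mk a)) = 0)
    (n : ℕ) :
    ∑ t ∈ (Finset.univ : Finset (Fin (p + 1))) ×ˢ Finset.range (D + 1),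
      (Polynomial.C ((A t.1).coeff t.2) * (ascPochhammer K (p - t.1.val)).comp
        (Polynomial.X + Polynomial.C ((D - t.2 + 1 : ℕ) : K))).eval (n : K) *
        a (n + (D - t.2 + (p - t.1.val))) = 0 := by
  have h1 := congrArg (PowerSeries.coeff (n + D)) h
  rw [map_sum, map_zero] at h1
  rw [Finset.sum_product, ← h1]
  refine Finset.sum_congr rfl fun i _ => ?_
  rw [PowerSeries.coeff_mul, Finset.Nat.sum_antidiagonal_eq_sum_range_succ_mk]
  rw [← Finset.sum_subset (Finset.range_mono (show D + 1 ≤ n + D + 1 by omega))]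
  · refine Finset.sum_congr rfl fun k hk => ?_
    have hk : k ≤ D := Nat.lt_succ_iff.1 (Finset.mem_range.1 hk)
    rw [Polynomial.coeff_coe, coeff_psDeriv_iterate, PowerSeries.coeff_mk]
    simp only [Polynomial.eval_mul, Polynomial.eval_C, Polynomial.eval_comp, Polynomial.eval_add,
      Polynomial.eval_X]
    rw [show (n : K) + ((D - k + 1 : ℕ) : K) = ((n + D - k + 1 : ℕ) : K) by
      rw [← Nat.cast_add]; congr 1; omega, ascPochhammer_nat_eq_natCast_ascFactorial,
      show n + (D - k + (p - i.val)) = n + D - k + (p - i.val) by omega, mul_assoc]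
  · intro k _ hk
    have : D < k := by simpa using hk
    rw [Polynomial.coeff_coe, Polynomial.coeff_eq_zero_of_natDegree_lt
      (lt_of_le_of_lt (hD i) this), zero_mul]

/-- The coefficients of a D-finite series satisfy a linear recurrence with polynomial
coefficients. -/
lemma IsDFinite.exists_rec [CharZero K] {a : ℕ → K} (h : IsDFinite (PowerSeries.mk a)) :
    ∃ (r : ℕ) (S : ℕ → K[X]), S r ≠ 0 ∧
      ∀ n : ℕ, (S r).eval (n : K) * a (n + r) +
        ∑ j ∈ Finset.range r, (S j).eval (n : K) * a (n + j) = 0 := by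
  classical
  obtain ⟨p, A, hA, h⟩ := h
  obtain ⟨D, hD⟩ : ∃ D, ∀ i, (A i).natDegree ≤ D :=
    ⟨Finset.univ.sup fun i => (A i).natDegree, fun i =>
      Finset.le_sup (f := fun i => (A i).natDegree) (Finset.mem_univ i)⟩
  have h1 := ode_coeff hD h
  set T := (Finset.univ : Finset (Fin (p + 1))) ×ˢ Finset.range (D + 1) with hT
  set c : Fin (p + 1) × ℕ → K[X] := fun t =>
    Polynomial.C ((A t.1).coeff t.2) * (ascPochhammer K (p - t.1.val)).comp
        (Polynomial.X + Polynomial.C ((D - t.2 + 1 : ℕ) : K)) with hc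
  set e : Fin (p + 1) × ℕ → ℕ := fun t => D - t.2 + (p - t.1.val) with he
  set S : ℕ → K[X] := fun j => ∑ t ∈ T with e t = j, c t with hS
  have h2 : ∀ n : ℕ, ∑ j ∈ Finset.range (D + p + 1), (S j).eval (n : K) * a (n + j) = 0 :=
    exists_collect T e c a (D + p) (fun t _ => by simp only [he]; omega) h1
  -- The coefficient of `x ^ p` in the right fibre sum is a coefficient of `A 0`.
  have h3 : ∃ j < D + p + 1, S j ≠ 0 := by
    obtain ⟨k, hk⟩ : ∃ k, (A 0).coeff k ≠ 0 := by
      by_contra! hcon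
      exact hA (Polynomial.ext hcon)
    have hkD : k ≤ D := (Polynomial.le_natDegree_of_ne_zero hk).trans (hD 0)
    refine ⟨D - k + p, by omega, fun h0 => hk ?_⟩
    have h4 := congrArg (Polynomial.coeff · p) h0
    simp only [hS, Polynomial.finsetSum_coeff, Polynomial.coeff_zero] at h4
    have hdeg : ∀ (i : Fin (p + 1)) (k : ℕ), ((ascPochhammer K (p - i.val)).comp
        (Polynomial.X + Polynomial.C ((D - k + 1 : ℕ) : K))).natDegree = p - i.val := by
      intro i k
      rw [Polynomial.natDegree_comp, ascPochhammer_natDegree, Polynomial.natDegree_X_add_C,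
        mul_one]
    rw [Finset.sum_eq_single ((0 : Fin (p + 1)), k)] at h4
    · have hm : ((ascPochhammer K p).comp
          (Polynomial.X + Polynomial.C ((D - k + 1 : ℕ) : K))).coeff p = 1 := by
        have := (monic_ascPochhammer K p).comp_X_add_C ((D - k + 1 : ℕ) : K)
        have h5 := this.coeff_natDegree
        have h6 := hdeg 0 k
        simp only [Fin.val_zero, Nat.sub_zero] at h6
        rwa [h6] at h5
      rw [hc, Polynomial.coeff_C_mul] at h4
      simp only [Fin.val_zero, Nat.sub_zero] at h4
      rwa [hm, mul_one] at h4
    · rintro ⟨i, l⟩ ht hne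
      rw [hc, Polynomial.coeff_C_mul]
      obtain ⟨ht1, ht2⟩ := Finset.mem_filter.1 ht
      have hl : l < D + 1 := Finset.mem_range.1 (Finset.mem_product.1 ht1).2
      simp only [he] at ht2
      by_cases hi : i = 0
      · subst hi
        exfalso
        simp only [Fin.val_zero, Nat.sub_zero] at ht2
        exact hne (by rw [show l = k by omega])
      · have hi' : 0 < i.val := Nat.pos_of_ne_zero fun h => hi (Fin.ext h)
        refine mul_eq_zero_of_right _ (Polynomial.coeff_eq_zero_of_natDegree_lt ?_)
        rw [hdeg]
        have := i.isLt
        simp only at this ⊢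
        omega
    · intro hn
      exfalso
      refine hn (Finset.mem_filter.2 ⟨Finset.mem_product.2
        ⟨Finset.mem_univ _, Finset.mem_range.2 (Nat.lt_succ_of_le hkD)⟩, by simp [he]⟩)
  obtain ⟨j, hj, hj0⟩ := h3
  have hex : ∃ j ≤ D + p, S j ≠ 0 := ⟨j, by omega, hj0⟩
  set r := Nat.findGreatest (fun j => S j ≠ 0) (D + p) with hr
  have hr0 : S r ≠ 0 := Nat.findGreatest_spec (P := fun j => S j ≠ 0) (by omega) hj0
  refine ⟨r, S, hr0, fun n => ?_⟩
  have hrl : r ≤ D + p := Nat.findGreatest_le _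
  rw [add_comm, ← Finset.sum_range_succ (fun j => (S j).eval (n : K) * a (n + j)), ← h2 n]
  refine Finset.sum_subset (Finset.range_mono (by omega)) fun i hi hi' => ?_
  rw [Finset.mem_range] at hi hi'
  have := Nat.findGreatest_is_greatest (P := fun j => S j ≠ 0) (k := i) (n := D + p)
    (by rw [← hr]; omega) (by omega)
  rw [not_not.1 this, Polynomial.eval_zero, zero_mul]

/-- The recurrence can be normalized: integer leading coefficient, integral other coefficients. -/
lemma IsDFinite.exists_recRel [NumberField K] {a : ℕ → K} (h : IsDFinite (PowerSeries.mk a)) :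
    ∃ (r : ℕ) (P : ℤ[X]) (Q : Fin r → (𝓞 K)[X]), 0 < r ∧ P ≠ 0 ∧ RecRel a P Q := by
  classical
  obtain ⟨r, S, hS, hrec⟩ := h.exists_rec
  have : Algebra.IsAlgebraic ℤ K := ⟨fun x => (IsFractionRing.isAlgebraic_iff ℤ ℚ K).2
    (Algebra.IsAlgebraic.isAlgebraic x)⟩
  obtain ⟨P, hP, W, hW⟩ := Polynomial.exists_dvd_map_of_isAlgebraic (R := ℤ) hS
  obtain ⟨y, hy, hyint⟩ := Algebra.IsAlgebraic.exists_integral_multiples ℤ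
    ((Finset.range r).biUnion fun j => (W * S j).coeffs)
  have hlift : ∀ j < r, ∃ Q : (𝓞 K)[X],
      Q.map (algebraMap (𝓞 K) K) = Polynomial.C (-(y : K)) * (W * S j) := by
    intro j hj
    have : Polynomial.C (-(y : K)) * (W * S j) ∈ Polynomial.lifts (algebraMap (𝓞 K) K) := by
      rw [Polynomial.lifts_iff_coeff_lifts]
      intro n
      rw [Polynomial.coeff_C_mul]
      have hint : IsIntegral ℤ (-(y : K) * (W * S j).coeff n) := by
        by_cases h0 : (W * S j).coeff n = 0
        · rw [h0, mul_zero]; exact isIntegral_zero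
        · have := hyint _ (Finset.mem_biUnion.2 ⟨j, Finset.mem_range.2 hj,
            Polynomial.coeff_mem_coeffs h0⟩)
          rw [neg_mul]
          refine IsIntegral.neg ?_
          simpa [Algebra.smul_def] using this
      obtain ⟨w, hw⟩ := (IsIntegralClosure.isIntegral_iff (A := 𝓞 K)).1 hint
      exact ⟨w, hw⟩
    obtain ⟨Q, hQ⟩ := (Polynomial.mem_lifts _).1 this
    exact ⟨Q, hQ⟩
  choose! Q hQ using hlift
  have hP' : Polynomial.C y * P ≠ 0 := mul_ne_zero (by simpa using hy) hP
  have key : ∀ n : ℕ, (((Polynomial.C y * P).eval (n : ℤ) : ℤ) : K) * a (n + r) =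
      ∑ j ∈ Finset.range r, algebraMap (𝓞 K) K ((Q j).eval (n : 𝓞 K)) * a (n + j) := by
    intro n
    have h1 : ((P.eval (n : ℤ) : ℤ) : K) = (S r).eval (n : K) * W.eval (n : K) := by
      rw [← Polynomial.eval_mul, ← hW]
      simp
    have h2 : ∀ j ∈ Finset.range r, algebraMap (𝓞 K) K ((Q j).eval (n : 𝓞 K)) * a (n + j) =
        (-(y : K) * W.eval (n : K)) * ((S j).eval (n : K) * a (n + j)) := by
      intro j hj
      have h3 : algebraMap (𝓞 K) K ((Q j).eval (n : 𝓞 K)) =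
          ((Q j).map (algebraMap (𝓞 K) K)).eval (n : K) := by
        rw [← map_natCast (algebraMap (𝓞 K) K) n, Polynomial.eval_map_apply]
      rw [h3, hQ j (Finset.mem_range.1 hj)]
      simp only [Polynomial.eval_mul, Polynomial.eval_C]
      ring
    rw [Finset.sum_congr rfl h2, ← Finset.mul_sum, Polynomial.eval_mul, Polynomial.eval_C,
      Int.cast_mul, h1]
    linear_combination (y : K) * W.eval (n : K) * hrec n
  rcases Nat.eq_zero_or_pos r with hr | hr
  · subst hr
    refine ⟨1, (Polynomial.C y * P).comp (Polynomial.X + 1), fun _ => 0, one_pos, ?_, fun n => ?_⟩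
    · intro h0
      rcases (Polynomial.comp_eq_zero_iff).1 h0 with h | ⟨-, h⟩
      · exact hP' h
      · have := congrArg (Polynomial.coeff · 1) h
        simp [Polynomial.coeff_X, Polynomial.coeff_one] at this
    · have := key (n + 1)
      simp only [Finset.range_zero, Finset.sum_empty, add_zero] at this
      rw [Polynomial.eval_comp]
      simpa using this
  · refine ⟨r, Polynomial.C y * P, fun j => Q j, hr, hP', fun n => ?_⟩
    rw [key n, Finset.sum_range]

end Recurrence

/-! ### Heights along a sequence and characteristic roots -/

section Roots

open NumberField Height

variable {L : Type*} [Field L] [NumberField L]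

lemma logHeight₁_le_of_isIntegral {x : L} (hx : IsIntegral ℤ x) {B : ℝ} (hB : 1 ≤ B)
    (h : ∀ σ : L →+* ℂ, ‖σ x‖ ≤ B) : logHeight₁ x ≤ Module.finrank ℚ L * Real.log B := by
  rw [NumberField.logHeight₁_eq]
  have h1 : ∑ᶠ v : FinitePlace L, Real.posLog (v x) = 0 := by
    refine finsum_eq_zero_of_forall_eq_zero fun v => ?_
    rw [Real.posLog_eq_zero_iff, abs_of_nonneg (apply_nonneg v x)]
    obtain ⟨w, hw⟩ := (IsIntegralClosure.isIntegral_iff (A := 𝓞 L)).1 hx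
    rw [← hw, ← FinitePlace.norm_embedding_eq v]
    exact FinitePlace.norm_le_one L v.maximalIdeal w
  rw [h1, add_zero, ← InfinitePlace.sum_mult_eq, Nat.cast_sum, Finset.sum_mul]
  refine Finset.sum_le_sum fun v _ => mul_le_mul_of_nonneg_left ?_ (by positivity)
  have h2 : v x ≤ B := by
    rw [← InfinitePlace.norm_embedding_eq v x]
    exact h v.embedding
  rw [← Real.posLog_eq_log (by rwa [abs_of_nonneg (by linarith)])]
  exact Real.posLog_le_posLog (apply_nonneg v x) h2

lemma logHeight₁_le_of_smallAt {K : Type*} [Field K] [NumberField K] [Algebra K L] {x : K} {B : ℝ}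
    (hB : 1 ≤ B) (h : SmallAt x B) :
    logHeight₁ (algebraMap K L x) ≤ 3 * Module.finrank ℚ L * Real.log B := by
  obtain ⟨y, hy, hyB, hint, hσ⟩ := h
  have hy0 : (y : L) ≠ 0 := by exact_mod_cast hy.ne'
  have h1 : logHeight₁ ((y : L) * algebraMap K L x) ≤
      Module.finrank ℚ L * Real.log (B * B) := by
    refine logHeight₁_le_of_isIntegral ?_ (by nlinarith) fun σ => ?_
    · have := hint.map (algebraMap K L).toIntAlgHom
      simpa using this
    · rw [map_mul, norm_mul, map_natCast, Complex.norm_natCast]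
      exact mul_le_mul hyB (hσ (σ.comp (algebraMap K L))) (norm_nonneg _) (by linarith)
  have h2 : logHeight₁ (y : L) ≤ Module.finrank ℚ L * Real.log B := by
    refine logHeight₁_le_of_isIntegral ?_ hB fun σ => ?_
    · simpa using isIntegral_algebraMap (R := ℤ) (A := L) (x := (y : ℤ))
    · rwa [map_natCast, Complex.norm_natCast]
  have h3 : algebraMap K L x = ((y : L) * algebraMap K L x) * (y : L)⁻¹ := by
    field_simp
  rw [h3]
  refine (logHeight₁_mul_le _ _).trans ?_
  rw [logHeight₁_inv]
  rw [Real.log_mul (by linarith) (by linarith)] at h1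
  linarith

/-- A polynomial bound without a multiplicative constant, which is absorbed in the exponent. -/
lemma exists_abs_eval_le (F : ℤ[X]) :
    ∃ E : ℕ, ∀ n : ℕ, 1 ≤ n → |F.eval (n : ℤ)| ≤ ((n : ℤ) + 1) ^ E := by
  induction F using Polynomial.induction_on' with
  | add p q hp hq =>
    obtain ⟨E, hE⟩ := hp
    obtain ⟨E', hE'⟩ := hq
    refine ⟨E + E' + 1, fun n hn => ?_⟩
    have h1 : (2 : ℤ) ≤ n + 1 := by exact_mod_cast Nat.succ_le_succ hn
    have h2 : ((n : ℤ) + 1) ^ E ≤ (n + 1) ^ (E + E') := pow_le_pow_right₀ (by linarith) (by omega)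
    have h3 : ((n : ℤ) + 1) ^ E' ≤ (n + 1) ^ (E + E') := pow_le_pow_right₀ (by linarith) (by omega)
    rw [Polynomial.eval_add, pow_succ]
    have h4 := abs_add_le (p.eval (n : ℤ)) (q.eval (n : ℤ))
    have h5 : (0 : ℤ) ≤ (n + 1) ^ (E + E') := by positivity
    nlinarith [hE n hn, hE' n hn]
  | monomial k c =>
    refine ⟨c.natAbs + k, fun n hn => ?_⟩
    rw [Polynomial.eval_monomial, abs_mul, pow_add, abs_of_nonneg (by positivity : (0:ℤ) ≤ n ^ k)]
    refine mul_le_mul ?_ (pow_le_pow_left₀ (by positivity) (by linarith) k) (by positivity)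
      (by positivity)
    have h1 : (c.natAbs : ℤ) < 2 ^ c.natAbs := by exact_mod_cast Nat.lt_two_pow_self
    have h2 : (2 : ℤ) ^ c.natAbs ≤ (n + 1) ^ c.natAbs :=
      pow_le_pow_left₀ (by norm_num) (by exact_mod_cast Nat.succ_le_succ hn) _
    rw [Int.abs_eq_natAbs]
    linarith

/-- At good indices `F(n) a(n)` has height `O(log n)`. -/
lemma exists_logHeight₁_le {K : Type*} [Field K] [NumberField K] [Algebra K L] (a : ℕ → K)
    (F : ℤ[X]) : ∃ C : ℝ, 0 ≤ C ∧ ∀ n : ℕ, 1 ≤ n → SmallAt (a n) n →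
      logHeight₁ (algebraMap K L (((F.eval (n : ℤ) : ℤ) : K) * a n)) ≤ C * Real.log (n + 1) := by
  obtain ⟨E, hE⟩ := exists_abs_eval_le F
  refine ⟨Module.finrank ℚ L * E + 3 * Module.finrank ℚ L, by positivity, fun n hn hs => ?_⟩
  have hn' : (1 : ℝ) ≤ n := by exact_mod_cast hn
  have h1 : logHeight₁ ((F.eval (n : ℤ) : ℤ) : L) ≤
      Module.finrank ℚ L * Real.log (((n : ℝ) + 1) ^ E) := by
    refine logHeight₁_le_of_isIntegral ?_ (one_le_pow₀ (by linarith)) fun σ => ?_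
    · simpa using isIntegral_algebraMap (R := ℤ) (A := L) (x := F.eval (n : ℤ))
    · rw [map_intCast, Complex.norm_intCast]
      exact_mod_cast hE n hn
  have h2 := logHeight₁_le_of_smallAt (L := L) (B := (n : ℝ) + 1) (by linarith)
    (hs.mono (by linarith))
  rw [map_mul, map_intCast]
  refine (logHeight₁_mul_le _ _).trans ?_
  rw [Real.log_pow] at h1
  nlinarith

/-- Arbitrarily late windows of any fixed length avoid a set of density zero. -/
lemma frequently_window {S : Set ℕ}
    (hS : ∀ ε : ℝ, 0 < ε → ∀ᶠ N : ℕ in atTop, ((S ∩ Set.Icc 1 N).ncard : ℝ) ≤ ε * N) (w : ℕ) :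
    ∃ᶠ n : ℕ in atTop, ∀ k < w, n + k ∉ S := by
  rw [frequently_atTop]
  intro A
  obtain ⟨N₀, hN₀⟩ := eventually_atTop.1 (hS (1 / (2 * (w + 1))) (by positivity))
  obtain ⟨n, h1, -, h2⟩ := exists_avoid (S := S) (fun x : Fin w => (x : ℕ)) (A := A + 1)
    (L := A + 1 + w + N₀) (T := 2 * (A + 1 + w + N₀)) (by omega) (fun n x hn => by
      have := x.isLt
      omega) (by
      have h := hN₀ (2 * (A + 1 + w + N₀)) (by omega)
      rw [Fintype.card_fin]
      have h3 : ((w * (S ∩ Set.Icc 1 (2 * (A + 1 + w + N₀))).ncard : ℕ) : ℝ) <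
          ((A + 1 + w + N₀ : ℕ) : ℝ) := by
        push_cast at h ⊢
        have hw : (0 : ℝ) ≤ w := by positivity
        have hX : (0 : ℝ) < A + 1 + w + N₀ := by positivity
        calc (w : ℝ) * _ ≤ w * (1 / (2 * (w + 1)) * (2 * (A + 1 + w + N₀))) :=
              mul_le_mul_of_nonneg_left h hw
          _ = (w / (w + 1)) * (A + 1 + w + N₀) := by field_simp
          _ < 1 * (A + 1 + w + N₀) := by
              refine mul_lt_mul_of_pos_right ?_ hX
              rw [div_lt_one (by positivity)]
              linarith
          _ = _ := one_mul _
      exact_mod_cast h3)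
  exact ⟨n, by omega, fun k hk => h2 ⟨k, hk⟩⟩

/-- Kronecker's theorem: the powers of an element of height zero have height zero, so by
Northcott's theorem there are finitely many of them. -/
lemma exists_pow_eq_one_of_logHeight₁_eq_zero {α : L} (hα : α ≠ 0) (h : logHeight₁ α = 0) :
    ∃ e : ℕ, 0 < e ∧ α ^ e = 1 := by
  have hfin : (Set.range fun n : ℕ => α ^ n).Finite := by
    refine (finite_setOfPred_logHeight₁_le L 0).subset ?_
    rintro _ ⟨n, rfl⟩
    rw [Set.mem_ofPred_eq, logHeight₁_pow, h, mul_zero]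
  have hinj : ¬ Function.Injective fun n : ℕ => α ^ n := fun hi =>
    Set.infinite_range_of_injective hi hfin
  have hlt : ∀ i j : ℕ, i < j → α ^ i = α ^ j → ∃ e : ℕ, 0 < e ∧ α ^ e = 1 := by
    intro i j hij he
    refine ⟨j - i, by omega, mul_left_cancel₀ (pow_ne_zero i hα) ?_⟩
    rw [← pow_add, mul_one, he]
    congr 1
    omega
  simp only [Function.Injective, not_forall] at hinj
  obtain ⟨i, j, he, hij⟩ := hinj
  rcases lt_or_gt_of_ne hij with h1 | h1
  · exact hlt i j h1 he
  · exact hlt j i h1 he.symm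

/-- A geometric progression which is a fixed linear combination of shifts of a sequence whose
terms have logarithmic height on arbitrarily late windows has a ratio of height zero: the height of `α ^ n` is `n h(α)`. -/
lemma logHeight₁_eq_zero_of_geom {b : ℕ → L} {C : ℝ} (hC : 0 ≤ C)
    (hb : ∀ w : ℕ, ∃ᶠ n : ℕ in atTop, ∀ k < w, logHeight₁ (b (n + k)) ≤ C * Real.log (n + k + 1))
    {α g : L} (hg : g ≠ 0) {M w : ℕ} (c : ℕ → L)
    (h : ∀ n ≥ M, ∑ k ∈ Finset.range w, c k * b (n + k) = α ^ (n - M) * g) :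
    logHeight₁ α = 0 := by
  by_contra hne
  have hpos : 0 < logHeight₁ α := lt_of_le_of_ne (zero_le_logHeight₁ _) (Ne.symm hne)
  set C₁ : ℝ := totalWeight L * Real.log w + ∑ k ∈ Finset.range w, logHeight₁ (c k) +
    logHeight₁ g + M * logHeight₁ α with hC₁
  have hlim : Tendsto (fun n : ℕ => (C₁ + w * C * Real.log ((n : ℝ) + (w + 1))) / ((n : ℝ) + (w + 1)))
      atTop (nhds 0) := by
    have h0 : Tendsto (fun n : ℕ => (n : ℝ) + (w + 1)) atTop atTop :=
      tendsto_atTop_add_const_right _ _ tendsto_natCast_atTop_atTop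
    have h1 : Tendsto (fun x : ℝ => Real.log x / x) atTop (nhds 0) := by
      simpa using Real.isLittleO_log_id_atTop.tendsto_div_nhds_zero
    have h2 := ((tendsto_inv_atTop_zero.comp h0).const_mul C₁).add
      ((h1.comp h0).const_mul (w * C))
    simp only [mul_zero, add_zero] at h2
    refine h2.congr fun n => ?_
    simp only [Function.comp]
    ring
  have hev := hlim.eventually_lt_const (show (0 : ℝ) < logHeight₁ α / 2 by linarith)
  obtain ⟨n, hn1, hn2, hn3⟩ := ((hb w).and_eventually
    (hev.and (eventually_ge_atTop (M + w + 1)))).exists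
  have hn0 : (0 : ℝ) < (n : ℝ) + (w + 1) := by positivity
  rw [div_lt_iff₀ hn0] at hn2
  have hnM : ((n - M : ℕ) : ℝ) = n - M := by rw [Nat.cast_sub (by omega)]
  have hup : (n - M : ℝ) * logHeight₁ α ≤
      totalWeight L * Real.log w + ∑ k ∈ Finset.range w, logHeight₁ (c k) +
        w * C * Real.log ((n : ℝ) + (w + 1)) + logHeight₁ g := by
    rw [← hnM, ← logHeight₁_pow]
    have e1 : α ^ (n - M) = (∑ k ∈ Finset.range w, c k * b (n + k)) * g⁻¹ := by
      rw [h n (by omega)]; field_simp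
    rw [e1]
    refine (logHeight₁_mul_le _ _).trans ?_
    rw [logHeight₁_inv]
    gcongr
    refine (logHeight₁_sum_le _ _).trans ?_
    rw [Finset.card_range, add_assoc]
    gcongr
    calc ∑ k ∈ Finset.range w, logHeight₁ (c k * b (n + k))
        ≤ ∑ k ∈ Finset.range w, (logHeight₁ (c k) + C * Real.log ((n : ℝ) + (w + 1))) := by
          refine Finset.sum_le_sum fun k hk => (logHeight₁_mul_le _ _).trans ?_
          gcongr
          have hk := Finset.mem_range.1 hk
          refine (hn1 k hk).trans ?_
          have : (k : ℝ) ≤ w := by exact_mod_cast hk.le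
          gcongr ?_ * Real.log ?_
          linarith
      _ = _ := by
          rw [Finset.sum_add_distrib, Finset.sum_const, Finset.card_range, nsmul_eq_mul]
          ring
  have hn3' : (M : ℝ) + w + 1 ≤ n := by exact_mod_cast hn3
  nlinarith

end Roots

/-! ### The shift operator and polynomials on residue classes -/

section Shift

variable {R : Type*} [CommRing R]

/-- The shift `(T b)(n) = b(n + 1)` on sequences. -/
def shiftEnd (R : Type*) [CommRing R] : Module.End R (ℕ → R) where
  toFun b n := b (n + 1)
  map_add' _ _ := rfl
  map_smul' _ _ := rfl

lemma shiftEnd_pow_apply (k : ℕ) (b : ℕ → R) (n : ℕ) : (shiftEnd R ^ k) b n = b (n + k) := by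
  induction k generalizing n with
  | zero => simp
  | succ k ih =>
    rw [pow_succ', Module.End.mul_apply]
    change (shiftEnd R ^ k) b (n + 1) = _
    rw [ih]
    congr 1
    omega

lemma aeval_shiftEnd_apply (p : R[X]) (b : ℕ → R) (n : ℕ) :
    (aeval (shiftEnd R) p) b n = ∑ k ∈ Finset.range (p.natDegree + 1), p.coeff k * b (n + k) := by
  rw [Polynomial.aeval_eq_sum_range, LinearMap.sum_apply, Finset.sum_apply]
  refine Finset.sum_congr rfl fun k _ => ?_
  rw [LinearMap.smul_apply, Pi.smul_apply, shiftEnd_pow_apply, smul_eq_mul]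

lemma aeval_shiftEnd_map {S : Type*} [CommRing S] (f : R →+* S) (p : R[X]) (b : ℕ → R) (n : ℕ) :
    (aeval (shiftEnd S) (p.map f)) (fun n => f (b n)) n = f ((aeval (shiftEnd R) p) b n) := by
  rw [aeval_shiftEnd_apply, aeval_shiftEnd_apply, map_sum,
    Finset.sum_subset (Finset.range_mono (Nat.succ_le_succ (Polynomial.natDegree_map_le (f := f))))]
  · simp
  · intro k _ hk
    rw [Polynomial.coeff_eq_zero_of_natDegree_lt (by simpa using hk), zero_mul]

/-- The operator `p(T)` annihilates `b` at all large indices. -/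
def TailKilled (p : R[X]) (b : ℕ → R) : Prop :=
  ∃ M : ℕ, ∀ n ≥ M, (aeval (shiftEnd R) p) b n = 0

lemma TailKilled.of_dvd {p q : R[X]} {b : ℕ → R} (h : TailKilled p b) (hd : p ∣ q) :
    TailKilled q b := by
  obtain ⟨s, rfl⟩ := hd
  obtain ⟨M, hM⟩ := h
  refine ⟨M, fun n hn => ?_⟩
  rw [mul_comm, map_mul, Module.End.mul_apply, aeval_shiftEnd_apply]
  exact Finset.sum_eq_zero fun k _ => by rw [hM (n + k) (by omega), mul_zero]

/-- The difference operator along a progression with step `e` is `T ^ e - 1`. -/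
lemma fwdDiff_iter_progression (b : ℕ → R) (e c m : ℕ) (n : ℕ) :
    (fwdDiff (1 : ℕ))^[m] (fun n => b (c + e * n)) n =
      (aeval (shiftEnd R) (((Polynomial.X : R[X]) ^ e - 1) ^ m)) b (c + e * n) := by
  induction m generalizing b with
  | zero => simp
  | succ m ih =>
    rw [Function.iterate_succ_apply, pow_succ, map_mul, Module.End.mul_apply, ← ih]
    refine congrArg (fun v => (fwdDiff (1 : ℕ))^[m] v n) (funext fun n => ?_)
    rw [fwdDiff, map_sub, map_pow, map_one, Polynomial.aeval_X, LinearMap.sub_apply, Pi.sub_apply,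
      shiftEnd_pow_apply, Module.End.one_apply]
    congr 2
    ring

/-- A sequence killed by a power of `T ^ e - 1` is eventually polynomial along every residue class
modulo `e`: its iterated differences vanish from some order on, so Newton's formula applies. -/
lemma exists_poly_of_tailKilled {K : Type*} [Field K] [CharZero K] {b : ℕ → K} {e m : ℕ}
    (h : TailKilled ((Polynomial.X ^ e - 1 : K[X]) ^ m) b) :
    ∃ M : ℕ, ∀ c ≥ M, ∃ B : K[X], ∀ n : ℕ, b (c + e * n) = B.eval (n : K) := by
  obtain ⟨M, hM⟩ := h
  refine ⟨M, fun c hc => ?_⟩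
  set u : ℕ → K := fun n => b (c + e * n) with hu
  have hz : ∀ k ≥ m, (fwdDiff (1 : ℕ))^[k] u 0 = 0 := by
    intro k hk
    obtain ⟨j, rfl⟩ := Nat.exists_eq_add_of_le hk
    rw [hu, fwdDiff_iter_progression, add_comm, pow_add, map_mul, Module.End.mul_apply,
      aeval_shiftEnd_apply]
    exact Finset.sum_eq_zero fun k _ => by rw [hM _ (by omega), mul_zero]
  refine ⟨∑ k ∈ Finset.range m,
    Polynomial.C ((fwdDiff (1 : ℕ))^[k] u 0 / (k.factorial : K)) * descPochhammer K k, fun n => ?_⟩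
  have h1 := shift_eq_sum_fwdDiff_iter (h := 1) u n 0
  rw [zero_add, smul_eq_mul, mul_one] at h1
  change u n = _
  rw [h1, Polynomial.eval_finsetSum]
  have h2 : ∀ k, (n.choose k) • (fwdDiff (1 : ℕ))^[k] u 0 =
      (Polynomial.C ((fwdDiff (1 : ℕ))^[k] u 0 / (k.factorial : K)) * descPochhammer K k).eval
        (n : K) := by
    intro k
    rw [Polynomial.eval_mul, Polynomial.eval_C, descPochhammer_eval_eq_descFactorial,
      Nat.descFactorial_eq_factorial_mul_choose, nsmul_eq_mul]
    have : (k.factorial : K) ≠ 0 := by exact_mod_cast k.factorial_ne_zero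
    push_cast
    field_simp
  simp_rw [← h2]
  have h3 : ∀ s ≥ m, ∑ k ∈ Finset.range s, (n.choose k) • (fwdDiff (1 : ℕ))^[k] u 0 =
      ∑ k ∈ Finset.range m, (n.choose k) • (fwdDiff (1 : ℕ))^[k] u 0 := by
    intro s hs
    refine (Finset.sum_subset (Finset.range_mono hs) fun k _ hk => ?_).symm
    rw [hz k (by simpa using hk), smul_zero]
  rw [← h3 (n + 1 + m) (by omega)]
  refine Finset.sum_subset (Finset.range_mono (by omega)) fun k _ hk => ?_
  rw [Nat.choose_eq_zero_of_lt (by simpa using hk), zero_smul]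

lemma exists_prod_dvd {L : Type*} [Field L] (s : Multiset L)
    (h : ∀ α ∈ s, ∃ e : ℕ, 0 < e ∧ α ^ e = 1) :
    ∃ e : ℕ, 0 < e ∧ (s.map fun α => Polynomial.X - Polynomial.C α).prod ∣
      ((Polynomial.X : L[X]) ^ e - 1) ^ s.card := by
  induction s using Multiset.induction with
  | empty => exact ⟨1, one_pos, by simp⟩
  | cons α s ih =>
    obtain ⟨e, he, hd⟩ := ih fun β hβ => h β (Multiset.mem_cons_of_mem hβ)
    obtain ⟨e', he', h1⟩ := h α (Multiset.mem_cons_self α s)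
    refine ⟨e * e', Nat.mul_pos he he', ?_⟩
    rw [Multiset.map_cons, Multiset.prod_cons, Multiset.card_cons, pow_succ']
    refine mul_dvd_mul ?_ (hd.trans (pow_dvd_pow_of_dvd ?_ _))
    · rw [Polynomial.dvd_iff_isRoot]
      simp [Polynomial.IsRoot, mul_comm e e', pow_mul, h1]
    · rw [pow_mul]
      exact sub_one_dvd_pow_sub_one _ _

end Shift

section RootsOfUnity

open NumberField Height

/-- If a linear recurrence sequence has logarithmic height on arbitrarily late windows, then it is
annihilated by a power of some `T ^ e - 1`: in a product of fewest factors `T - α` annihilating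
its tail, removing one factor leaves a geometric progression, whose ratio has height zero. -/
lemma TailKilled.of_height {L : Type*} [Field L] [NumberField L] {b : ℕ → L} {C : ℝ} (hC : 0 ≤ C)
    (hb : ∀ w : ℕ, ∃ᶠ n : ℕ in atTop, ∀ k < w, logHeight₁ (b (n + k)) ≤ C * Real.log (n + k + 1))
    {χ : L[X]} (hχ : χ ≠ 0) (hs : χ.Splits) (h : TailKilled χ b) :
    ∃ e m : ℕ, 0 < e ∧ TailKilled ((Polynomial.X ^ e - 1) ^ m) b := by
  classical
  have hex : ∃ d : ℕ, ∃ s : Multiset L, s.card = d ∧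
      TailKilled (s.map fun α => Polynomial.X - Polynomial.C α).prod b := by
    refine ⟨_, χ.roots, rfl, h.of_dvd ?_⟩
    refine ⟨Polynomial.C χ.leadingCoeff⁻¹, ?_⟩
    have h1 : Polynomial.C χ.leadingCoeff * Polynomial.C χ.leadingCoeff⁻¹ = 1 := by
      rw [← Polynomial.C_mul, mul_inv_cancel₀ (Polynomial.leadingCoeff_ne_zero.2 hχ),
        Polynomial.C_1]
    linear_combination -(Polynomial.C χ.leadingCoeff⁻¹) * hs.eq_prod_roots -
      (χ.roots.map fun α => Polynomial.X - Polynomial.C α).prod * h1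
  obtain ⟨s, hcard, hkill⟩ := Nat.find_spec hex
  have hroot : ∀ α ∈ s, ∃ e : ℕ, 0 < e ∧ α ^ e = 1 := by
    intro α hα
    obtain ⟨t, rfl⟩ := Multiset.exists_cons_of_mem hα
    set ρ := (t.map fun α => Polynomial.X - Polynomial.C α).prod with hρ
    have hnot : ¬ TailKilled ρ b := fun hk =>
      Nat.find_min hex (m := t.card) (by rw [← hcard, Multiset.card_cons]; omega) ⟨t, rfl, hk⟩
    rw [Multiset.map_cons, Multiset.prod_cons, ← hρ] at hkill
    obtain ⟨M, hM⟩ := hkill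
    set γ := (aeval (shiftEnd L) ρ) b with hγ
    have hstep : ∀ n ≥ M, γ (n + 1) = α * γ n := by
      intro n hn
      have := hM n hn
      rw [map_mul, Module.End.mul_apply, ← hγ, map_sub, Polynomial.aeval_X, Polynomial.aeval_C,
        LinearMap.sub_apply, Pi.sub_apply, Module.algebraMap_end_apply, Pi.smul_apply,
        smul_eq_mul, sub_eq_zero] at this
      exact this
    have hgeom : ∀ j, γ (M + j) = α ^ j * γ M := by
      intro j
      induction j with
      | zero => simp
      | succ j ih => rw [← add_assoc, hstep _ (by omega), ih, pow_succ]; ring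
    have hgeom' : ∀ n ≥ M, γ n = α ^ (n - M) * γ M := by
      intro n hn
      rw [← hgeom, Nat.add_sub_cancel' hn]
    have hg : γ M ≠ 0 := fun h0 => hnot ⟨M, fun n hn => by rw [← hγ, hgeom' n hn, h0, mul_zero]⟩
    have hα0 : α ≠ 0 := fun h0 => hnot ⟨M + 1, fun n hn => by
      rw [← hγ, hgeom' n (by omega), h0, zero_pow (by omega), zero_mul]⟩
    refine exists_pow_eq_one_of_logHeight₁_eq_zero hα0
      (logHeight₁_eq_zero_of_geom hC hb hg (M := M) (w := ρ.natDegree + 1) ρ.coeff fun n hn => ?_)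
    rw [← hgeom' n hn, hγ, aeval_shiftEnd_apply]
  obtain ⟨e, he, hd⟩ := exists_prod_dvd s hroot
  exact ⟨e, _, he, hkill.of_dvd hd⟩

/-- The sequence `F(n) a(n)` is eventually polynomial along residue classes. -/
lemma exists_poly_on_classes {K : Type*} [Field K] [NumberField K] {a : ℕ → K}
    (hbad : ∀ ε : ℝ, 0 < ε → ∀ᶠ N : ℕ in atTop,
      (({n : ℕ | ¬ SmallAt (a n) n} ∩ Set.Icc 1 N).ncard : ℝ) ≤ ε * N)
    (F : ℤ[X]) {m N : ℕ} {c : Fin m → K} (hc : c ≠ 0)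
    (h : ∀ n ≥ N, ∑ k, c k * (((F.eval ((n + k : ℕ) : ℤ) : ℤ) : K) * a (n + k)) = 0) :
    ∃ e M : ℕ, 0 < e ∧ ∀ t ≥ M, ∃ B : K[X], ∀ n : ℕ,
      ((F.eval ((t + e * n : ℕ) : ℤ) : ℤ) : K) * a (t + e * n) = B.eval (n : K) := by
  classical
  set b : ℕ → K := fun n => ((F.eval (n : ℤ) : ℤ) : K) * a n with hbdef
  set χ : K[X] := ∑ k : Fin m, Polynomial.C (c k) * Polynomial.X ^ (k : ℕ) with hχdef
  have hcoeff : ∀ k : Fin m, χ.coeff k = c k := by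
    intro k
    rw [hχdef, Polynomial.finsetSum_coeff, Finset.sum_eq_single k]
    · simp
    · intro j _ hj
      rw [Polynomial.coeff_C_mul_X_pow, if_neg fun he => hj (Fin.ext he.symm)]
    · simp
  have hχ : χ ≠ 0 := fun h0 => hc (funext fun k => by rw [← hcoeff, h0]; simp)
  have hkill : TailKilled χ b := by
    refine ⟨N, fun n hn => ?_⟩
    rw [hχdef, map_sum, LinearMap.sum_apply, Finset.sum_apply, ← h n hn]
    refine Finset.sum_congr rfl fun k _ => ?_
    rw [map_mul, map_pow, Polynomial.aeval_X, Polynomial.aeval_C, Module.End.mul_apply,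
      Module.algebraMap_end_apply, Pi.smul_apply, shiftEnd_pow_apply, smul_eq_mul]
  let L := χ.SplittingField
  have : CharZero L := charZero_of_injective_algebraMap (algebraMap K L).injective
  have : NumberField L := NumberField.of_module_finite K L
  obtain ⟨C, hC, hCb⟩ := exists_logHeight₁_le (L := L) a F
  have hwin : ∀ w : ℕ, ∃ᶠ n : ℕ in atTop, ∀ k < w,
      logHeight₁ (algebraMap K L (b (n + k))) ≤ C * Real.log (n + k + 1) := by
    intro w
    refine ((frequently_window hbad w).and_eventually (eventually_ge_atTop 1)).mono ?_
    rintro n ⟨h1, h2⟩ k hk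
    have := hCb (n + k) (by omega) (not_not.1 (h1 k hk))
    push_cast at this
    exact_mod_cast this
  obtain ⟨e, r, he, M, hM⟩ := TailKilled.of_height (L := L) (b := fun n => algebraMap K L (b n)) hC
    hwin (χ := χ.map (algebraMap K L))
    ((Polynomial.map_ne_zero_iff (algebraMap K L).injective).2 hχ)
    (Polynomial.SplittingField.splits χ) (by
      obtain ⟨M, hM⟩ := hkill
      refine ⟨M, fun n hn => ?_⟩
      rw [aeval_shiftEnd_map, hM n hn, map_zero])
  have hK : TailKilled ((Polynomial.X ^ e - 1) ^ r) b := by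
    refine ⟨M, fun n hn => (algebraMap K L).injective ?_⟩
    rw [← aeval_shiftEnd_map, map_zero, ← hM n hn]
    simp
  obtain ⟨M', hM'⟩ := exists_poly_of_tailKilled hK
  exact ⟨e, M', he, fun t ht => hM' t ht⟩

end RootsOfUnity

/-! ### Eventual constancy and rationality -/

section Eventually

open NumberField

variable {K : Type*} [Field K] [NumberField K]

lemma tendsto_eval_div_pow (P : ℂ[X]) {d : ℕ} (hd : P.natDegree ≤ d) :
    Tendsto (fun n : ℕ => P.eval (n : ℂ) / (n : ℂ) ^ d) atTop (nhds (P.coeff d)) := by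
  have h1 : ∀ i ∈ Finset.range (d + 1), Tendsto (fun n : ℕ => P.coeff i * (n : ℂ) ^ i / (n : ℂ) ^ d)
      atTop (nhds (if i = d then P.coeff d else 0)) := by
    intro i hi
    have hi : i ≤ d := Nat.lt_succ_iff.1 (Finset.mem_range.1 hi)
    obtain ⟨j, rfl⟩ := Nat.exists_eq_add_of_le hi
    have hev : ∀ᶠ n : ℕ in atTop, P.coeff i * ((n : ℂ)⁻¹) ^ j =
        P.coeff i * (n : ℂ) ^ i / (n : ℂ) ^ (i + j) := by
      filter_upwards [eventually_gt_atTop 0] with n hn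
      have : (n : ℂ) ≠ 0 := by exact_mod_cast hn.ne'
      rw [pow_add, inv_pow]
      field_simp
    refine Tendsto.congr' hev ?_
    have hinv : Tendsto (fun n : ℕ => ((n : ℂ)⁻¹)) atTop (nhds 0) :=
      tendsto_inv_atTop_nhds_zero_nat (𝕜 := ℂ)
    rcases Nat.eq_zero_or_pos j with rfl | hj
    · simp
    · rw [if_neg (by omega)]
      have := (hinv.pow j).const_mul (P.coeff i)
      rwa [zero_pow hj.ne', mul_zero] at this
  have h2 := tendsto_finsetSum _ h1
  rw [Finset.sum_ite_eq' , if_pos (Finset.self_mem_range_succ d)] at h2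
  refine h2.congr fun n => ?_
  rw [Polynomial.eval_eq_sum_range' (Nat.lt_succ_of_le hd), Finset.sum_div]

lemma map_eval_natCast (σ : K →+* ℂ) (P : K[X]) (n : ℕ) :
    σ (P.eval (n : K)) = (P.map σ).eval (n : ℂ) := by
  rw [← map_natCast σ n, Polynomial.eval_map_apply]

/-- A quotient of two polynomials which is infinitely often small at scale `c n`, for each `c > 0`,
is eventually constant. -/
lemma eventually_const {s : ℕ → K} {f B : K[X]} (hf : f ≠ 0)
    (h : ∀ n : ℕ, f.eval (n : K) * s n = B.eval (n : K))
    (hs : ∀ c : ℝ, 0 < c → ∃ᶠ n : ℕ in atTop, SmallAt (s n) (c * n)) :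
    ∃ l : K, ∀ᶠ n : ℕ in atTop, s n = l := by
  classical
  set D := f.natDegree with hD
  have hfl : ∀ σ : K →+* ℂ, (f.map σ).coeff D ≠ 0 := by
    intro σ
    rw [Polynomial.coeff_map, Ne, _root_.map_eq_zero]
    exact Polynomial.leadingCoeff_ne_zero.2 hf
  obtain ⟨N₀, hN₀⟩ := eventually_eval_ne_zero hf
  have hsn : ∀ n ≥ N₀, s n = B.eval (n : K) / f.eval (n : K) := fun n hn => by
    rw [eq_div_iff (hN₀ n hn), mul_comm, h]
  rcases lt_or_ge D B.natDegree with hdeg | hdeg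
  · -- The quotient grows at least linearly in every complex embedding.
    exfalso
    obtain ⟨σ⟩ : Nonempty (K →+* ℂ) := inferInstance
    obtain ⟨j, hj⟩ := Nat.exists_eq_add_of_le hdeg
    have hB : (B.map σ).coeff B.natDegree ≠ 0 := by
      rw [Polynomial.coeff_map, Ne, _root_.map_eq_zero]
      refine Polynomial.leadingCoeff_ne_zero.2 fun h0 => ?_
      rw [h0, Polynomial.natDegree_zero] at hdeg
      omega
    have hlim := ((tendsto_eval_div_pow (B.map σ) (Polynomial.natDegree_map_le)).div
      (tendsto_eval_div_pow (f.map σ) (Polynomial.natDegree_map_le)) (hfl σ)).norm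
    set q : ℝ := ‖(B.map σ).coeff B.natDegree / (f.map σ).coeff D‖ with hq
    have hq0 : 0 < q := norm_pos_iff.2 (div_ne_zero hB (hfl σ))
    have hev := hlim.eventually_const_lt (show q / 2 < q by linarith)
    obtain ⟨n, h1, h2, h3⟩ := ((hs (q / 2) (by linarith)).and_eventually
      (hev.and (eventually_ge_atTop (N₀ + 1)))).exists
    obtain ⟨y, -, -, -, hσ⟩ := h1
    have hn : (1 : ℝ) ≤ n := by exact_mod_cast (by omega : 1 ≤ n)
    have h4 := hσ σ
    have hnc : (n : ℂ) ≠ 0 := by exact_mod_cast (by omega : n ≠ 0)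
    have hfn : (f.map σ).eval (n : ℂ) ≠ 0 := by
      rw [← map_eval_natCast, Ne, _root_.map_eq_zero]
      exact hN₀ n (by omega)
    have h5 : σ (s n) = (n : ℂ) ^ (j + 1) * ((B.map σ).eval (n : ℂ) / (n : ℂ) ^ B.natDegree /
        ((f.map σ).eval (n : ℂ) / (n : ℂ) ^ D)) := by
      rw [hsn n (by omega), map_div₀, map_eval_natCast, map_eval_natCast, hj,
        show D.succ + j = D + (j + 1) by omega]
      field_simp
      ring
    rw [h5, norm_mul, norm_pow, Complex.norm_natCast] at h4
    have h6 : (n : ℝ) ≤ (n : ℝ) ^ (j + 1) := le_self_pow₀ hn (by omega)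
    simp only [Pi.div_apply] at h2
    nlinarith
  · -- Subtracting the limit leaves a quotient of size `O(1 / n)` in every complex embedding.
    set l : K := B.coeff D / f.coeff D with hl
    have hfD : f.coeff D ≠ 0 := Polynomial.leadingCoeff_ne_zero.2 hf
    refine ⟨l, ?_⟩
    set R : K[X] := B - Polynomial.C l * f with hR
    have hRs : ∀ n ≥ N₀, s n - l = R.eval (n : K) / f.eval (n : K) := fun n hn => by
      rw [hsn n hn, hR, Polynomial.eval_sub, Polynomial.eval_mul, Polynomial.eval_C]
      have := hN₀ n hn
      field_simp
    by_cases hR0 : R = 0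
    · filter_upwards [eventually_ge_atTop N₀] with n hn
      rw [← sub_eq_zero, hRs n hn, hR0, Polynomial.eval_zero, zero_div]
    exfalso
    obtain ⟨N₁, hN₁⟩ := eventually_eval_ne_zero hR0
    have hRdeg : (Polynomial.X * R).natDegree ≤ D := by
      have h1 : R.natDegree ≤ D := by
        refine (Polynomial.natDegree_sub_le _ _).trans (max_le hdeg ?_)
        exact Polynomial.natDegree_C_mul_le _ _
      have h2 : R.natDegree ≠ D := by
        intro h3
        apply hR0
        rw [← Polynomial.leadingCoeff_eq_zero, Polynomial.leadingCoeff, h3, hR,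
          Polynomial.coeff_sub, Polynomial.coeff_C_mul, hl, div_mul_cancel₀ _ hfD, sub_self]
      rw [Polynomial.natDegree_X_mul hR0]
      omega
    have hbd : ∃ C : ℝ, 0 < C ∧ ∀ᶠ n : ℕ in atTop, ∀ σ : K →+* ℂ, n * ‖σ (s n - l)‖ ≤ C := by
      have h1 : ∀ σ : K →+* ℂ, ∃ C : ℝ, 0 < C ∧ ∀ᶠ n : ℕ in atTop, n * ‖σ (s n - l)‖ ≤ C := by
        intro σ
        have hlim := ((tendsto_eval_div_pow ((Polynomial.X * R).map σ)
          (Polynomial.natDegree_map_le.trans hRdeg)).div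
          (tendsto_eval_div_pow (f.map σ) (Polynomial.natDegree_map_le)) (hfl σ)).norm
        set q : ℝ := ‖((Polynomial.X * R).map σ).coeff D / (f.map σ).coeff D‖ with hq
        refine ⟨q + 1, by positivity, ?_⟩
        filter_upwards [hlim.eventually_lt_const (show q < q + 1 by linarith),
          eventually_ge_atTop (N₀ + 1)] with n h2 h3
        refine le_trans (le_of_eq ?_) h2.le
        have hnc : (n : ℂ) ≠ 0 := by exact_mod_cast (by omega : n ≠ 0)
        rw [← Complex.norm_natCast n, ← norm_mul, hRs n (by omega), map_div₀, map_eval_natCast,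
          map_eval_natCast, Pi.div_apply, div_div_div_cancel_right₀ (pow_ne_zero _ hnc),
          Polynomial.map_mul, Polynomial.map_X, Polynomial.eval_mul, Polynomial.eval_X,
          mul_div_assoc]
      choose C hC hCe using h1
      refine ⟨∑ σ, C σ, Finset.sum_pos (fun σ _ => hC σ) Finset.univ_nonempty, ?_⟩
      filter_upwards [eventually_all.2 hCe] with n hn σ
      exact (hn σ).trans (Finset.single_le_sum (fun τ _ => (hC τ).le) (Finset.mem_univ σ))
    obtain ⟨C, hC, hCe⟩ := hbd
    obtain ⟨E, hE0, hEint⟩ : ∃ E : ℕ, 0 < E ∧ IsIntegral ℤ ((E : K) * l) := by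
      obtain ⟨z, hz, hint⟩ := ((IsFractionRing.isAlgebraic_iff ℤ ℚ K).2
        (Algebra.IsAlgebraic.isAlgebraic l)).exists_integral_multiple
      refine ⟨z.natAbs, Int.natAbs_pos.2 hz, ?_⟩
      rw [Algebra.smul_def] at hint
      rcases Int.natAbs_eq z with h1 | h1
      · rw [h1] at hint
        simpa using hint
      · rw [h1] at hint
        simpa using hint
    have hE' : (0 : ℝ) < E := by exact_mod_cast hE0
    obtain ⟨n, h1, h2, h3⟩ := ((hs (1 / (2 * E * C)) (by positivity)).and_eventually
      (hCe.and (eventually_ge_atTop (N₀ + N₁ + 1)))).exists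
    obtain ⟨y, hy0, hy, hint, -⟩ := h1
    have hn : (0 : ℝ) < n := by exact_mod_cast (by omega : 0 < n)
    have hxint : IsIntegral ℤ ((E : K) * y * (s n - l)) := by
      have e1 : (E : K) * y * (s n - l) = (E : K) * (y * s n) - (y : K) * (E * l) := by ring
      have hN : ∀ k : ℕ, IsIntegral ℤ (k : K) := fun k => by
        simpa using isIntegral_algebraMap (R := ℤ) (A := K) (x := (k : ℤ))
      rw [e1]
      exact ((hN E).mul hint).sub ((hN y).mul hEint)
    obtain ⟨x, hx⟩ := (IsIntegralClosure.isIntegral_iff (A := 𝓞 K)).1 hxint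
    have hx0 : x ≠ 0 := by
      rintro rfl
      rw [map_zero] at hx
      have h4 : s n - l ≠ 0 := by
        rw [hRs n (by omega)]
        exact div_ne_zero (hN₁ n (by omega)) (hN₀ n (by omega))
      have h5 : (E : K) ≠ 0 := by exact_mod_cast hE0.ne'
      have h6 : (y : K) ≠ 0 := by exact_mod_cast hy0.ne'
      exact mul_ne_zero (mul_ne_zero h5 h6) h4 hx.symm
    obtain ⟨σ, hσ⟩ := exists_one_le_norm x hx0
    have h7 : ‖σ (algebraMap (𝓞 K) K x)‖ = E * y * ‖σ (s n - l)‖ := by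
      rw [hx, map_mul, map_mul, map_natCast, map_natCast, norm_mul, norm_mul,
        Complex.norm_natCast, Complex.norm_natCast]
    have h8 : (1 : ℝ) ≤ E * y * ‖σ (s n - l)‖ := by
      rw [← h7]; exact hσ
    have h9 : (E : ℝ) * y * ‖σ (s n - l)‖ ≤ 1 / 2 := by
      calc (E : ℝ) * y * ‖σ (s n - l)‖ ≤ E * (1 / (2 * E * C) * n) * ‖σ (s n - l)‖ := by gcongr
        _ = 1 / (2 * C) * (n * ‖σ (s n - l)‖) := by field_simp
        _ ≤ 1 / (2 * C) * C := mul_le_mul_of_nonneg_left (h2 σ) (by positivity)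
        _ = 1 / 2 := by field_simp
    linarith

/-- If all residue classes modulo `e` are eventually constant, the generating series is
rational. -/
lemma rational_of_eventually_const {a : ℕ → K} {e M : ℕ} (he : 0 < e)
    (h : ∀ t ≥ M, ∃ l : K, ∀ᶠ n : ℕ in atTop, a (t + e * n) = l) :
    ∃ P Q : Polynomial K, Q ≠ 0 ∧ (Q : PowerSeries K) * PowerSeries.mk a = (P : PowerSeries K) := by
  have h1 : ∀ t ≥ M, ∃ N : ℕ, ∀ n ≥ N, a (t + e * n) = a (t + e * (n + 1)) := by
    intro t ht
    obtain ⟨l, hl⟩ := h t ht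
    obtain ⟨N, hN⟩ := eventually_atTop.1 hl
    exact ⟨N, fun n hn => (hN n hn).trans (hN (n + 1) (by omega)).symm⟩
  choose! N hN using h1
  set N' := (Finset.range e).sup fun i => N (M + i) with hN'
  have hper : ∀ n ≥ M + e * (N' + 1), a (n + e) = a n := by
    intro n hn
    have hdm := Nat.div_add_mod (n - M) e
    have hmod := Nat.mod_lt (n - M) he
    have hq : N (M + (n - M) % e) ≤ (n - M) / e := by
      have h2 : N (M + (n - M) % e) ≤ N' :=
        Finset.le_sup (f := fun i => N (M + i)) (Finset.mem_range.2 hmod)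
      refine h2.trans ?_
      rw [Nat.le_div_iff_mul_le he]
      have : e * (N' + 1) = N' * e + e := by ring
      omega
    have h3 := hN (M + (n - M) % e) (by omega) _ hq
    have e1 : M + (n - M) % e + e * ((n - M) / e) = n := by omega
    have e2 : M + (n - M) % e + e * ((n - M) / e + 1) = n + e := by rw [mul_add]; omega
    rw [e1, e2] at h3
    exact h3.symm
  refine ⟨PowerSeries.trunc (M + e * (N' + 1) + e)
    (((1 - Polynomial.X ^ e : K[X]) : PowerSeries K) * PowerSeries.mk a),
    1 - Polynomial.X ^ e, ?_, ?_⟩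
  · intro h0
    have := congrArg (Polynomial.coeff · 0) h0
    simp [he.ne] at this
  · ext n
    rw [Polynomial.coeff_coe, PowerSeries.coeff_trunc]
    split_ifs with hlt
    · rfl
    · obtain ⟨k, rfl⟩ := Nat.exists_eq_add_of_le' (show e ≤ n by omega)
      rw [Polynomial.coe_sub, Polynomial.coe_one, Polynomial.coe_pow, Polynomial.coe_X, sub_mul,
        one_mul, map_sub, PowerSeries.coeff_X_pow_mul, PowerSeries.coeff_mk, PowerSeries.coeff_mk,
        hper k (by omega), sub_self]

end Eventually

/-- If `f = ∑ aₙ zⁿ ∈ K[[z]]` is a D-finite power series over a number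
field `K` that is not a rational function, then there is a constant `C` such that
`h(aₙ) > (1/[K:ℚ]) log n − C` on a set of positive upper density. -/
theorem dfinite_irrational_height_lower_bound
    (K : Type*) [Field K] [NumberField K] (a : ℕ → K)
    (hDF : IsDFinite (PowerSeries.mk a))
    (hirr : ¬ ∃ P Q : Polynomial K, Q ≠ 0 ∧
      (Q : PowerSeries K) * PowerSeries.mk a = (P : PowerSeries K)) :
    ∃ C : ℝ, HasPosUpperDensity
      {n : ℕ | (1 / (Module.finrank ℚ K : ℝ)) * Real.log n - C < weilHeight K (a n)} := by
  by_contra hcon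
  have hsmall := fun (c : ℝ) (hc : 0 < c) (ε : ℝ) (hε : 0 < ε) =>
    eventually_ncard_not_smallAt (a := a) (not_exists.1 hcon) hc hε
  have hbad : ∀ ε : ℝ, 0 < ε → ∀ᶠ N : ℕ in atTop,
      (({n : ℕ | ¬ SmallAt (a n) n} ∩ Set.Icc 1 N).ncard : ℝ) ≤ ε * N := by
    simpa only [one_mul] using hsmall 1 one_pos
  obtain ⟨r, P, Q, hr, hP, hrec⟩ := hDF.exists_recRel
  obtain ⟨F, hF, m, N, c, hc, hcf⟩ := hrec.exists_cfinite hP hr hbad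
  obtain ⟨e, M, he, hpoly⟩ := exists_poly_on_classes hbad F hc hcf
  refine hirr (rational_of_eventually_const (M := M) he fun t ht => ?_)
  obtain ⟨B, hB⟩ := hpoly t ht
  refine eventually_const (f := (F.map (Int.castRingHom K)).comp
    (Polynomial.C (e : K) * Polynomial.X + Polynomial.C (t : K))) (B := B) ?_ (fun n => ?_)
    (fun c hc => ?_)
  · intro h0
    rcases Polynomial.comp_eq_zero_iff.1 h0 with h1 | ⟨-, h1⟩
    · exact hF ((Polynomial.map_eq_zero_iff Int.cast_injective).1 h1)
    · have h2 := congrArg (Polynomial.coeff · 1) h1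
      simp at h2
      omega
  · rw [← hB n]
    congr 1
    simp only [Polynomial.eval_comp, Polynomial.eval_add, Polynomial.eval_mul, Polynomial.eval_C,
      Polynomial.eval_X]
    have h1 : (e : K) * n + t = (Int.castRingHom K) ((t + e * n : ℕ) : ℤ) := by
      simp only [eq_intCast]
      push_cast
      ring
    rw [h1, Polynomial.eval_map_apply, eq_intCast]
  · -- Every window of `e` good indices meets the residue class of `t`.
    rw [frequently_atTop]
    intro A
    have het : (0 : ℝ) < e + t := by positivity
    obtain ⟨n, h1, h2⟩ := ((frequently_window (hsmall (c / (e + t)) (by positivity)) e).and_eventually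
      (eventually_ge_atTop (t + e * (A + 1)))).exists
    -- The least index of the class which is at least `n`.
    set q := (n - t + (e - 1)) / e with hq
    have hdm := Nat.div_add_mod (n - t + (e - 1)) e
    have hmod := Nat.mod_lt (n - t + (e - 1)) he
    rw [← hq] at hdm
    have hqA : A + 1 ≤ q := by
      rw [hq, Nat.le_div_iff_mul_le he, mul_comm]
      omega
    refine ⟨q, by omega, ?_⟩
    have h3 := not_not.1 (h1 (t + e * q - n) (by omega))
    rw [show n + (t + e * q - n) = t + e * q by omega] at h3
    refine h3.mono ?_
    have hq1 : (1 : ℝ) ≤ q := by exact_mod_cast (by omega : 1 ≤ q)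
    have ht0 : (0 : ℝ) ≤ t := by positivity
    push_cast
    rw [div_mul_eq_mul_div, div_le_iff₀ het]
    have : (t : ℝ) + e * q ≤ q * (e + t) := by nlinarith
    calc c * (t + e * q) ≤ c * (q * (e + t)) := mul_le_mul_of_nonneg_left this hc.le
      _ = _ := by ring
end

section
/- Let (d_n)_{n≥0} be a sequence of positive integers. Suppose there exists β > 1 such that for every set S ⊆ ℕ of zero density, lcm{d_i : i ≤ n, i ∉ S} > β^n for all sufficiently large n. Then for every κ ∈ (0, log β), the set {n ∈ ℕ : d_n ≥ κ·n} has positive upper density. -/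
/-!
The proof is by contradiction. If `S = {n | κ n ≤ d n}` does not have positive upper density, it has
zero density, and `lcmOutside d S n` divides `lcm(1, …, ⌊κ n⌋)`, because `1 ≤ d i < κ i ≤ κ n` for
the indices `i ≤ n` outside `S`. Taking logarithms, `n log β < ψ(κ n)` for all large `n`, so that
`ψ(k) ≥ c k - C` for all `k`, with `c = log β / κ > 1`.

The prime number theorem is not needed to refute this. Chebyshev's identity
`∑_{m ≤ N} ψ(N / m) = log N!` turns the lower bound on `ψ` into
`c N log N - O(N) ≤ log N! ≤ N log N`, which is false for large `N` (`psi_lower_bound_le_one`).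
-/

open Filter

open Classical in
/-- `lcm { d i : i ≤ n, i ∉ S }`. -/
noncomputable def lcmOutside (d : ℕ → ℕ) (S : Set ℕ) (n : ℕ) : ℕ :=
  (Finset.range (n + 1)).lcm (fun i => if i ∈ S then 1 else d i)

/-- Summing `log = ζ * Λ` up to `N` gives Chebyshev's identity `log N! = ∑ ψ(N / m)`; each of the `N`
terms of `log N!` is at most `log N`. -/
lemma sum_psi_div_le (N : ℕ) :
    ∑ m ∈ Finset.Ioc 0 N, Chebyshev.psi ((N / m : ℕ) : ℝ) ≤ N * Real.log N := by
  have h := ArithmeticFunction.sum_Ioc_mul_eq_sum_sum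
    (ArithmeticFunction.zeta : ArithmeticFunction ℝ) ArithmeticFunction.vonMangoldt N
  rw [ArithmeticFunction.zeta_mul_vonMangoldt] at h
  have h2 : ∑ m ∈ Finset.Ioc 0 N, Chebyshev.psi ((N / m : ℕ) : ℝ)
      = ∑ n ∈ Finset.Ioc 0 N, ArithmeticFunction.log n := by
    rw [h]
    refine Finset.sum_congr rfl fun m hm => ?_
    have hm0 : m ≠ 0 := by have := Finset.mem_Ioc.1 hm; omega
    rw [Chebyshev.psi, Nat.floor_natCast]
    simp [hm0]
  rw [h2]
  calc ∑ n ∈ Finset.Ioc 0 N, ArithmeticFunction.log n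
      ≤ ∑ _n ∈ Finset.Ioc 0 N, Real.log N := by
        refine Finset.sum_le_sum fun n hn => ?_
        obtain ⟨h0, h1⟩ := Finset.mem_Ioc.1 hn
        rw [ArithmeticFunction.log_apply]
        exact Real.log_le_log (by exact_mod_cast h0) (by exact_mod_cast h1)
    _ = N * Real.log N := by simp

/-- Chebyshev's elementary theorem `liminf ψ(x) / x ≤ 1`, in the form that no linear function of
slope greater than `1` bounds `ψ` from below. -/
lemma psi_lower_bound_le_one (c C : ℝ) (hc : 0 ≤ c)
    (h : ∀ k : ℕ, c * k - C ≤ Chebyshev.psi k) : c ≤ 1 := by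
  by_contra! hc1
  have key : ∀ N : ℕ, 0 < N → (c - 1) * Real.log N ≤ c + C := by
    intro N hN
    have hN' : (0 : ℝ) < N := by exact_mod_cast hN
    have hH : Real.log N ≤ ∑ m ∈ Finset.Ioc 0 N, ((m : ℝ))⁻¹ := by
      have h1 := log_add_one_le_harmonic N
      rw [harmonic_eq_sum_Icc] at h1
      push_cast at h1
      have h2 : Real.log N ≤ Real.log ((N : ℝ) + 1) := Real.log_le_log hN' (by linarith)
      exact h2.trans h1
    have hlow : ∑ m ∈ Finset.Ioc 0 N, (c * N * ((m : ℝ))⁻¹ - (c + C))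
        ≤ ∑ m ∈ Finset.Ioc 0 N, Chebyshev.psi ((N / m : ℕ) : ℝ) := by
      refine Finset.sum_le_sum fun m hm => ?_
      have hdiv : (N : ℝ) / m ≤ ((N / m : ℕ) : ℝ) + 1 := by
        rw [← Nat.floor_div_eq_div (K := ℝ)]
        exact (Nat.lt_floor_add_one _).le
      have h3 := mul_le_mul_of_nonneg_left hdiv hc
      rw [div_eq_mul_inv, ← mul_assoc] at h3
      linarith [h (N / m)]
    rw [Finset.sum_sub_distrib, ← Finset.mul_sum] at hlow
    simp only [Finset.sum_const, Nat.card_Ioc, nsmul_eq_mul, Nat.sub_zero] at hlow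
    have h4 := hlow.trans (sum_psi_div_le N)
    have h5 := mul_le_mul_of_nonneg_left hH (mul_nonneg hc hN'.le)
    have h6 : (N : ℝ) * ((c - 1) * Real.log N) ≤ N * (c + C) := by linarith
    exact le_of_mul_le_mul_left h6 hN'
  have ht : Tendsto (fun N : ℕ => (c - 1) * Real.log (N : ℝ)) atTop atTop :=
    (Real.tendsto_log_atTop.comp tendsto_natCast_atTop_atTop).const_mul_atTop (by linarith)
  obtain ⟨N, hN1, hN2⟩ := ((ht.eventually_gt_atTop (c + C)).and (eventually_gt_atTop 0)).exists
  exact absurd (key N hN2) (not_le.2 hN1)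

lemma upperDensity_nonneg (S : Set ℕ) : 0 ≤ upperDensity S := by
  refine le_limsup_of_frequently_le (Frequently.of_forall fun n => by positivity) ?_
  refine isBoundedUnder_of ⟨1, fun n => ?_⟩
  refine div_le_one_of_le₀ ?_ (Nat.cast_nonneg n)
  have h := Set.ncard_le_ncard (Set.inter_subset_right (s := S)) (Set.finite_Icc 1 n)
  rw [Set.ncard_eq_toFinset_card' (Set.Icc 1 n)] at h
  simp only [Set.toFinset_Icc, Nat.card_Icc, Nat.add_sub_cancel] at h
  exact_mod_cast h

/-- Outside `{n | κ n ≤ d n}` every `d i` with `i ≤ n` is at most `κ n`, so the `lcm` is at most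
`exp (ψ(κ n))`. -/
lemma log_lcmOutside_le (d : ℕ → ℕ) (hd : ∀ n, 0 < d n) (κ : ℝ) (hκ : 0 < κ) (n : ℕ) :
    Real.log (lcmOutside d {n : ℕ | κ * n ≤ (d n : ℝ)} n) ≤ Chebyshev.psi (κ * n) := by
  rw [Chebyshev.psi_eq_psi_coe_floor, Chebyshev.psi_eq_log_lcmUpto]
  have hdvd : lcmOutside d {n : ℕ | κ * n ≤ (d n : ℝ)} n ∣ Nat.lcmUpto ⌊κ * n⌋₊ := by
    refine Finset.lcm_dvd fun i hi => ?_
    split_ifs with hS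
    · exact one_dvd _
    · rw [Set.mem_ofPred_eq, not_le] at hS
      have hin : (i : ℝ) ≤ n := by
        exact_mod_cast Nat.lt_succ_iff.1 (Finset.mem_range.1 hi)
      have hle : d i ≤ ⌊κ * (n : ℝ)⌋₊ :=
        Nat.le_floor (hS.le.trans (mul_le_mul_of_nonneg_left hin hκ.le))
      exact Finset.dvd_lcm (f := id) (Finset.mem_Icc.2 ⟨hd i, hle⟩)
  have hpos := Nat.pos_of_dvd_of_pos hdvd (Nat.lcmUpto_pos _)
  exact Real.log_le_log (by exact_mod_cast hpos)
    (by exact_mod_cast Nat.le_of_dvd (Nat.lcmUpto_pos _) hdvd)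


/-- Let `(dₙ)` be positive integers and suppose there is `β > 1` such
that for every zero-density `S ⊆ ℕ` one has `lcm{dᵢ : i ≤ n, i ∉ S} > βⁿ` for all
sufficiently large `n`. Then for every `κ ∈ (0, log β)`, the set `{n : dₙ ≥ κ n}` has
positive upper density. -/
theorem lcm_lower_bound_gives_denominator_growth
    (d : ℕ → ℕ) (hd : ∀ n, 0 < d n) (β : ℝ) (hβ : 1 < β)
    (hlcm : ∀ S : Set ℕ, HasZeroDensity S →
      ∀ᶠ n : ℕ in Filter.atTop, β ^ n < (lcmOutside d S n : ℝ))
    (κ : ℝ) (hκ : κ ∈ Set.Ioo 0 (Real.log β)) :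
    HasPosUpperDensity {n : ℕ | κ * n ≤ (d n : ℝ)} := by
  obtain ⟨hκ0, hκβ⟩ := hκ
  by_contra hpos
  have hzero : HasZeroDensity {n : ℕ | κ * n ≤ (d n : ℝ)} :=
    le_antisymm (not_lt.1 hpos) (upperDensity_nonneg _)
  obtain ⟨N₀, hN₀⟩ := eventually_atTop.1 (hlcm _ hzero)
  have hβ0 : 0 < Real.log β := Real.log_pos hβ
  have hpsi : ∀ n ≥ N₀, Real.log β * n ≤ Chebyshev.psi (κ * n) := by
    intro n hn
    have h1 := Real.log_le_log (by positivity) (hN₀ n hn).le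
    rw [Real.log_pow] at h1
    linarith [log_lcmOutside_le d hd κ hκ0 n]
  have hc : Real.log β / κ ≤ 1 := by
    refine psi_lower_bound_le_one _ (Real.log β * (N₀ + 1)) (by positivity) fun k => ?_
    -- Compare `k` with the nearest `κ n` below it, `n = ⌊k / κ⌋`.
    have hfl : (k : ℝ) / κ < ⌊(k : ℝ) / κ⌋₊ + 1 := Nat.lt_floor_add_one _
    have hfl' : (⌊(k : ℝ) / κ⌋₊ : ℝ) ≤ k / κ := Nat.floor_le (by positivity)
    generalize ⌊(k : ℝ) / κ⌋₊ = n at hfl hfl'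
    have h1 : Real.log β / κ * k ≤ Real.log β * (n + 1) := by
      rw [div_mul_eq_mul_div, mul_div_assoc]
      exact mul_le_mul_of_nonneg_left hfl.le hβ0.le
    rcases le_total N₀ n with hn | hn
    · have h2 : κ * n ≤ k := by rwa [le_div_iff₀ hκ0, mul_comm] at hfl'
      have h3 := (hpsi n hn).trans (Chebyshev.psi_mono h2)
      have h4 : 0 ≤ Real.log β * N₀ := by positivity
      linarith
    · have h2 : (n : ℝ) ≤ N₀ := by exact_mod_cast hn
      have h3 := mul_le_mul_of_nonneg_left h2 hβ0.le
      linarith [Chebyshev.psi_nonneg (k : ℝ)]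
  rw [div_le_one hκ0] at hc
  linarith
end

section
/- Let f(z) = ∑_{n≥0} a_n z^n be a power series with coefficients in a number field K, and suppose there exists a nonzero polynomial P ∈ K[z] such that g(z) = ∑_{n≥0} P(n) a_n z^n is the power series expansion of a rational function (i.e. there exist u, v ∈ K[z] with v ≠ 0 and v·g = u). Then at least one of the following holds: (i) there is c > 0 such that {n ∈ ℕ : h(a_n) ≥ c·n} has positive upper density; (ii) there exist a positive integer s and polynomials Q_0, …, Q_{s−1} ∈ K̄[z] (with algebraic coefficients) such that P(sn+i)·a_{sn+i} = Q_i(n) for every i ∈ {0, …, s−1} and all sufficiently large n. -/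
/-!
The sequence `b n = P(n) a_n` eventually satisfies a linear recurrence. Take the minimal
annihilating polynomial `m` (in the shift operator) of a tail of `b`, over a number field `L` in
which it splits.

If every nonzero root of `m` is a root of unity, then `m` divides `(X * (X ^ s - 1)) ^ e` for
some `s` and `e`, so that along each residue class modulo `s` the `e`-th forward difference of `b`
eventually vanishes and `b` is eventually a polynomial: this is `recurrence_dichotomy` together
with `eventually_polynomial`.

Otherwise `m = (X - α) q` with `α` neither zero nor a root of unity. By minimality, applying `q`
to `b` gives `c α ^ n` with `c ≠ 0`. By Kronecker's theorem `h(α) > 0`, so the height of this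
fixed combination of `deg q + 1` consecutive terms of `b` grows linearly. Since `h(P(n))` is only
logarithmic, every window of `deg q + 1` consecutive large indices contains some `n` with
`h(a_n) ≥ ε n` (`hasPosUpperDensity_of_geometric`). Such a set of indices has bounded gaps, hence
positive upper density.

Heights over `L` are Mathlib's `Height.logHeight₁`; `logHeight_algebraMap_le` bounds them by a
constant multiple of `weilHeight` over `K`.
-/

open Filter Polynomial PowerSeries

/-! ### Heights in extensions of number fields -/

/-- If `d * x` is integral, then `x = (d * x) / d` has the projective coordinates `(d * x : d)`.
Their finite part is at most `1`, being the inverse norm of an integral ideal, so only the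
archimedean part contributes. -/
lemma logHeight_le_of_isIntegral (L : Type*) [Field L] [NumberField L] (x : L) (d : ℕ)
    (hd : d ≠ 0) (hx : IsIntegral ℤ ((d : L) * x)) :
    Height.logHeight₁ x ≤ Module.finrank ℚ L * Real.log d +
      ∑ v : NumberField.InfinitePlace L, v.mult * Real.log (max 1 (v x)) := by
  obtain ⟨a, ha⟩ : ∃ a : NumberField.RingOfIntegers L, (a : L) = d * x := ⟨⟨_, hx⟩, rfl⟩
  have hdL : (d : L) ≠ 0 := mod_cast hd
  have hxa : x = (a : L) / (d : L) := by rw [ha]; field_simp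
  have hfin : ∏ᶠ v : NumberField.FinitePlace L, ⨆ i, v ((![a, (d : NumberField.RingOfIntegers L)] i : _) : L) ≤ 1 := by
    have h := NumberField.absNorm_mul_finprod_finitePlace_eq_one
      (show ![a, (d : NumberField.RingOfIntegers L)] ≠ 0 by simp [hd])
    set F := ∏ᶠ v : NumberField.FinitePlace L, ⨆ i, v ((![a, (d : NumberField.RingOfIntegers L)] i : _) : L)
    set n := (Ideal.span (Set.range ![a, (d : NumberField.RingOfIntegers L)])).absNorm
    have hn : (1 : ℝ) ≤ n := by
      have : n ≠ 0 := by rintro h0; rw [h0] at h; simp at h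
      exact_mod_cast Nat.one_le_iff_ne_zero.2 this
    have : F = 1 / n := by field_simp; linarith
    rw [this]
    exact div_le_one_of_le₀ hn (by linarith)
  have hv (i : Fin 2) : (![(a : L), (d : L)] i : L) = ((![a, (d : NumberField.RingOfIntegers L)] i : _) : L) := by
    fin_cases i <;> simp
  have key : Height.mulHeight₁ x ≤
      (d : ℝ) ^ Module.finrank ℚ L * ∏ v : NumberField.InfinitePlace L, (max 1 (v x)) ^ v.mult := by
    conv_lhs => rw [hxa]
    rw [Height.mulHeight₁_div_eq_mulHeight, NumberField.mulHeight_eq (by simp [hd])]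
    simp only [hv]
    refine (mul_le_of_le_one_right ?_ hfin).trans ?_
    · exact Finset.prod_nonneg fun v _ => pow_nonneg (Real.iSup_nonneg fun i => apply_nonneg _ _) _
    rw [← NumberField.InfinitePlace.sum_mult_eq, ← Finset.prod_pow_eq_pow_sum,
      ← Finset.prod_mul_distrib]
    refine Finset.prod_le_prod (fun v _ => pow_nonneg (Real.iSup_nonneg fun i => apply_nonneg _ _) _)
      fun v _ => ?_
    rw [← mul_pow]
    refine pow_le_pow_left₀ (Real.iSup_nonneg fun i => apply_nonneg _ _) ?_ _
    refine ciSup_le fun i => ?_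
    have hvd : v (d : L) = d := by simp
    fin_cases i
    · simp only [Fin.zero_eta, Matrix.cons_val_zero, ha, map_mul, hvd]
      gcongr
      exact le_max_right _ _
    · simpa [hvd] using le_mul_of_one_le_right (Nat.cast_nonneg (α := ℝ) d) (le_max_left 1 (v x))
  have hd0 : (d : ℝ) ≠ 0 := mod_cast hd
  have hm (v : NumberField.InfinitePlace L) : (0 : ℝ) < max 1 (v x) := lt_max_of_lt_left one_pos
  rw [Height.logHeight₁_eq_log_mulHeight₁]
  refine (Real.log_le_log (Height.mulHeight₁_pos x) key).trans_eq ?_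
  rw [Real.log_mul (pow_ne_zero _ hd0) (Finset.prod_ne_zero_iff.2 fun v _ => (pow_pos (hm v) _).ne'),
    Real.log_pow, Real.log_prod fun v _ => (pow_pos (hm v) _).ne']
  simp [Real.log_pow]

/-- A bound for the height by a denominator and a bound for every conjugate. Unlike an exact
formula, it applies in any number field containing `x`. -/
lemma logHeight_le_of_bound (L : Type*) [Field L] [NumberField L] (x : L) (d : ℕ)
    (hd : d ≠ 0) (hx : IsIntegral ℤ ((d : L) * x)) (A : ℝ)
    (hA : ∀ σ : L →+* ℂ, Real.log (max 1 ‖σ x‖) ≤ A) :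
    Height.logHeight₁ x ≤ Module.finrank ℚ L * (Real.log d + A) := by
  refine (logHeight_le_of_isIntegral L x d hd hx).trans ?_
  rw [mul_add]
  gcongr
  rw [← NumberField.InfinitePlace.sum_mult_eq, Nat.cast_sum, Finset.sum_mul]
  refine Finset.sum_le_sum fun v _ => ?_
  gcongr
  have := hA v.embedding
  rwa [NumberField.InfinitePlace.norm_embedding_eq] at this

lemma logHeight_natCast_le (L : Type*) [Field L] [NumberField L] (n : ℕ) :
    Height.logHeight₁ (n : L) ≤ Module.finrank ℚ L * Real.log (n + 1) := by
  have := logHeight_le_of_bound L n 1 one_ne_zero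
    (by simpa using (isIntegral_algebraMap (R := ℤ) (A := L) (x := (n : ℤ)))) (Real.log (n + 1))
    (fun σ => by
      refine Real.log_le_log (lt_max_of_lt_left one_pos) ?_
      simp)
  simpa using this

/-- Comparison of `weilHeight` with Mathlib's unnormalized height over an extension field. The
norm of the denominator ideal is a denominator of `x`; the resulting constant is not sharp, but
the argument only needs heights up to a constant factor. -/
lemma logHeight_algebraMap_le (K L : Type*) [Field K] [NumberField K] [Field L] [NumberField L]
    [Algebra K L] (x : K) :
    Height.logHeight₁ (algebraMap K L x) ≤
      Module.finrank ℚ L * Module.finrank ℚ K * weilHeight K x := by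
  set I := denIdeal K x with hI
  have hmem (r : NumberField.RingOfIntegers K) : r ∈ I ↔ IsIntegral ℤ ((r : K) * x) := by
    rw [hI, denIdeal, Submodule.mem_colon_span_singleton, Submodule.mem_one,
      Algebra.smul_def]
    constructor
    · rintro ⟨y, hy⟩
      exact hy ▸ y.isIntegral_coe
    · exact fun h => ⟨⟨_, h⟩, rfl⟩
  have hI0 : I ≠ ⊥ := by
    obtain ⟨a, b, hb, rfl⟩ := IsFractionRing.div_surjective (NumberField.RingOfIntegers K) x
    have hb0 := nonZeroDivisors.ne_zero hb
    intro h
    have : b ∈ I := by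
      rw [hmem, mul_div_cancel₀ _ (by simpa using hb0)]
      exact a.isIntegral_coe
    rw [h] at this
    exact hb0 (by simpa using this)
  have hd : Ideal.absNorm I ≠ 0 := by rwa [Ne, Ideal.absNorm_eq_zero_iff]
  have hint : IsIntegral ℤ (((Ideal.absNorm I : ℕ) : L) * algebraMap K L x) := by
    have := (hmem _).1 (Ideal.absNorm_mem I)
    simpa using this.map (algebraMap K L).toIntAlgHom 
  have := logHeight_le_of_bound L _ _ hd hint (∑ σ : K →+* ℂ, Real.log (max 1 ‖σ x‖)) fun σ => by
    exact Finset.single_le_sum (f := fun σ : K →+* ℂ => Real.log (max 1 ‖σ x‖))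
      (fun σ _ => Real.log_nonneg (le_max_left _ _)) (Finset.mem_univ (σ.comp (algebraMap K L)))
  refine this.trans_eq ?_
  rw [weilHeight, ← hI]
  have : (Module.finrank ℚ K : ℝ) ≠ 0 := by exact_mod_cast Module.finrank_pos.ne'
  field_simp

/-- Kronecker's theorem, from the Northcott property: if `h(x) = 0`, all powers of `x` lie in
the finite set of elements of height `0`. -/
lemma logHeight_pos_of_not_root (L : Type*) [Field L] [NumberField L] (x : L) (hx : x ≠ 0)
    (h : ∀ n : ℕ, 0 < n → x ^ n ≠ 1) : 0 < Height.logHeight₁ x := by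
  refine (Height.zero_le_logHeight₁ x).lt_of_ne fun h0 => ?_
  have hf := NumberField.finite_setOfPred_logHeight₁_le L 0
  have hmaps : ∀ n : ℕ, x ^ n ∈ {y : L | Height.logHeight₁ y ≤ 0} := fun n => by
    simp [Height.logHeight₁_pow, ← h0]
  obtain ⟨m, -, n, -, hmn, heq⟩ := Set.infinite_univ.exists_lt_map_eq_of_mapsTo (f := fun n : ℕ => x ^ n) (fun n _ => hmaps n) hf
  refine h (n - m) (by omega) ?_
  have : x ^ n = x ^ m * x ^ (n - m) := by rw [← pow_add]; congr 1; omega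
  have h2 : x ^ m * x ^ (n - m) = x ^ m * 1 := by rw [← this, mul_one]; exact heq.symm
  exact mul_left_cancel₀ (pow_ne_zero _ hx) h2

/-! ### Upper density of sets with bounded gaps -/

/-- A set with bounded gaps has positive upper density. -/
lemma hasPosUpperDensity_of_syndetic (S : Set ℕ) (D N : ℕ)
    (h : ∀ n, N ≤ n → ∃ k ≤ D, n + k ∈ S) : HasPosUpperDensity S := by
  have hcard (J : ℕ) : J ≤ (S ∩ Set.Icc 1 (N + J * (D + 1))).ncard := by
    have hch (j : ℕ) : ∃ k ≤ D, N + 1 + j * (D + 1) + k ∈ S := h _ (by nlinarith)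
    choose k hkD hkS using hch
    have hinj : Function.Injective fun j => N + 1 + j * (D + 1) + k j := by
      have : StrictMono fun j => N + 1 + j * (D + 1) + k j := by
        refine strictMono_nat_of_lt_succ fun j => ?_
        have := hkD j
        simp only [add_mul, one_mul]
        omega
      exact this.injective
    have hsub : (fun j => N + 1 + j * (D + 1) + k j) '' (Set.Iio J) ⊆
        S ∩ Set.Icc 1 (N + J * (D + 1)) := by
      rintro _ ⟨j, hj, rfl⟩
      refine ⟨hkS j, by simp; omega, ?_⟩
      have h1 := hkD j
      have h2 : (j + 1) * (D + 1) ≤ J * (D + 1) := Nat.mul_le_mul_right _ hj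
      simp only [add_mul, one_mul] at h2 ⊢
      omega
    have := Set.ncard_le_ncard hsub ((Set.finite_Icc _ _).inter_of_right _)
    rw [Set.ncard_image_of_injective _ hinj] at this
    simpa using this
  have hb : IsBoundedUnder (· ≤ ·) atTop fun n : ℕ => ((S ∩ Set.Icc 1 n).ncard : ℝ) / n := by
    refine isBoundedUnder_of ⟨1, fun n => div_le_one_of_le₀ ?_ (Nat.cast_nonneg _)⟩
    have := Set.ncard_le_ncard (Set.inter_subset_right (s := S) (t := Set.Icc 1 n))
      (Set.finite_Icc _ _)
    have h2 : (Set.Icc 1 n).ncard = n := by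
      rw [Set.ncard_eq_toFinset_card']; simp
    rw [h2] at this
    exact_mod_cast this
  -- Among the first `N + J * (D + 1)` integers at least `J` lie in `S`; as soon as `J ≥ N`
  -- this proportion is at least `1 / (D + 2)`.
  refine lt_of_lt_of_le (show (0 : ℝ) < 1 / (D + 2) by positivity)
    (le_limsup_of_frequently_le (frequently_atTop.2 fun m => ?_) hb)
  refine ⟨N + (N + m + 1) * (D + 1), by nlinarith, ?_⟩
  have h1 : ((N + m + 1 : ℕ) : ℝ) ≤ _ := Nat.cast_le.2 (hcard (N + m + 1))
  rw [div_le_div_iff₀ (by positivity) (by positivity)]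
  push_cast at h1 ⊢
  have hN : (0 : ℝ) ≤ N := Nat.cast_nonneg _
  have hm : (0 : ℝ) ≤ m := Nat.cast_nonneg _
  have hD : (0 : ℝ) ≤ D := Nat.cast_nonneg _
  nlinarith

/-! ### Linear recurrences and the shift operator -/

/-- The shift operator `(b n) ↦ (b (n + 1))` on sequences. A linear recurrence is a relation
`aeval (seqShift L) w b = 0` with `w ≠ 0`; since recurrences are imposed for all `n ≥ 0`, the
polynomial `X` is allowed to divide `w`. -/
def seqShift (L : Type*) [Field L] : Module.End L (ℕ → L) := LinearMap.funLeft L L (· + 1)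

lemma seqShift_pow_apply (L : Type*) [Field L] (k : ℕ) (b : ℕ → L) (n : ℕ) :
    (seqShift L ^ k) b n = b (n + k) := by
  induction k generalizing n with
  | zero => simp
  | succ k ih =>
    rw [pow_succ', Module.End.mul_apply]
    change ((seqShift L ^ k) b) (n + 1) = _
    rw [ih]
    congr 1
    omega

lemma aeval_seqShift_apply (L : Type*) [Field L] (q : L[X]) (D : ℕ) (hD : q.natDegree < D)
    (b : ℕ → L) (n : ℕ) :
    Polynomial.aeval (seqShift L) q b n = ∑ k ∈ Finset.range D, q.coeff k * b (n + k) := by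
  rw [aeval_eq_sum_range' hD, LinearMap.sum_apply, Finset.sum_apply]
  simp [seqShift_pow_apply]

lemma aeval_eq_zero_of_dvd (L : Type*) [Field L] {p q : L[X]} (h : p ∣ q) {b : ℕ → L}
    (hp : Polynomial.aeval (seqShift L) p b = 0) : Polynomial.aeval (seqShift L) q b = 0 := by
  obtain ⟨r, rfl⟩ := h
  rw [mul_comm, map_mul, Module.End.mul_apply, hp, map_zero]

/-- If some root `α` of the minimal annihilating polynomial is neither `0` nor a root of unity,
dividing that polynomial by `X - α` gives a combination of shifts of `b` equal to a nonzero
geometric sequence of ratio `α`. Otherwise the minimal polynomial divides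
`(X * (X ^ s - 1)) ^ e` for a common multiple `s` of the orders of its nonzero roots. -/
lemma recurrence_dichotomy (L : Type*) [Field L] (w : L[X]) (hw : w ≠ 0) (hs : w.Splits)
    (b : ℕ → L) (hb : Polynomial.aeval (seqShift L) w b = 0) :
    (∃ (α : L) (q : L[X]) (c : L), α ≠ 0 ∧ (∀ n : ℕ, 0 < n → α ^ n ≠ 1) ∧ c ≠ 0 ∧
      ∀ n, Polynomial.aeval (seqShift L) q b n = α ^ n * c) ∨
    ∃ s e : ℕ, 0 < s ∧ Polynomial.aeval (seqShift L) ((Polynomial.X : L[X]) ^ e * (Polynomial.X ^ s - 1) ^ e) b = 0 := by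
  classical
  have hex : ∃ d : ℕ, ∃ m : L[X], m ∣ w ∧ Polynomial.aeval (seqShift L) m b = 0 ∧ m.natDegree = d :=
    ⟨_, w, dvd_rfl, hb, rfl⟩
  obtain ⟨m, hmw, hmb, hmd⟩ := Nat.find_spec hex
  have hmin (q : L[X]) (hqw : q ∣ w) (hqb : Polynomial.aeval (seqShift L) q b = 0) :
      m.natDegree ≤ q.natDegree := hmd ▸ Nat.find_min' hex ⟨q, hqw, hqb, rfl⟩
  have hm0 : m ≠ 0 := ne_zero_of_dvd_ne_zero hw hmw
  by_cases hroot : ∃ α ∈ m.roots, α ≠ 0 ∧ ∀ n : ℕ, 0 < n → α ^ n ≠ 1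
  · left
    obtain ⟨α, hα, hα0, hα1⟩ := hroot
    obtain ⟨q, hq⟩ := dvd_iff_isRoot.2 (isRoot_of_mem_roots hα)
    have hq0 : q ≠ 0 := by rintro rfl; simp at hq; exact hm0 hq
    set c := Polynomial.aeval (seqShift L) q b with hc
    -- By minimality of `m`, the proper divisor `q` does not annihilate `b`.
    have hcne : c ≠ 0 := fun h => by
      have := hmin q ((Dvd.intro_left _ hq.symm).trans hmw) h
      rw [hq, natDegree_mul (X_sub_C_ne_zero α) hq0, natDegree_X_sub_C] at this
      omega
    have hrec (n : ℕ) : c (n + 1) = α * c n := by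
      have h0 : Polynomial.aeval (seqShift L) (Polynomial.X - Polynomial.C α) c = 0 := by
        rw [hc, ← Module.End.mul_apply, ← map_mul, ← hq, hmb]
      have h1 := congr_fun h0 n
      rw [map_sub, Polynomial.aeval_X, Polynomial.aeval_C, LinearMap.sub_apply, Pi.sub_apply, Module.algebraMap_end_apply] at h1
      exact sub_eq_zero.1 h1
    have hpow (n : ℕ) : c n = α ^ n * c 0 := by
      induction n with
      | zero => simp
      | succ n ih => rw [hrec, ih, pow_succ', mul_assoc]
    refine ⟨α, q, c 0, hα0, hα1, fun h0 => hcne ?_, hpow⟩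
    ext n
    simp [hpow n, h0]
  · right
    push Not at hroot
    have hms : m.Splits := hs.of_dvd hw hmw
    have hord (r : L) : ∃ n : ℕ, 0 < n ∧ (r ∈ m.roots → r ≠ 0 → r ^ n = 1) := by
      by_cases h : r ∈ m.roots ∧ r ≠ 0
      · obtain ⟨n, hn, hr⟩ := hroot r h.1 h.2
        exact ⟨n, hn, fun _ _ => hr⟩
      · exact ⟨1, one_pos, fun h1 h2 => absurd ⟨h1, h2⟩ h⟩
    choose o ho hor using hord
    refine ⟨∏ r ∈ m.roots.toFinset, o r, m.roots.card, Finset.prod_pos fun r _ => ho r,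
      aeval_eq_zero_of_dvd L ?_ hmb⟩
    set s := ∏ r ∈ m.roots.toFinset, o r
    have hdvd (r : L) (hr : r ∈ m.roots) : (Polynomial.X - Polynomial.C r : L[X]) ∣ Polynomial.X * (Polynomial.X ^ s - 1) := by
      rw [dvd_iff_isRoot]
      by_cases h0 : r = 0
      · simp [h0]
      · obtain ⟨t, ht⟩ : o r ∣ s := Finset.dvd_prod_of_mem _ (by simpa using hr)
        simp [ht, pow_mul, hor r hr h0]
    have hmul : ∀ M : Multiset L, (∀ r ∈ M, (Polynomial.X - Polynomial.C r : L[X]) ∣ Polynomial.X * (Polynomial.X ^ s - 1)) →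
        (M.map fun r => Polynomial.X - Polynomial.C r).prod ∣ (Polynomial.X * (Polynomial.X ^ s - 1 : L[X])) ^ M.card := by
      intro M
      induction M using Multiset.induction with
      | empty => simp
      | cons r M ih =>
        intro h
        rw [Multiset.map_cons, Multiset.prod_cons, Multiset.card_cons, pow_succ']
        exact mul_dvd_mul (h r (by simp)) (ih fun r' hr' => h r' (by simp [hr']))
    rw [← mul_pow]
    conv_lhs => rw [hms.eq_prod_roots]
    exact (IsUnit.mul_left_dvd ((Polynomial.isUnit_C.2 (isUnit_iff_ne_zero.2 (by simpa using hm0))))).2 (hmul _ hdvd)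

open fwdDiff in
/-- On an arithmetic progression of difference `s`, the operator `X ^ s - 1` becomes the forward
difference, so its nilpotency makes the subsequence a polynomial by Newton's formula. The factor
`X ^ e` only affects the first `e` terms. -/
lemma eventually_polynomial (L : Type*) [Field L] [CharZero L] (b : ℕ → L) (s e : ℕ) (hs : 0 < s)
    (hb : Polynomial.aeval (seqShift L) ((Polynomial.X : L[X]) ^ e * (Polynomial.X ^ s - 1) ^ e) b = 0) (i : ℕ) :
    ∃ R : L[X], ∀ n, e ≤ n → b (s * n + i) = R.eval (n : L) := by
  set d : ℕ → L := fun n => b (s * (n + e) + i) with hd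
  have hdiff (k : ℕ) : ∀ n, (fwdDiff 1)^[k] d n =
      Polynomial.aeval (seqShift L) (((Polynomial.X : L[X]) ^ s - 1) ^ k) b (s * (n + e) + i) := by
    induction k with
    | zero => intro n; simp [hd]
    | succ k ih =>
      intro n
      rw [Function.iterate_succ_apply', fwdDiff, ih, ih, pow_succ', map_mul, Module.End.mul_apply]
      have hsub (c : ℕ → L) (m : ℕ) :
          Polynomial.aeval (seqShift L) ((Polynomial.X : L[X]) ^ s - 1) c m = c (m + s) - c m := by
        rw [map_sub, map_pow, Polynomial.aeval_X, map_one, LinearMap.sub_apply, Pi.sub_apply,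
          seqShift_pow_apply, Module.End.one_apply]
      rw [hsub]
      rw [show s * (n + 1 + e) + i = s * (n + e) + i + s by ring]
  -- The argument `s * e + i` is at least `e`, so the factor `X ^ e` can be absorbed.
  have hzero (k : ℕ) (hk : e ≤ k) : (fwdDiff 1)^[k] d 0 = 0 := by
    rw [hdiff]
    have h0 : Polynomial.aeval (seqShift L) ((Polynomial.X : L[X]) ^ e * (Polynomial.X ^ s - 1) ^ k) b = 0 :=
      aeval_eq_zero_of_dvd L (mul_dvd_mul_left _ (pow_dvd_pow _ hk)) hb
    have hse : s * (0 + e) + i = ((s - 1) * e + i) + e := by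
      obtain ⟨t, rfl⟩ : ∃ t, s = t + 1 := ⟨s - 1, by omega⟩
      rw [Nat.add_sub_cancel]; ring
    rw [map_mul, map_pow, Polynomial.aeval_X, Module.End.mul_apply] at h0
    have h1 := congr_fun h0 ((s - 1) * e + i)
    rw [seqShift_pow_apply] at h1
    rw [hse]
    exact h1
  set R : L[X] := ∑ k ∈ Finset.range e,
    Polynomial.C ((fwdDiff 1)^[k] d 0 / (k.factorial : L)) * descPochhammer L k
  have hR (n : ℕ) : d n = R.eval (n : L) := by
    have h1 := shift_eq_sum_fwdDiff_iter (1 : ℕ) d n 0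
    simp only [smul_eq_mul, mul_one, zero_add] at h1
    rw [h1, eval_finsetSum]
    have hA : ∑ k ∈ Finset.range (n + 1), n.choose k • (fwdDiff 1)^[k] d 0 =
        ∑ k ∈ Finset.range (n + 1 + e), n.choose k • (fwdDiff 1)^[k] d 0 := by
      refine Finset.sum_subset (Finset.range_subset_range.2 (by omega)) fun k _ hk => ?_
      rw [Nat.choose_eq_zero_of_lt (by simpa using hk), zero_smul]
    have hB : ∑ k ∈ Finset.range e, n.choose k • (fwdDiff 1)^[k] d 0 =
        ∑ k ∈ Finset.range (n + 1 + e), n.choose k • (fwdDiff 1)^[k] d 0 := by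
      refine Finset.sum_subset (Finset.range_subset_range.2 (by omega)) fun k _ hk => ?_
      rw [hzero k (by simpa using hk), smul_zero]
    rw [hA, ← hB]
    refine Finset.sum_congr rfl fun k _ => ?_
    rw [eval_mul, Polynomial.eval_C, descPochhammer_eval_eq_descFactorial,
      Nat.descFactorial_eq_factorial_mul_choose]
    have : (k.factorial : L) ≠ 0 := by exact_mod_cast k.factorial_ne_zero
    push_cast
    field_simp
    rw [nsmul_eq_mul, mul_comm]
  refine ⟨R.comp (Polynomial.X - Polynomial.C (e : L)), fun n hn => ?_⟩
  obtain ⟨t, rfl⟩ : ∃ t, n = t + e := ⟨n - e, by omega⟩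
  rw [show b (s * (t + e) + i) = d t from rfl, hR]
  simp

/-- Comparing coefficients beyond the degree of `u` in `v * g = u` gives a recurrence whose
characteristic polynomial is the reverse of `v`. -/
lemma exists_recurrence (K : Type*) [Field K] (b : ℕ → K) (u v : K[X]) (hv : v ≠ 0)
    (h : (v : PowerSeries K) * PowerSeries.mk b = (u : PowerSeries K)) :
    ∃ (w : K[X]) (N : ℕ), w ≠ 0 ∧ ∀ n, N ≤ n →
      ∑ k ∈ Finset.range (w.natDegree + 1), w.coeff k * b (n + k) = 0 := by
  refine ⟨v.reverse, u.natDegree + 1, by simpa using hv, fun n hn => ?_⟩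
  set D := v.natDegree with hD
  have hle : v.reverse.natDegree ≤ D := reverse_natDegree_le v
  have h0 : PowerSeries.coeff (n + D) ((v : PowerSeries K) * PowerSeries.mk b) = 0 := by
    rw [h, Polynomial.coeff_coe]
    exact coeff_eq_zero_of_natDegree_lt (by omega)
  rw [PowerSeries.coeff_mul, Finset.Nat.sum_antidiagonal_eq_sum_range_succ_mk] at h0
  simp only [Polynomial.coeff_coe, PowerSeries.coeff_mk] at h0
  have hA : ∑ k ∈ Finset.range (v.reverse.natDegree + 1), v.reverse.coeff k * b (n + k) =
      ∑ k ∈ Finset.range (D + 1), v.reverse.coeff k * b (n + k) := by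
    refine Finset.sum_subset (Finset.range_subset_range.2 (by omega)) fun k _ hk => ?_
    rw [coeff_eq_zero_of_natDegree_lt (by simp at hk; omega), zero_mul]
  have hB : ∑ k ∈ Finset.range (D + 1), v.coeff k * b (n + D - k) =
      ∑ k ∈ Finset.range (n + D).succ, v.coeff k * b (n + D - k) := by
    refine Finset.sum_subset (Finset.range_subset_range.2 (by omega)) fun k _ hk => ?_
    rw [coeff_eq_zero_of_natDegree_lt (by simp at hk; omega), zero_mul]
  rw [hA, ← h0, ← hB, ← Finset.sum_range_reflect]
  refine Finset.sum_congr rfl fun k hk => ?_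
  have hk' : k ≤ D := by simp at hk; omega
  rw [coeff_reverse, revAt_le (by omega)]
  congr 2 <;> omega

/-! ### Linear growth of heights -/

lemma logHeight_eval_le (L : Type*) [Field L] [NumberField L] (P : L[X]) :
    ∃ A B : ℝ, 0 ≤ A ∧ 0 ≤ B ∧
      ∀ n : ℕ, Height.logHeight₁ (P.eval (n : L)) ≤ A + B * Real.log (n + 1) := by
  set T : ℝ := (Module.finrank ℚ L : ℝ)
  refine ⟨Height.totalWeight L * Real.log (Finset.range (P.natDegree + 1)).card +
      ∑ k ∈ Finset.range (P.natDegree + 1), Height.logHeight₁ (P.coeff k),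
    ∑ k ∈ Finset.range (P.natDegree + 1), k * T, ?_, ?_, fun n => ?_⟩
  · exact add_nonneg (mul_nonneg (Nat.cast_nonneg _) (Real.log_natCast_nonneg _))
      (Finset.sum_nonneg fun k _ => Height.zero_le_logHeight₁ _)
  · positivity
  · rw [eval_eq_sum_range]
    refine (Height.logHeight₁_sum_le _ _).trans ?_
    rw [add_assoc, Finset.sum_mul, ← Finset.sum_add_distrib]
    gcongr with k _
    refine (Height.logHeight₁_mul_le _ _).trans ?_
    rw [Height.logHeight₁_pow, mul_assoc]
    gcongr
    exact logHeight_natCast_le L n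

lemma eventually_log_lt (A B ε : ℝ) (M : ℕ) (hε : 0 < ε) :
    ∃ N : ℕ, ∀ n : ℕ, N ≤ n → A + B * Real.log ((n + M : ℕ) + 1) < ε * n := by
  have h1 : Tendsto (fun n : ℕ => ((n + M : ℕ) : ℝ) + 1) atTop atTop :=
    tendsto_atTop_add_const_right _ _
      (tendsto_natCast_atTop_atTop.comp (tendsto_add_atTop_nat M))
  have h2 := (Real.isLittleO_log_id_atTop.comp_tendsto h1).const_mul_left B
  have h3 : (fun n : ℕ => A + B * Real.log ((n + M : ℕ) + 1)) =o[atTop] fun n : ℕ => (n : ℝ) := by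
    have hn : Tendsto (fun n : ℕ => (n : ℝ)) atTop atTop := tendsto_natCast_atTop_atTop
    have hc (c : ℝ) : (fun _ : ℕ => c) =o[atTop] fun n : ℕ => (n : ℝ) :=
      Asymptotics.isLittleO_const_left.2 (Or.inr (tendsto_norm_atTop_atTop.comp hn))
    refine (hc A).add (h2.trans_isBigO ?_)
    refine Asymptotics.IsBigO.of_bound (M + 2) ?_
    filter_upwards [eventually_ge_atTop 1] with n hn1
    have : (1 : ℝ) ≤ n := by exact_mod_cast hn1
    have hM : (0 : ℝ) ≤ M := Nat.cast_nonneg _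
    simp only [Function.comp, id, Real.norm_eq_abs]
    rw [abs_of_nonneg (by positivity), abs_of_nonneg (by positivity)]
    push_cast
    nlinarith
  obtain ⟨N, hN⟩ := eventually_atTop.1 (h3.bound (half_pos hε))
  refine ⟨N + 1, fun n hn => ?_⟩
  have h4 := hN n (by omega)
  have hn0 : (0 : ℝ) < n := by exact_mod_cast (by omega : 0 < n)
  rw [Real.norm_eq_abs, Real.norm_eq_abs, abs_of_nonneg hn0.le] at h4
  nlinarith [le_abs_self (A + B * Real.log ((n + M : ℕ) + 1))]

/-- The height lower bound. Here `α ^ n * c` is a fixed combination of `D + 1` consecutive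
terms `P(m) a_m`, with `h(P(m)) = O(log m)`. As `h(α ^ n) = n * h(α)` grows linearly, one of the
`D + 1` values `h(a_m)` has to be at least `ε m`, for every large `n`. -/
lemma hasPosUpperDensity_of_geometric (K L : Type*) [Field K] [NumberField K] [Field L]
    [NumberField L] [Algebra K L] (a : ℕ → K) (P : K[X]) (N : ℕ) (α : L) (q : L[X]) (c : L)
    (hα0 : α ≠ 0) (hα : ∀ n : ℕ, 0 < n → α ^ n ≠ 1) (hc : c ≠ 0)
    (h : ∀ n, Polynomial.aeval (seqShift L)
      q (fun n => algebraMap K L (P.eval ((n + N : ℕ) : K) * a (n + N))) n = α ^ n * c) :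
    ∃ c : ℝ, 0 < c ∧ HasPosUpperDensity {n : ℕ | c * n ≤ weilHeight K (a n)} := by
  obtain ⟨A, B, hA, hB, hP⟩ := logHeight_eval_le L (P.map (algebraMap K L))
  have hη := logHeight_pos_of_not_root L α hα0 hα
  set η := Height.logHeight₁ α
  set D := q.natDegree
  set T : ℝ := Module.finrank ℚ L * Module.finrank ℚ K with hT
  have hT0 : 0 < T := by
    have h1 : 0 < Module.finrank ℚ L := Module.finrank_pos
    have h2 : 0 < Module.finrank ℚ K := Module.finrank_pos
    positivity
  -- With this `ε`, `D + 1` terms of height below `ε m` contribute at most half of `n * η`.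
  set ε : ℝ := η / (2 * (D + 1) * T) with hε
  have hε0 : 0 < ε := by positivity
  set C₀ : ℝ := Height.totalWeight L * Real.log (Finset.range (D + 1)).card +
    ∑ k ∈ Finset.range (D + 1), Height.logHeight₁ (q.coeff k) + Height.logHeight₁ c with hC₀
  obtain ⟨N₁, hN₁⟩ := eventually_log_lt (C₀ + (D + 1) * (A + T * ε * (D + N))) ((D + 1) * B)
    (η / 2) (D + N) (by positivity)
  refine ⟨ε, hε0, hasPosUpperDensity_of_syndetic _ D (N₁ + N) fun n' hn' => ?_⟩
  obtain ⟨n, rfl⟩ : ∃ n, n' = n + N := ⟨n' - N, by omega⟩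
  by_contra! hcon
  have hsmall (k : ℕ) (hk : k ∈ Finset.range (D + 1)) : Height.logHeight₁ (algebraMap K L
      (P.eval ((n + k + N : ℕ) : K) * a (n + k + N))) ≤
      A + B * Real.log ((n + (D + N) : ℕ) + 1) + T * (ε * (n + D + N)) := by
    have hkD : k ≤ D := by simp at hk; omega
    rw [map_mul]
    refine (Height.logHeight₁_mul_le _ _).trans (add_le_add ?_ ?_)
    · have := hP (n + k + N)
      rw [eval_natCast_map] at this
      refine this.trans ?_
      have hle : ((n + k + N : ℕ) : ℝ) ≤ (n + (D + N) : ℕ) := Nat.cast_le.2 (by omega)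
      gcongr
    · refine (logHeight_algebraMap_le K L _).trans ?_
      rw [← hT]
      gcongr
      have := hcon k hkD
      simp only [Set.mem_ofPred_eq, not_le] at this
      rw [show n + k + N = n + N + k by omega]
      refine this.le.trans ?_
      gcongr
      push_cast
      have : (k : ℝ) ≤ D := by exact_mod_cast hkD
      linarith
  have hup : n * η ≤ C₀ + (D + 1) * (A + B * Real.log ((n + (D + N) : ℕ) + 1) + T * (ε * (n + D + N))) := by
    have h1 : α ^ n = Polynomial.aeval (seqShift L)
      q (fun n => algebraMap K L (P.eval ((n + N : ℕ) : K) * a (n + N))) n * c⁻¹ := by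
      rw [h n]; field_simp
    rw [← Height.logHeight₁_pow, h1, aeval_seqShift_apply L q (D + 1) (Nat.lt_succ_self _)]
    refine (Height.logHeight₁_mul_le _ _).trans ?_
    rw [Height.logHeight₁_inv]
    have h2 := Height.logHeight₁_sum_le (Finset.range (D + 1)) fun k => q.coeff k *
      algebraMap K L (P.eval ((n + k + N : ℕ) : K) * a (n + k + N))
    have h3 := Finset.sum_le_sum fun k hk => (Height.logHeight₁_mul_le (q.coeff k)
      (algebraMap K L (P.eval ((n + k + N : ℕ) : K) * a (n + k + N)))).trans
        (add_le_add_right (hsmall k hk) _)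
    rw [Finset.sum_add_distrib, Finset.sum_const, nsmul_eq_mul] at h3
    rw [hC₀]
    rw [Finset.card_range] at *
    push_cast at *
    linarith
  have hlow := hN₁ n (by omega)
  have hεη : (D + 1) * T * ε = η / 2 := by rw [hε]; field_simp
  have : (D + 1) * (T * (ε * n)) = η / 2 * n := by rw [← hεη]; ring
  nlinarith

/-! ### The dichotomy -/

/-- Let `f = ∑ aₙ zⁿ` have coefficients in a number field `K` and
suppose there is a nonzero `P ∈ K[z]` such that `g = ∑ P(n) aₙ zⁿ` is rational. Then
either (i) `h(aₙ) ≥ c n` on a set of positive upper density, or (ii) there exist `s ≥ 1`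
and polynomials `Q₀, …, Q_{s−1}` with algebraic coefficients such that
`P(sn+i) a_{sn+i} = Qᵢ(n)` for every `i` and all large `n`. -/
theorem rational_after_polynomial_twist
    (K : Type*) [Field K] [NumberField K] (a : ℕ → K)
    (P : Polynomial K) (hP : P ≠ 0)
    (hrat : ∃ u v : Polynomial K, v ≠ 0 ∧
      (v : PowerSeries K) * PowerSeries.mk (fun n => P.eval (n : K) * a n)
        = (u : PowerSeries K)) :
    (∃ c : ℝ, 0 < c ∧ HasPosUpperDensity {n : ℕ | c * n ≤ weilHeight K (a n)}) ∨
    (∃ s : ℕ, 0 < s ∧ ∃ Q : Fin s → Polynomial (AlgebraicClosure K), ∃ N : ℕ,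
      ∀ n : ℕ, N ≤ n → ∀ i : Fin s,
        algebraMap K (AlgebraicClosure K)
            (P.eval ((s * n + i : ℕ) : K) * a (s * n + i)) =
          (Q i).eval ((n : ℕ) : AlgebraicClosure K)) := by
  obtain ⟨u, v, hv, huv⟩ := hrat
  obtain ⟨w, N, hw, hrec⟩ := exists_recurrence K _ u v hv huv
  let L := w.SplittingField
  have : NumberField L := NumberField.of_module_finite K L
  set b : ℕ → L := fun n => algebraMap K L (P.eval ((n + N : ℕ) : K) * a (n + N)) with hb
  have hwb : Polynomial.aeval (seqShift L) (w.map (algebraMap K L)) b = 0 := by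
    ext n
    rw [aeval_seqShift_apply L _ (w.natDegree + 1) (by rw [natDegree_map]; omega)]
    have := congr_arg (algebraMap K L) (hrec (n + N) (by omega))
    rw [map_sum, map_zero] at this
    rw [Pi.zero_apply, ← this]
    refine Finset.sum_congr rfl fun k _ => ?_
    rw [map_mul, Polynomial.coeff_map, hb]
    simp only [show n + k + N = n + N + k by omega]
  rcases recurrence_dichotomy L (w.map (algebraMap K L))
    ((Polynomial.map_ne_zero_iff (algebraMap K L).injective).2 hw)
    (SplittingField.splits w) b hwb with ⟨α, q, c, hα0, hα, hc, h⟩ | ⟨s, e, hs, h⟩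
  · exact Or.inl (hasPosUpperDensity_of_geometric K L a P N α q c hα0 hα hc h)
  · right
    -- `b` is the sequence `P(n) a_n` shifted by `N`, so a further factor `X ^ N` passes to the
    -- unshifted sequence.
    have hb' : Polynomial.aeval (seqShift L) ((Polynomial.X : L[X]) ^ (e + N) *
        (Polynomial.X ^ s - 1) ^ (e + N)) (fun n => algebraMap K L (P.eval (n : K) * a n)) = 0 := by
      have hshift : (seqShift L ^ N) (fun n => algebraMap K L (P.eval (n : K) * a n)) = b := by
        ext n
        rw [seqShift_pow_apply]
      refine aeval_eq_zero_of_dvd L (p := (Polynomial.X ^ e * (Polynomial.X ^ s - 1) ^ e) *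
        Polynomial.X ^ N) ⟨(Polynomial.X ^ s - 1) ^ N, by rw [pow_add, pow_add]; ac_rfl⟩ ?_
      rw [map_mul, Module.End.mul_apply, map_pow _ Polynomial.X, Polynomial.aeval_X, hshift, h]
    choose R hR using eventually_polynomial L _ s (e + N) hs hb'
    let φ : L →ₐ[K] AlgebraicClosure K := IsAlgClosed.lift
    refine ⟨s, hs, fun i => (R i).map (φ : L →+* AlgebraicClosure K), e + N, fun n hn i => ?_⟩
    rw [eval_natCast_map, ← hR i n hn]
    exact (φ.commutes _).symm
end
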